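/- arXiv:1907.12351 — 2 statements merged into one kernel-verified Lean document; each statement's English description precedes it below -/
import Mathlib

section
/- The class number of the real quadratic field ℚ(√30) is 2. -/
open NumberField

lemma q_leftMul {R A : Type*} [CommRing R] [CommRing A] [Algebra R A] (b : Module.Basis (Fin 2) R A)
    (h0 : b 0 = 1) (hs : b 1 * b 1 = 30) (x y : R) :
    Algebra.leftMulMatrix b (algebraMap R A x + algebraMap R A y * b 1) = !![x, 30 * y; y, x] := by
  have e0 : (algebraMap R A x + algebraMap R A y * b 1) * b 0 = x • b 0 + y • b 1 := by
    rw [h0]; simp [Algebra.smul_def]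
  have e1 : (algebraMap R A x + algebraMap R A y * b 1) * b 1 = (30 * y) • b 0 + x • b 1 := by
    rw [h0]; simp only [Algebra.smul_def, map_mul, map_ofNat]
    linear_combination (algebraMap R A y) * hs
  ext i j
  fin_cases i <;> fin_cases j <;>
    simp only [Algebra.leftMulMatrix_eq_repr_mul, Fin.zero_eta, Fin.mk_one, e0, e1, Fin.isValue] <;>
    simp

lemma q_trace {R A : Type*} [CommRing R] [CommRing A] [Algebra R A] (b : Module.Basis (Fin 2) R A)
    (h0 : b 0 = 1) (hs : b 1 * b 1 = 30) (x y : R) :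
    Algebra.trace R A (algebraMap R A x + algebraMap R A y * b 1) = 2 * x := by
  rw [Algebra.trace_eq_matrix_trace b, q_leftMul b h0 hs, Matrix.trace_fin_two]
  simp; ring

lemma q_norm {R A : Type*} [CommRing R] [CommRing A] [Algebra R A] (b : Module.Basis (Fin 2) R A)
    (h0 : b 0 = 1) (hs : b 1 * b 1 = 30) (x y : R) :
    Algebra.norm R (algebraMap R A x + algebraMap R A y * b 1) = x ^ 2 - 30 * y ^ 2 := by
  rw [Algebra.norm_eq_matrix_det b, q_leftMul b h0 hs, Matrix.det_fin_two]
  simp; ring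

lemma q_discr {R A : Type*} [CommRing R] [CommRing A] [Algebra R A] (b : Module.Basis (Fin 2) R A)
    (h0 : b 0 = 1) (hs : b 1 * b 1 = 30) : Algebra.discr R b = 120 := by
  have t := q_trace b h0 hs
  have t1 := t 1 0
  have t2 := t 0 1
  have t3 := t 30 0
  simp only [map_zero, zero_mul, add_zero, map_ofNat, map_one, zero_add, one_mul, mul_one, mul_zero] at t1 t2 t3
  rw [Algebra.discr_def, Matrix.det_fin_two]
  simp [Algebra.traceMatrix_apply, Algebra.traceForm_apply, h0, hs, t1, t2, t3]
  norm_num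

lemma no_rat_sq (q : ℚ) (h : q ^ 2 = 30) : False := by
  have : IsSquare (30 : ℚ) := ⟨q, by rw [← h]; ring⟩
  rw [show (30 : ℚ) = ((30 : ℕ) : ℚ) by norm_num, Rat.isSquare_natCast_iff] at this
  obtain ⟨r, hr⟩ := this
  have : r < 6 := by nlinarith
  interval_cases r <;> omega

lemma int_arith (a b : ℚ) (m n : ℤ) (hm : 2 * a = m) (hn : a ^ 2 - 30 * b ^ 2 = n) :
    ∃ x y : ℤ, a = x ∧ b = y := by
  have hq : (60 * b) ^ 2 = ((30 * (m ^ 2 - 4 * n) : ℤ) : ℚ) := by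
    push_cast; rw [← hm, ← hn]; ring
  have hint : IsIntegral ℤ (60 * b) := by
    apply IsIntegral.of_pow (n := 2) (by norm_num)
    rw [hq]; exact isIntegral_algebraMap (R := ℤ) (A := ℚ)
  obtain ⟨q, hq'⟩ := IsIntegrallyClosed.isIntegral_iff.mp hint
  simp at hq'
  rw [← hq'] at hq
  have hq2 : q ^ 2 = 30 * (m ^ 2 - 4 * n) := by exact_mod_cast hq
  have h30 : (30 : ℤ) ∣ q := by
    have h2 : (2 : ℤ) ∣ q := Int.prime_two.dvd_of_dvd_pow (n := 2) (by rw [hq2]; exact ⟨15 * (m ^ 2 - 4 * n), by ring⟩)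
    have h3 : (3 : ℤ) ∣ q := Int.prime_three.dvd_of_dvd_pow (n := 2) (by rw [hq2]; exact ⟨10 * (m ^ 2 - 4 * n), by ring⟩)
    have h5 : (5 : ℤ) ∣ q := (Nat.prime_iff_prime_int.mp Nat.prime_five).dvd_of_dvd_pow (n := 2) (by rw [hq2]; exact ⟨6 * (m ^ 2 - 4 * n), by push_cast; ring⟩)
    omega
  obtain ⟨k, rfl⟩ := h30
  have hk : m ^ 2 = 30 * k ^ 2 + 4 * n := by nlinarith
  have hm2 : (2 : ℤ) ∣ m := Int.prime_two.dvd_of_dvd_pow (n := 2) (by rw [hk]; exact ⟨15 * k ^ 2 + 2 * n, by ring⟩)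
  obtain ⟨x, rfl⟩ := hm2
  have hk2 : (2 : ℤ) ∣ k := Int.prime_two.dvd_of_dvd_pow (n := 2) (by
    have : 15 * k ^ 2 = 2 * (x ^ 2 - n) := by nlinarith
    omega)
  obtain ⟨y, rfl⟩ := hk2
  refine ⟨x, y, ?_, ?_⟩
  · push_cast at hm; linarith
  · push_cast at hq'; linarith

section
variable {K : Type*} [Field K] [NumberField K] (s : K)

lemma q_lin (hs : s ^ 2 = 30) (a b : ℚ) (h : (a : K) + b * s = 0) : a = 0 ∧ b = 0 := by
  have hb : b = 0 := by
    by_contra hb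
    apply no_rat_sq (a / b)
    have hbK : (b : K) ≠ 0 := by exact_mod_cast hb
    have : (((a / b) ^ 2 : ℚ) : K) = ((30 : ℚ) : K) := by
      push_cast
      rw [← hs]
      field_simp
      linear_combination ((a : K) - b * s) * h
    exact_mod_cast this
  subst hb
  simp at h
  exact ⟨h, rfl⟩

lemma q_basisK (hs : s ^ 2 = 30) (hgen : ∀ x : K, ∃ a b : ℚ, x = (a : K) + (b : K) * s) :
    ∃ b : Module.Basis (Fin 2) ℚ K, b 0 = 1 ∧ b 1 = s := by
  have li : LinearIndependent ℚ ![(1 : K), s] := by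
    rw [LinearIndependent.pair_iff]
    intro a b h
    apply q_lin s hs
    simpa [Algebra.smul_def] using h
  refine ⟨Module.Basis.mk li ?_, ?_, ?_⟩
  · intro x _
    obtain ⟨a, b, rfl⟩ := hgen x
    rw [Matrix.range_cons, Matrix.range_cons, Matrix.range_empty, Set.union_empty, Set.singleton_union, Submodule.mem_span_pair]
    exact ⟨a, b, by simp [Algebra.smul_def]⟩
  · simp
  · simp

lemma q_int (hs : s ^ 2 = 30) (hgen : ∀ x : K, ∃ a b : ℚ, x = (a : K) + (b : K) * s)
    (x : 𝓞 K) : ∃ a b : ℤ, (x : K) = a + b * s := by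
  obtain ⟨B, h0, h1⟩ := q_basisK s hs hgen
  have h30 : B 1 * B 1 = 30 := by rw [h1, ← hs]; ring
  obtain ⟨a, b, hx⟩ := hgen x
  have ht := q_trace B h0 h30 a b
  have hn := q_norm B h0 h30 a b
  have hx' : (x : K) = algebraMap ℚ K a + algebraMap ℚ K b * B 1 := by rw [hx, h1]; simp
  rw [← hx'] at ht hn
  have it := Algebra.isIntegral_trace (L := ℚ) x.2
  have iN := Algebra.isIntegral_norm (L := K) ℚ x.2
  obtain ⟨m, hm⟩ := IsIntegrallyClosed.isIntegral_iff.mp it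
  obtain ⟨n, hn'⟩ := IsIntegrallyClosed.isIntegral_iff.mp iN
  obtain ⟨u, v, rfl, rfl⟩ := int_arith a b m n (ht.symm.trans hm.symm) (hn.symm.trans hn'.symm)
  exact ⟨u, v, by rw [hx]; simp⟩

lemma q_basis (hs : s ^ 2 = 30) (hgen : ∀ x : K, ∃ a b : ℚ, x = (a : K) + (b : K) * s) :
    ∃ b : Module.Basis (Fin 2) ℤ (𝓞 K), b 0 = 1 ∧ b 1 * b 1 = 30 := by
  have hsi : IsIntegral ℤ s := by
    apply IsIntegral.of_pow (n := 2) (by norm_num)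
    rw [hs, ← map_ofNat (algebraMap ℤ K) 30]; exact isIntegral_algebraMap
  let t : 𝓞 K := ⟨s, hsi⟩
  have ht : (t : K) = s := rfl
  have li : LinearIndependent ℤ ![(1 : 𝓞 K), t] := by
    rw [LinearIndependent.pair_iff]
    intro a b h
    have h' := congrArg (fun z : 𝓞 K => (z : K)) h
    simp [ht] at h'
    have := q_lin s hs a b (by simpa using h')
    exact_mod_cast this
  refine ⟨Module.Basis.mk li ?_, ?_, ?_⟩
  · intro x _
    obtain ⟨a, b, hx⟩ := q_int s hs hgen x
    rw [Matrix.range_cons, Matrix.range_cons, Matrix.range_empty, Set.union_empty, Set.singleton_union, Submodule.mem_span_pair]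
    refine ⟨a, b, ?_⟩
    apply RingOfIntegers.ext
    rw [hx]; simp [ht]
  · simp
  · apply RingOfIntegers.ext
    have h30 : (((30 : 𝓞 K)) : K) = 30 := map_ofNat (algebraMap (𝓞 K) K) 30
    simp only [Module.Basis.mk_apply, Matrix.cons_val_one, Matrix.cons_val_fin_one, map_mul, ht, h30]
    rw [← hs, pow_two]
end

section
variable {K : Type*} [Field K] [NumberField K]
open Ideal

lemma q_eq_of_le {I J : Ideal (𝓞 K)} (h : J ≤ I) (hn : absNorm I = absNorm J)
    (h0 : absNorm I ≠ 0) : I = J := by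
  obtain ⟨L, rfl⟩ := Ideal.dvd_iff_le.mpr h
  rw [map_mul] at hn
  have : absNorm L = 1 := by
    apply Nat.eq_of_mul_eq_mul_left (Nat.pos_of_ne_zero h0)
    rw [← hn, mul_one]
  rw [absNorm_eq_one_iff.mp this, Ideal.mul_top]

lemma q_bound (B : Module.Basis (Fin 2) ℤ (𝓞 K))
    (h0 : B 0 = 1) (hs : B 1 * B 1 = 30) (C : ClassGroup (𝓞 K)) :
    ∃ I : nonZeroDivisors (Ideal (𝓞 K)), ClassGroup.mk0 I = C ∧
      absNorm (I : Ideal (𝓞 K)) ≤ 5 := by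
  obtain ⟨I, hI, hn⟩ := NumberField.exists_ideal_in_class_of_norm_le C
  refine ⟨I, hI, ?_⟩
  have hd : discr K = 120 := by rw [← NumberField.discr_eq_discr K B, q_discr B h0 hs]
  have hf : Module.finrank ℚ K = 2 := by
    rw [← RingOfIntegers.rank, Module.finrank_eq_card_basis B]; simp
  have hc : InfinitePlace.nrComplexPlaces K = 0 := by
    have hc := InfinitePlace.card_add_two_mul_card_eq_rank K
    have hsg := NumberField.sign_discr K
    rw [hd] at hsg
    rw [hf] at hc
    have : InfinitePlace.nrComplexPlaces K ≤ 1 := by omega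
    interval_cases h : InfinitePlace.nrComplexPlaces K
    · rfl
    · exact absurd hsg (by decide)
  rw [hd, hf, hc] at hn
  have h11 : √(120 : ℝ) < 11 := by
    rw [Real.sqrt_lt' (by norm_num)]; norm_num
  norm_num [Nat.factorial] at hn
  have : (absNorm (I : Ideal (𝓞 K)) : ℝ) < 6 := by linarith
  have : absNorm (I : Ideal (𝓞 K)) < 6 := by exact_mod_cast this
  omega

lemma q_main (B : Module.Basis (Fin 2) ℤ (𝓞 K))
    (h0 : B 0 = 1) (hs : B 1 * B 1 = 30) : NumberField.classNumber K = 2 := by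
  have hN : ∀ x y : ℤ, absNorm (span {(x : 𝓞 K) + y * B 1}) = (x ^ 2 - 30 * y ^ 2).natAbs := by
    intro x y
    rw [absNorm_span_singleton, ← q_norm B h0 hs x y]; simp
  have hrep : ∀ z : 𝓞 K, ∃ x y : ℤ, z = x + y * B 1 := by
    intro z
    refine ⟨B.repr z 0, B.repr z 1, ?_⟩
    conv_lhs => rw [← B.sum_repr z]
    simp [Fin.sum_univ_two, h0]
  have h0' := h0
  have hs' := hs
  generalize B 1 = t at hN hrep hs
  -- any prime ideal containing a divisor of 30 contains t
  have hmem : ∀ (I : Ideal (𝓞 K)) (n k : ℕ), I.IsPrime → (n : 𝓞 K) ∈ I → n * k = 30 → t ∈ I := by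
    intro I n k hI hn hk
    have : t * t ∈ I := by
      rw [hs, show (30 : 𝓞 K) = (n : 𝓞 K) * (k : 𝓞 K) by exact_mod_cast hk.symm]
      exact I.mul_mem_right _ hn
    exact (hI.mem_or_mem this).elim id id
  have hmem' : ∀ (I : Ideal (𝓞 K)) (n k : ℕ), absNorm I = n → n.Prime → n * k = 30 →
      (n : 𝓞 K) ∈ I ∧ t ∈ I := by
    intro I n k hI hn hk
    have h1 : (n : 𝓞 K) ∈ I := hI ▸ absNorm_mem I
    exact ⟨h1, hmem I n k (isPrime_of_irreducible_absNorm (hI ▸ hn)) h1 hk⟩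
  obtain ⟨P, hP⟩ : ∃ P : Ideal (𝓞 K), P = span {2, t} := ⟨_, rfl⟩
  have h2P : (2 : 𝓞 K) ∈ P := by rw [hP]; exact subset_span (by simp)
  have htP : t ∈ P := by rw [hP]; exact subset_span (by simp)
  have hPP : P * P = span {2} := by
    apply le_antisymm
    · rw [hP, Ideal.span_mul_span', Ideal.span_le]
      rintro _ ⟨a, ha, b, hb, rfl⟩
      simp only [SetLike.mem_coe, Ideal.mem_span_singleton]
      rcases ha with rfl | rfl <;> rcases hb with rfl | rfl
      · exact ⟨2, rfl⟩
      · exact ⟨_, rfl⟩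
      · exact ⟨_, mul_comm _ _⟩
      · exact ⟨15, by simp only [hs]; norm_num⟩
    · rw [Ideal.span_singleton_le_iff_mem]
      have e : (2 : 𝓞 K) = t * t - 7 * (2 * 2) := by rw [hs]; norm_num
      rw [e]
      exact sub_mem (mul_mem_mul htP htP) (Ideal.mul_mem_left _ _ (mul_mem_mul h2P h2P))
  have hPn : absNorm P = 2 := by
    have h := congrArg absNorm hPP
    have h4 := hN 2 0
    simp at h4
    rw [map_mul, absNorm_span_singleton, h4] at h
    nlinarith
  have hPne : P ∈ nonZeroDivisors (Ideal (𝓞 K)) := by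
    rw [← absNorm_ne_zero_iff_mem_nonZeroDivisors, hPn]; norm_num
  have hnp : ¬ P.IsPrincipal := by
    rintro ⟨z, hz⟩
    obtain ⟨x, y, rfl⟩ := hrep z
    rw [← Ideal.span] at hz
    have h := hN x y
    rw [← hz, hPn] at h
    have h' : x ^ 2 - 30 * y ^ 2 = 2 ∨ x ^ 2 - 30 * y ^ 2 = -2 := by omega
    have h5 : x ^ 2 % 5 = 2 ∨ x ^ 2 % 5 = 3 := by omega
    have : x % 5 = 0 ∨ x % 5 = 1 ∨ x % 5 = 2 ∨ x % 5 = 3 ∨ x % 5 = 4 := by omega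
    rcases this with h | h | h | h | h <;> simp [pow_two, Int.mul_emod, h] at h5
  have huniq : ∀ J : Ideal (𝓞 K), absNorm J = 2 → J = P := by
    intro J hJ
    obtain ⟨h2, ht⟩ := hmem' J 2 15 hJ Nat.prime_two rfl
    refine q_eq_of_le ?_ (by rw [hJ, hPn]) (by rw [hJ]; norm_num)
    rw [hP, Ideal.span_le]
    rintro a (rfl | rfl)
    · exact_mod_cast h2
    · exact ht
  have hcc : ClassGroup.mk0 ⟨P, hPne⟩ * ClassGroup.mk0 ⟨P, hPne⟩ = 1 := by
    rw [← map_mul]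
    refine (ClassGroup.mk0_eq_one_iff _).mpr ?_
    exact ⟨2, hPP⟩
  have hall : ∀ C : ClassGroup (𝓞 K), C = 1 ∨ C = ClassGroup.mk0 ⟨P, hPne⟩ := by
    intro C
    obtain ⟨⟨I, hI0⟩, rfl, hI⟩ := q_bound B h0' hs' C
    simp only at hI
    have hpos : absNorm I ≠ 0 := absNorm_ne_zero_iff_mem_nonZeroDivisors.mpr hI0
    obtain h | h | h | h | h : absNorm I = 1 ∨ absNorm I = 2 ∨ absNorm I = 3 ∨ absNorm I = 4 ∨
      absNorm I = 5 := by omega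
    · left
      rw [ClassGroup.mk0_eq_one_iff, absNorm_eq_one_iff.mp h]
      exact top_isPrincipal
    · right
      have := huniq I h
      subst this
      rfl
    · right
      obtain ⟨h3, ht⟩ := hmem' I 3 10 h Nat.prime_three rfl
      have e := hN 6 1
      have hprod : I * P = span {((6 : ℤ) : 𝓞 K) + (1 : ℤ) * t} := by
        apply q_eq_of_le
        · rw [Ideal.span_singleton_le_iff_mem]
          have : ((6 : ℤ) : 𝓞 K) + (1 : ℤ) * t = ((3 : ℕ) : 𝓞 K) * 2 + (((3 : ℕ) : 𝓞 K) * t - t * 2) := by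
            push_cast; ring
          rw [this]
          exact add_mem (mul_mem_mul h3 h2P) (sub_mem (mul_mem_mul h3 htP) (mul_mem_mul ht h2P))
        · rw [map_mul, h, hPn, e]; norm_num
        · rw [map_mul, h, hPn]; norm_num
      have h1 : ClassGroup.mk0 ⟨I, hI0⟩ * ClassGroup.mk0 ⟨P, hPne⟩ = 1 := by
        rw [← map_mul]
        exact (ClassGroup.mk0_eq_one_iff _).mpr ⟨_, hprod⟩
      exact mul_right_cancel (h1.trans hcc.symm)
    · left
      have hI1 : I ≠ ⊤ := by rw [Ne, ← absNorm_eq_one_iff]; omega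
      obtain ⟨M, hM, hIM⟩ := Ideal.exists_le_maximal I hI1
      have h4 : (4 : 𝓞 K) ∈ M := by
        have := hIM (absNorm_mem I)
        rw [h] at this
        exact_mod_cast this
      have h2M : ((2 : ℕ) : 𝓞 K) ∈ M := by
        have h22 : ((2 : ℕ) : 𝓞 K) * ((2 : ℕ) : 𝓞 K) ∈ M := by
          convert h4 using 1; norm_num
        exact (hM.isPrime.mem_or_mem h22).elim id id
      have htM := hmem M 2 15 hM.isPrime h2M rfl
      have hPM : P ≤ M := by
        rw [hP, Ideal.span_le]
        rintro a (rfl | rfl)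
        · exact_mod_cast h2M
        · exact htM
      have hMd := absNorm_dvd_absNorm_of_le hPM
      rw [hPn, Nat.dvd_prime Nat.prime_two] at hMd
      have hM2 := huniq M (hMd.resolve_left (by rw [absNorm_eq_one_iff]; exact hM.ne_top))
      rw [hM2] at hIM
      obtain ⟨J, hJ⟩ := Ideal.dvd_iff_le.mpr hIM
      have hJn : absNorm J = 2 := by
        rw [hJ, map_mul, hPn] at h; omega
      rw [huniq J hJn, hPP] at hJ
      exact (ClassGroup.mk0_eq_one_iff _).mpr ⟨_, hJ⟩
    · left
      obtain ⟨h5, ht⟩ := hmem' I 5 6 h Nat.prime_five rfl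
      have e := hN 5 1
      have hprod : I = span {((5 : ℤ) : 𝓞 K) + (1 : ℤ) * t} := by
        apply q_eq_of_le
        · rw [Ideal.span_singleton_le_iff_mem]
          have : ((5 : ℤ) : 𝓞 K) + (1 : ℤ) * t = ((5 : ℕ) : 𝓞 K) + t := by push_cast; ring
          rw [this]
          exact add_mem h5 ht
        · rw [h, e]; norm_num
        · rw [h]; norm_num
      exact (ClassGroup.mk0_eq_one_iff _).mpr ⟨_, hprod⟩
  rw [NumberField.classNumber, ← Nat.card_eq_fintype_card, Nat.card_eq_two_iff]
  refine ⟨1, ClassGroup.mk0 ⟨P, hPne⟩, ?_, ?_⟩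
  · intro h
    exact hnp ((ClassGroup.mk0_eq_one_iff _).mp h.symm)
  · ext C
    simpa using hall C
end



/-- The class number of the real quadratic field `ℚ(√30)` is 2. -/
theorem stmt_7 (K : Type*) [Field K] [NumberField K] (s : K) (hs : s ^ 2 = 30)
    (hgen : ∀ x : K, ∃ a b : ℚ, x = (a : K) + (b : K) * s) :
    NumberField.classNumber K = 2 := by
  obtain ⟨B, h0, h1⟩ := q_basis s hs hgen
  exact q_main B h0 h1
end

section
/- The equation (x - y)^4 + x^4 + (x + y)^4 = z^3 has no integer solutions x, y, z with gcd(x, y) = 1. -/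
open MeasureTheory in
theorem minkForms {n : ℕ} (M : Matrix (Fin n) (Fin n) ℝ) (hdet : M.det ≠ 0) (R : Fin n → ℝ)
    (hR : ∀ i, 0 < R i) (h : |M.det| < ∏ i, R i) :
    ∃ k : Fin n → ℤ, k ≠ 0 ∧ ∀ i, |(M.mulVec (fun j => (k j : ℝ))) i| < R i := by
  classical
  set b := Pi.basisFun ℝ (Fin n)
  set L := (Submodule.span ℤ (Set.range b)).toAddSubgroup with hL
  set f : (Fin n → ℝ) →ₗ[ℝ] (Fin n → ℝ) := Matrix.toLin' M with hf
  have hfd : LinearMap.det f = M.det := by simp [hf]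
  set box : Set (Fin n → ℝ) := Set.pi Set.univ (fun i => Set.Ioo (-(R i)) (R i)) with hbox
  set s := Set.preimage f box with hs
  have hvol : volume s = ENNReal.ofReal |M.det⁻¹| * ∏ i, ENNReal.ofReal (2 * R i) := by
    rw [hs, Measure.addHaar_preimage_linearMap volume (by rw [hfd]; exact hdet), hfd, hbox,
      Real.volume_pi_Ioo]
    congr 2
    ext i
    congr 1
    ring
  haveI : Countable L := inferInstanceAs (Countable (Submodule.span ℤ (Set.range b)))
  have hfund : IsAddFundamentalDomain L (ZSpan.fundamentalDomain b) volume :=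
    ZSpan.isAddFundamentalDomain b volume
  have hF : volume (ZSpan.fundamentalDomain b) = 1 := by
    rw [ZSpan.volume_fundamentalDomain]
    have : (Matrix.of (b : Fin n → Fin n → ℝ)) = 1 := by
      ext i j
      simp [b, Matrix.one_apply, Pi.single_apply, eq_comm]
    rw [this]; simp
  have hconv : Convex ℝ box := convex_pi (fun i _ => convex_Ioo _ _)
  have key := exists_ne_zero_mem_lattice_of_measure_mul_two_pow_lt_measure (μ := volume)
    (L := L) (s := s) hfund ?_ (hconv.linear_preimage f) ?_
  · obtain ⟨x, hx0, hxs⟩ := key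
    have hxm : (x : Fin n → ℝ) ∈ Submodule.span ℤ (Set.range b) := x.2
    have := (b.mem_span_iff_repr_mem ℤ _).1 hxm
    choose k hk using this
    refine ⟨k, ?_, ?_⟩
    · rintro rfl
      apply hx0
      ext i
      have := hk i
      simp [b] at this
      simp [← this]
    · intro i
      have hxe : (fun j => (k j : ℝ)) = (x : Fin n → ℝ) := by
        ext j
        have := hk j
        simpa [b] using this
      rw [hxe]
      have h2 : f x ∈ box := hxs
      have := h2 i trivial
      rw [abs_lt]
      simpa [hf] using this
  · intro x hx
    have h2 : f x ∈ box := hx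
    change f (-x) ∈ box
    intro i hi
    have := h2 i hi
    rw [map_neg]
    constructor
    · have := this.2; simp; linarith
    · have := this.1; simp; linarith
  · rw [hvol, hF, one_mul, ← ENNReal.ofReal_prod_of_nonneg (fun i _ => by linarith [hR i]),
      ← ENNReal.ofReal_mul (abs_nonneg _)]
    have e2 : (2 : ENNReal) ^ (Module.finrank ℝ (Fin n → ℝ)) = ENNReal.ofReal (2 ^ n) := by
      simp [ENNReal.ofReal_pow]
    rw [e2, ENNReal.ofReal_lt_ofReal_iff_of_nonneg (by positivity), Finset.prod_mul_distrib]
    simp only [Finset.prod_const, Finset.card_univ, Fintype.card_fin]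
    have hp : 0 < |M.det| := abs_pos.2 hdet
    rw [abs_inv, inv_mul_eq_div, lt_div_iff₀ hp]
    have : (0:ℝ) < 2 ^ n := by positivity
    nlinarith



/-! Arithmetic of triples `u + v θ + w θ²`, `θ³ = 18 θ + 72`. -/

def tm0 {R : Type*} [CommRing R] (u v w x y z : R) : R := u*x + 72*(v*z+w*y)
def tm1 {R : Type*} [CommRing R] (u v w x y z : R) : R := u*y+v*x+18*(v*z+w*y)+72*w*z
def tm2 {R : Type*} [CommRing R] (u v w x y z : R) : R := u*z+v*y+w*x+18*w*z

def tnrm (u v w : ℤ) : ℤ :=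
  u * ((u+18*w)*(u+18*w) - v*(18*v+72*w)) - v*(72*w*(u+18*w) - v*(72*v))
    + w*(72*w*(18*v+72*w) - (u+18*w)*72*v)

theorem tnrm_mul (u v w x y z : ℤ) :
    tnrm (tm0 u v w x y z) (tm1 u v w x y z) (tm2 u v w x y z) = tnrm u v w * tnrm x y z := by
  unfold tnrm tm0 tm1 tm2; ring

theorem tnrm_xi (c e : ℤ) : tnrm c (-e) 0 = c^3-18*c*e^2-72*e^3 := by
  unfold tnrm; ring

theorem t_eval {R : Type*} [CommRing R] (r u v w x y z : R) (hr : r^3 = 18*r+72) :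
    tm0 u v w x y z + tm1 u v w x y z * r + tm2 u v w x y z * r^2
      = (u+v*r+w*r^2)*(x+y*r+z*r^2) := by
  unfold tm0 tm1 tm2
  linear_combination (-(v*z+w*y)-w*z*r)*hr

/-- The real root. -/
theorem exists_root : ∃ r : ℝ, r^3 = 18*r+72 ∧ 5.56267 < r ∧ r < 5.56268 := by
  have hc : ContinuousOn (fun r : ℝ => r^3-18*r-72) (Set.Icc 5.56267 5.56268) := by fun_prop
  have := intermediate_value_Ioo (by norm_num) hc
  have h0 : (0:ℝ) ∈ Set.Ioo ((5.56267:ℝ)^3-18*5.56267-72) ((5.56268:ℝ)^3-18*5.56268-72) := by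
    constructor <;> norm_num
  obtain ⟨r, hr, h⟩ := this h0
  refine ⟨r, ?_, hr.1, hr.2⟩
  simp only at h
  linarith

theorem tau_aux (c d e q0 q1 q2 a0 a1 a2 : ℤ) (hd : d ≠ 0) (hcd : d^2 = c^3-18*c*e^4-72*e^6)
    (A0 : d^2*a0 = tm0 q0 q1 q2 (c^2-18*e^4) (c*e^2) (e^4))
    (A1 : d^2*a1 = tm1 q0 q1 q2 (c^2-18*e^4) (c*e^2) (e^4))
    (A2 : d^2*a2 = tm2 q0 q1 q2 (c^2-18*e^4) (c*e^2) (e^4)) :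
    q0 = tm0 a0 a1 a2 c (-e^2) 0 ∧ q1 = tm1 a0 a1 a2 c (-e^2) 0 ∧
      q2 = tm2 a0 a1 a2 c (-e^2) 0 := by
  have hd2 : d^2 ≠ 0 := pow_ne_zero _ hd
  unfold tm0 at A0
  unfold tm1 at A1
  unfold tm2 at A2
  refine ⟨?_, ?_, ?_⟩ <;> apply mul_left_cancel₀ hd2
  · unfold tm0
    linear_combination q0*hcd - c*A0 +72*e^2*A2
  · unfold tm1
    linear_combination q1*hcd + e^2*A0 - c*A1 + 18*e^2*A2
  · unfold tm2
    linear_combination q2*hcd + e^2*A1 - c*A2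

/-- divisibility: the lattice element squares times conjugate of ξ are divisible by d². -/
theorem tau_exists (c d e t s g k0 k1 k2 : ℤ) (hc : c = t*e^2+d^2*s)
    (hg : t^3-18*t-72 = d^2*g) (hd : d ≠ 0) (hcd : d^2 = c^3-18*c*e^4-72*e^6) :
    ∃ a0 a1 a2 : ℤ,
      let p := d*k0-t*k1-t^2*k2
      (tm0 p k1 k2 p k1 k2 = tm0 a0 a1 a2 c (-e^2) 0 ∧
      tm1 p k1 k2 p k1 k2 = tm1 a0 a1 a2 c (-e^2) 0 ∧
      tm2 p k1 k2 p k1 k2 = tm2 a0 a1 a2 c (-e^2) 0) ∧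
      d^2*a0 = tm0 (tm0 p k1 k2 p k1 k2) (tm1 p k1 k2 p k1 k2) (tm2 p k1 k2 p k1 k2)
        (c^2-18*e^4) (c*e^2) (e^4) ∧
      d^2*a1 = tm1 (tm0 p k1 k2 p k1 k2) (tm1 p k1 k2 p k1 k2) (tm2 p k1 k2 p k1 k2)
        (c^2-18*e^4) (c*e^2) (e^4) ∧
      d^2*a2 = tm2 (tm0 p k1 k2 p k1 k2) (tm1 p k1 k2 p k1 k2) (tm2 p k1 k2 p k1 k2)
        (c^2-18*e^4) (c*e^2) (e^4) := by
  set p := d*k0-t*k1-t^2*k2 with hp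
  -- n = 2 d k0 m + (θ - t) m²,  m = (k1 + t k2) + k2 θ
  set q0 := tm0 p k1 k2 p k1 k2 with hq0
  set q1 := tm1 p k1 k2 p k1 k2 with hq1
  set q2 := tm2 p k1 k2 p k1 k2 with hq2
  set m := k1+t*k2 with hm
  set n0 := 2*d*k0*m - t*m^2 + 72*k2^2 with hn0
  set n1 := 2*d*k0*k2 + m^2 - 2*t*m*k2+18*k2^2 with hn1
  set n2 := 2*m*k2 - t*k2^2 with hn2
  set y0 := 2*t*e^2*s+d^2*s^2 with hy0
  set y1 := s*e^2 with hy1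
  have A0 : d^2*(tm0 q0 q1 q2 y0 y1 0 + e^4*(k0^2*(t^2-18) - g*n0)) = tm0 q0 q1 q2
        (c^2-18*e^4) (c*e^2) (e^4) := by
    simp only [hq0,hq1,hq2,hy0,hy1,hn0,hn1,hn2,hc,hm,hp,tm0,tm1,tm2]
    linear_combination (e^4*(2*d*k0*(k1+t*k2) - t*(k1+t*k2)^2 + 72*k2^2))*hg
  have A1 : d^2*(tm1 q0 q1 q2 y0 y1 0 + e^4*(k0^2*t - g*n1)) = tm1 q0 q1 q2
        (c^2-18*e^4) (c*e^2) (e^4) := by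
    simp only [hq0,hq1,hq2,hy0,hy1,hn0,hn1,hn2,hc,hm,hp,tm0,tm1,tm2]
    linear_combination (e^4*(2*d*k0*k2 + (k1+t*k2)^2 - 2*t*(k1+t*k2)*k2+18*k2^2))*hg
  have A2 : d^2*(tm2 q0 q1 q2 y0 y1 0 + e^4*(k0^2 - g*n2)) = tm2 q0 q1 q2
        (c^2-18*e^4) (c*e^2) (e^4) := by
    simp only [hq0,hq1,hq2,hy0,hy1,hn0,hn1,hn2,hc,hm,hp,tm0,tm1,tm2]
    linear_combination (e^4*(2*(k1+t*k2)*k2 - t*k2^2))*hg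
  obtain ⟨B0, B1, B2⟩ := tau_aux c d e q0 q1 q2 _ _ _ hd hcd A0 A1 A2
  exact ⟨_, _, _, ⟨B0, B1, B2⟩, A0, A1, A2⟩


theorem lat_params (c d e : ℤ) (hce : IsCoprime c e) (hcd : d^2 = c^3-18*c*e^4-72*e^6) :
    ∃ t s g : ℤ, c = t*e^2+d^2*s ∧ t^3-18*t-72 = d^2*g := by
  have h1 : IsCoprime e (d^2) := by
    have : IsCoprime e (c^3) := hce.symm.pow_right
    have h2 : d^2 = c^3 + e*(-18*c*e^3-72*e^5) := by rw [hcd]; ring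
    rw [h2]
    exact IsCoprime.add_mul_left_right this _
  obtain ⟨a, b, hab⟩ := (h1.pow_left (m := 2))
  have hc : c = (c*a)*e^2+d^2*(c*b) := by linear_combination (-c)*hab
  have hdv : d^2 ∣ e^6*((c*a)^3-18*(c*a)-72) := by
    have : e^6*((c*a)^3-18*(c*a)-72) = ((c*a)*e^2)^3-18*((c*a)*e^2)*e^4-72*e^6 := by ring
    rw [this]
    have e1 : (c*a)*e^2 = c - d^2*(c*b) := by linarith
    rw [e1]
    refine ⟨1 + (-3*c^2*(c*b)+3*c*d^2*(c*b)^2-d^4*(c*b)^3+18*(c*b)*e^4), ?_⟩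
    linear_combination -hcd
  obtain ⟨g, hg⟩ := (h1.symm.pow_right (n := 6)).dvd_of_dvd_mul_left hdv
  exact ⟨c*a, c*b, g, hc, hg⟩

set_option maxHeartbeats 1600000 in
theorem tau_bounds (r : ℝ) (hr : r^3 = 18*r+72) (hr1 : 5.56267 < r) (hr2 : r < 5.56268)
    (c d e : ℤ) (hce : IsCoprime c e) (hd : d ≠ 0)
    (hcd : d^2 = c^3-18*c*e^4-72*e^6) :
    ∃ p k1 k2 a0 a1 a2 : ℤ, (p ≠ 0 ∨ k1 ≠ 0 ∨ k2 ≠ 0) ∧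
      (tm0 p k1 k2 p k1 k2 = tm0 a0 a1 a2 c (-e^2) 0 ∧
      tm1 p k1 k2 p k1 k2 = tm1 a0 a1 a2 c (-e^2) 0 ∧
      tm2 p k1 k2 p k1 k2 = tm2 a0 a1 a2 c (-e^2) 0) ∧
      (d^2*a0 = tm0 (tm0 p k1 k2 p k1 k2) (tm1 p k1 k2 p k1 k2) (tm2 p k1 k2 p k1 k2)
        (c^2-18*e^4) (c*e^2) (e^4) ∧
      d^2*a1 = tm1 (tm0 p k1 k2 p k1 k2) (tm1 p k1 k2 p k1 k2) (tm2 p k1 k2 p k1 k2)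
        (c^2-18*e^4) (c*e^2) (e^4) ∧
      d^2*a2 = tm2 (tm0 p k1 k2 p k1 k2) (tm1 p k1 k2 p k1 k2) (tm2 p k1 k2 p k1 k2)
        (c^2-18*e^4) (c*e^2) (e^4)) ∧
      0 ≤ a0+a1*r+a2*r^2 ∧ a0+a1*r+a2*r^2 < 30.92 ∧
      (a0-a1*r/2+a2*(18-r^2/2))^2+(3*r^2/4-18)*(a1-r*a2)^2 < 3825 := by
  have hrl : 30.9432 < r^2 := by nlinarith
  have hru : r^2 < 30.9435 := by nlinarith
  obtain ⟨t, s, g, hc, hg⟩ := lat_params c d e hce hcd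
  set ρ := Real.sqrt (3*r^2/4-18) with hρ
  have hρpos : 0 < 3*r^2/4-18 := by linarith
  have hρ2 : ρ^2 = 3*r^2/4-18 := Real.sq_sqrt hρpos.le
  have hρ0 : 0 < ρ := Real.sqrt_pos.2 hρpos
  set ξ : ℝ := c - e^2*r with hξ
  set n2 : ℝ := (c+e^2*r/2)^2+e^4*(3*r^2/4-18) with hn2
  have hcdR : (d:ℝ)^2 = c^3-18*c*e^4-72*e^6 := by exact_mod_cast hcd
  have hprod : ξ*n2 = d^2 := by
    rw [hcdR, hξ, hn2]; linear_combination (-(e:ℝ)^6)*hr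
  have hdR : (d:ℝ) ≠ 0 := by exact_mod_cast hd
  have hd2 : 0 < (d:ℝ)^2 := by positivity
  have hn2nn : 0 ≤ n2 := by positivity
  have hn2pos : 0 < n2 := by
    rcases hn2nn.lt_or_eq with h | h
    · exact h
    · rw [← h, mul_zero] at hprod; linarith
  have hξpos : 0 < ξ := by
    by_contra h
    have : ξ*n2 ≤ 0 := mul_nonpos_of_nonpos_of_nonneg (not_lt.1 h) hn2nn
    linarith
  set n := Real.sqrt n2 with hn
  have hn0 : 0 < n := Real.sqrt_pos.2 hn2pos
  have hnsq : n^2 = n2 := Real.sq_sqrt hn2nn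
  set R0 := 5.56*Real.sqrt ξ with hR0
  set R1 := 5.56*Real.sqrt n with hR1
  have hR0p : 0 < R0 := by positivity
  have hR1p : 0 < R1 := by positivity
  have hR0s : R0^2 = 30.9136*ξ := by rw [hR0, mul_pow, Real.sq_sqrt hξpos.le]; norm_num
  have hR1s : R1^2 = 30.9136*n := by rw [hR1, mul_pow, Real.sq_sqrt hn0.le]; norm_num
  have hRR : R0*R1*R1 = 171.879616*|(d:ℝ)| := by
    have : (R0*R1*R1)^2 = (171.879616*|(d:ℝ)|)^2 := by
      have : (R0*R1*R1)^2 = R0^2*(R1^2)^2 := by ring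
      have e3 : (171.879616*|(d:ℝ)|)^2 = 171.879616^2*(ξ*n^2) := by
        rw [mul_pow, sq_abs, ← hprod, ← hnsq]
      rw [this, hR0s, hR1s, e3]; ring
    exact (pow_left_inj₀ (by positivity) (by positivity) two_ne_zero).1 this
  set M : Matrix (Fin 3) (Fin 3) ℝ := !![(d:ℝ), r-t, r^2-t^2;
    (d:ℝ), -r/2-t, 18-r^2/2-t^2; 0, ρ, -r*ρ] with hM
  have hdet : M.det = -(d*ρ*(18-3*r^2))*1 - 0 := by
    rw [hM, Matrix.det_fin_three]; simp; ring
  have hdet' : |M.det| = |(d:ℝ)| * (ρ*(3*r^2-18)) := by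
    rw [hdet]
    have : -(d*ρ*(18-3*r^2))*1 - 0 = (d:ℝ)*(ρ*(3*r^2-18)) := by ring
    rw [this, abs_mul, abs_of_pos (a := ρ*(3*r^2-18))]
    have : 0 < 3*r^2-18 := by linarith
    positivity
  have hρu : ρ < 2.2821 := by
    have : ρ^2 < 2.2821^2 := by rw [hρ2]; norm_num; linarith
    exact lt_of_pow_lt_pow_left₀ 2 (by norm_num) this
  have hbig : ρ*(3*r^2-18) < 171.879616 := by
    have h1 : 3*r^2-18 < 74.832 := by linarith
    have h2 : 0 < 3*r^2-18 := by linarith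
    refine (mul_lt_mul'' hρu h1 hρ0.le h2.le).trans ?_
    norm_num
  have hdpos : 0 < |(d:ℝ)| := abs_pos.2 hdR
  have hbigpos : 0 < ρ*(3*r^2-18) := by
    have h2 : 0 < 3*r^2-18 := by linarith
    positivity
  obtain ⟨k, hk0, hk⟩ := minkForms M (by
      rw [← abs_pos, hdet']; positivity) ![R0, R1, R1]
    (by intro i; fin_cases i <;> simp [hR0p, hR1p])
    (by
      rw [hdet', Fin.prod_univ_three]
      simp only [Matrix.cons_val_zero, Matrix.cons_val_one, Matrix.cons_val]
      rw [hRR, mul_comm (171.879616:ℝ)]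
      exact mul_lt_mul_of_pos_left hbig hdpos)
  have hb0 := hk 0
  have hb1 := hk 1
  have hb2 := hk 2
  simp [hM, Matrix.mulVec, dotProduct, Fin.sum_univ_three] at hb0 hb1 hb2
  set p := d*k 0-t*k 1-t^2*k 2 with hp
  obtain ⟨a0, a1, a2, ⟨B0, B1, B2⟩, A⟩ := tau_exists c d e t s g (k 0) (k 1) (k 2) hc hg hd hcd
  simp only [← hp] at B0 B1 B2 A
  refine ⟨p, k 1, k 2, a0, a1, a2, ?_, ⟨B0, B1, B2⟩, A, ?_⟩
  · by_contra hcon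
    push Not at hcon
    obtain ⟨h1, h2, h3⟩ := hcon
    apply hk0
    have : k 0 = 0 := by
      rw [hp, h2, h3] at h1
      simpa [hd] using h1
    ext i
    fin_cases i <;> simp [this, h2, h3]
  have C0 : tm0 (p:ℝ) (k 1) (k 2) p (k 1) (k 2) = tm0 (a0:ℝ) a1 a2 c (-e^2) 0 := by
    unfold tm0 at B0 ⊢; exact_mod_cast B0
  have C1 : tm1 (p:ℝ) (k 1) (k 2) p (k 1) (k 2) = tm1 (a0:ℝ) a1 a2 c (-e^2) 0 := by
    unfold tm1 at B1 ⊢; exact_mod_cast B1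
  have C2 : tm2 (p:ℝ) (k 1) (k 2) p (k 1) (k 2) = tm2 (a0:ℝ) a1 a2 c (-e^2) 0 := by
    unfold tm2 at B2 ⊢; exact_mod_cast B2
  have hpR : (p:ℝ) = d*k 0-t*k 1-t^2*k 2 := by rw [hp]; push_cast; ring
  set b0 : ℝ := p + k 1*r+k 2*r^2 with hb0d
  set b1 : ℝ := p - k 1*r/2+k 2*(18-r^2/2) with hb1d
  set b2 : ℝ := ρ*(k 1 - r*k 2) with hb2d
  have hb0' : |b0| < R0 := by
    convert hb0 using 2; rw [hb0d, hpR]; ring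
  have hb1' : |b1| < R1 := by
    convert hb1 using 2; rw [hb1d, hpR]; ring
  have hb2' : |b2| < R1 := by
    convert hb2 using 2; rw [hb2d]; ring
  have sq0 : b0^2 < R0^2 := by rw [← sq_abs]; exact pow_lt_pow_left₀ hb0' (abs_nonneg _) two_ne_zero
  have sq1 : b1^2 < R1^2 := by rw [← sq_abs]; exact pow_lt_pow_left₀ hb1' (abs_nonneg _) two_ne_zero
  have sq2 : b2^2 < R1^2 := by rw [← sq_abs]; exact pow_lt_pow_left₀ hb2' (abs_nonneg _) two_ne_zero
  -- real embedding
  have ev0 : b0^2 = (a0+a1*r+a2*r^2)*ξ := by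
    have := t_eval r (p:ℝ) (k 1) (k 2) p (k 1) (k 2) hr
    rw [C0, C1, C2, t_eval r (a0:ℝ) a1 a2 c (-e^2) 0 hr] at this
    rw [hb0d, hξ]; linear_combination -this
  -- complex embedding: norm identity
  have evc : b1^2+b2^2 ≥ 0 := by positivity
  have ev1 : (b1^2+b2^2)^2 =
     ((a0-a1*r/2+a2*(18-r^2/2))^2+(3*r^2/4-18)*(a1-r*a2)^2)*n^2 := by
    set θ : ℂ := ⟨-r/2, ρ⟩ with hθ
    have hθ3 : θ^3 = 18*θ+72 := by
      apply Complex.ext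
      · simp [hθ, pow_succ]
        linear_combination hr + (3*r/2)*hρ2
      · simp [hθ, pow_succ]
        linear_combination (-ρ)*hρ2
    have D0 : tm0 (p:ℂ) (k 1) (k 2) p (k 1) (k 2) = tm0 (a0:ℂ) a1 a2 c (-e^2) 0 := by
      unfold tm0 at B0 ⊢; exact_mod_cast B0
    have D1 : tm1 (p:ℂ) (k 1) (k 2) p (k 1) (k 2) = tm1 (a0:ℂ) a1 a2 c (-e^2) 0 := by
      unfold tm1 at B1 ⊢; exact_mod_cast B1
    have D2 : tm2 (p:ℂ) (k 1) (k 2) p (k 1) (k 2) = tm2 (a0:ℂ) a1 a2 c (-e^2) 0 := by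
      unfold tm2 at B2 ⊢; exact_mod_cast B2
    have := t_eval θ (p:ℂ) (k 1) (k 2) p (k 1) (k 2) hθ3
    rw [D0, D1, D2, t_eval θ (a0:ℂ) a1 a2 c (-e^2) 0 hθ3] at this
    have hh := congrArg Complex.normSq this
    rw [map_mul, map_mul] at hh
    have hθ2 : θ^2 = ⟨18-r^2/2, -r*ρ⟩ := by
      apply Complex.ext
      · simp [hθ, pow_succ]; linear_combination (-1:ℝ)*hρ2
      · simp [hθ, pow_succ]; ring
    have N1 : Complex.normSq ((p:ℂ)+k 1*θ+k 2*θ^2) = b1^2+b2^2 := by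
      rw [hθ2, Complex.normSq_apply]
      simp [hθ]
      rw [hb1d, hb2d]; ring
    have N2 : Complex.normSq ((a0:ℂ)+a1*θ+a2*θ^2) =
      ((a0-a1*r/2+a2*(18-r^2/2))^2+(3*r^2/4-18)*(a1-r*a2)^2) := by
      rw [hθ2, Complex.normSq_apply, ← hρ2]
      simp [hθ]
      ring
    have N3 : Complex.normSq ((c:ℂ)+(-e^2)*θ+0*θ^2) = n^2 := by
      rw [hnsq, hn2, Complex.normSq_apply, ← hρ2]
      have e1 : ((e:ℂ)^2) = ((e^2 : ℝ) : ℂ) := by push_cast; ring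
      rw [e1, ← Complex.ofReal_neg]
      simp only [hθ, zero_mul, add_zero, Complex.add_re, Complex.add_im, Complex.intCast_re,
        Complex.intCast_im, Complex.re_ofReal_mul, Complex.im_ofReal_mul]
      ring
    rw [N1, N2, N3] at hh
    linarith
  refine ⟨?_, ?_, ?_⟩
  · by_contra h
    push Not at h
    have := mul_neg_of_neg_of_pos h hξpos
    rw [← ev0] at this
    linarith [sq_nonneg b0]
  · have : (a0+a1*r+a2*r^2)*ξ < 30.92*ξ := by rw [← ev0]; linarith
    exact lt_of_mul_lt_mul_right this hξpos.le
  · have h1 : b1^2+b2^2 < 61.8272*n := by linarith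
    have h2 : (b1^2+b2^2)^2 < (61.8272*n)^2 := pow_lt_pow_left₀ h1 evc two_ne_zero
    rw [ev1, mul_pow] at h2
    have := lt_of_mul_lt_mul_right h2 (by positivity)
    refine this.trans ?_
    norm_num


def maskS8 : ℕ := 204586912993520496295413254992302436034418562933603682630652846154265822295811404565510480159488562077017866220112053256233704101472019343197545168915

def listTau : List (ℤ × ℤ × ℤ) := [(36, 8, -2), (0, 12, -2), (-12, 8, -1), (0, 0, 0), (1, 0, 0),
  (4, 0, 0), (9, 0, 0), (16, 0, 0), (25, 0, 0), (25, -10, 1), (16, -8, 1), (9, -6, 1), (7, -5, 1),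
  (4, -4, 1), (1, -2, 1), (-17, -1, 1), (-39, 2, 1), (-48, -4, 3)]

def sqT (mask m : ℕ) (n : ℕ) : Bool := mask.testBit (Nat.mod n m)

theorem sqT_sq (mask m : ℕ) (hm : 0 < m) (h : ∀ i < m, mask.testBit (i*i%m) = true) (k : ℕ) :
    sqT mask m (k^2) = true := by
  unfold sqT
  have : Nat.mod (k^2) m = (k%m)*(k%m)%m := by
    change k^2 % m = _
    rw [sq, Nat.mul_mod]
  rw [this]
  exact h _ (Nat.mod_lt _ hm)

def forceN (n : ℕ) (f : ℕ → Bool) : Bool :=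
  Nat.rec (motive := fun _ => Bool) (f 0) (fun m _ => f (Nat.succ m)) n

theorem forceN_eq (n : ℕ) (f : ℕ → Bool) : forceN n f = f n := by cases n <;> rfl

def sqTestN (n : ℕ) : Bool := sqT 531 16 n && sqT 147 9 n && sqT 19 5 n && sqT 23 7 n && sqT 571 11 n && sqT 5659 13 n && sqT 340831 23 n

def sqTest (z : ℤ) : Bool := match z with
  | Int.ofNat n => forceN n sqTestN
  | Int.negSucc _ => false

theorem sqTest_sq (k : ℤ) : sqTest (k^2) = true := by
  have : k^2 = Int.ofNat (k.natAbs^2) := by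
    rw [← Int.natAbs_sq]; simp
  rw [this]
  change forceN _ _ = true
  rw [forceN_eq]
  unfold sqTestN
  simp only [Bool.and_eq_true]
  refine ⟨⟨⟨⟨⟨⟨?_, ?_⟩, ?_⟩, ?_⟩, ?_⟩, ?_⟩, ?_⟩ <;> exact sqT_sq _ _ (by norm_num) (by decide) _

def chkTau (un vn wn : ℕ) : Bool :=
  !(maskS8.testBit (Nat.add (Nat.mod un 8) (Nat.add (Nat.mul 8 (Nat.mod vn 8)) (Nat.mul 64 (Nat.mod wn 8))))
  && (Nat.ble 13590484 (10000*un+55627*vn+309434*wn)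
  && (Nat.ble (10000*un+55627*vn+309434*wn) 13899884
  && (Nat.ble (12051416 + 55627*vn) (20000*un+50566*wn)
  && (Nat.ble (20000*un+50566*wn) (14527416 + 55627*vn)
  && sqTest (tnrm ((un:ℤ)-800) ((vn:ℤ)-56) ((wn:ℤ)-8))))))) ||
    listTau.contains ((un:ℤ)-800, (vn:ℤ)-56, (wn:ℤ)-8)

def allRange : ℕ → ℕ → (ℕ → Bool) → Bool
  | _, 0, _ => true
  | a, n+1, f => f a && forceN (Nat.add a 1) fun b => allRange b n f

theorem allRange_spec (n : ℕ) : ∀ (a : ℕ) (f : ℕ → Bool), allRange a n f = true →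
    ∀ i, a ≤ i → i < a + n → f i = true := by
  induction n with
  | zero => intro a f _ i h1 h2; omega
  | succ n ih =>
    intro a f h i h1 h2
    simp only [allRange, Bool.and_eq_true, forceN_eq] at h
    rcases Nat.eq_or_lt_of_le h1 with h3 | h3
    · rw [← h3]; exact h.1
    · exact ih (a+1) f h.2 i h3 (by omega)

def allTau : Bool :=
  allRange 4 9 fun wn => allRange 7 99 fun vn =>
    !(Nat.ble (55627*wn+560000) (10000*vn + 716216) &&
      (Nat.ble (10000*vn+173816) (55627*wn+560000) && (Nat.ble 12653552 (166881*vn+568302*wn) &&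
      Nat.ble (166881*vn+568302*wn) 15748352))) ||
    forceN ((13590584-(55627*vn+309434*wn))/10000-1) fun un0 =>
      allRange un0 34 fun un => chkTau un vn wn

set_option maxRecDepth 100000 in
theorem allTau_true : allTau = true := by decide +kernel

theorem enum_tau (u v w : ℤ) (hw : -4 ≤ w ∧ w ≤ 4) (hv : -49 ≤ v ∧ v ≤ 49)
    (h1 : -100 ≤ 10000*u+55627*v+309434*w) (h2 : 10000*u+55627*v+309434*w ≤ 309300)
    (h3 : -1238000 ≤ 20000*u-55627*v+50566*w) (h4 : 20000*u-55627*v+50566*w ≤ 1238000)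
    (h5 : -271200 ≤ 10000*v-55627*w) (h6 : 10000*v-55627*w ≤ 271200)
    (h7 : maskS8.testBit ((u % 8 + 8*(v%8)+64*(w%8)).toNat) = true)
    (h8 : ∃ k, tnrm u v w = k^2) : (u, v, w) ∈ listTau := by
  have h := allTau_true
  unfold allTau at h
  obtain ⟨wn, hwn⟩ := Int.eq_ofNat_of_zero_le (by omega : 0 ≤ w + 8)
  obtain ⟨vn, hvn⟩ := Int.eq_ofNat_of_zero_le (by omega : 0 ≤ v + 56)
  obtain ⟨un, hun⟩ := Int.eq_ofNat_of_zero_le (by omega : 0 ≤ u + 800)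
  have hw' : w = (wn:ℤ) - 8 := by omega
  have hv' : v = (vn:ℤ) - 56 := by omega
  have hu' : u = (un:ℤ) - 800 := by omega
  have h := allRange_spec _ _ _ h wn (by omega) (by omega)
  have h := allRange_spec _ _ _ h vn (by omega) (by omega)
  have a1 : Nat.ble (55627*wn+560000) (10000*vn + 716216) = true := Nat.ble_eq_true_of_le (by omega)
  have a2 : Nat.ble (10000*vn+173816) (55627*wn+560000) = true := Nat.ble_eq_true_of_le (by omega)
  have a3 : Nat.ble 12653552 (166881*vn+568302*wn) = true := Nat.ble_eq_true_of_le (by omega)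
  have a4 : Nat.ble (166881*vn+568302*wn) 15748352 = true := Nat.ble_eq_true_of_le (by omega)
  simp only [a1, a2, a3, a4, Bool.and_self, Bool.not_true, Bool.false_or, forceN_eq] at h
  have h := allRange_spec _ _ _ h un (by omega) (by omega)
  obtain ⟨k, hk⟩ := h8
  have hs : sqTest (tnrm u v w) = true := by rw [hk]; exact sqTest_sq k
  have e7 : ((u % 8 + 8*(v%8)+64*(w%8)).toNat) = 
      Nat.add (Nat.mod un 8) (Nat.add (Nat.mul 8 (Nat.mod vn 8)) (Nat.mul 64 (Nat.mod wn 8))) := by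
    change _ = un % 8 + (8*(vn%8)+64*(wn%8))
    have q1 : u % 8 = ((un % 8 : ℕ) : ℤ) := by omega
    have q2 : v % 8 = ((vn % 8 : ℕ) : ℤ) := by omega
    have q3 : w % 8 = ((wn % 8 : ℕ) : ℤ) := by omega
    rw [q1, q2, q3]
    omega
  rw [e7] at h7
  have b1 : Nat.ble 13590484 (10000*un+55627*vn+309434*wn) = true := Nat.ble_eq_true_of_le (by omega)
  have b2 : Nat.ble (10000*un+55627*vn+309434*wn) 13899884 = true := Nat.ble_eq_true_of_le (by omega)
  have b3 : Nat.ble (12051416 + 55627*vn) (20000*un+50566*wn) = true := Nat.ble_eq_true_of_le (by omega)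
  have b4 : Nat.ble (20000*un+50566*wn) (14527416 + 55627*vn) = true := Nat.ble_eq_true_of_le (by omega)
  unfold chkTau at h
  rw [← hu', ← hv', ← hw'] at h
  simp only [b1, b2, b3, b4, hs, h7, Bool.and_self, Bool.not_true, Bool.false_or] at h
  exact List.contains_iff_mem.1 h

set_option maxHeartbeats 2000000 in
/-- real bounds to integer bounds -/
theorem tau_int_bounds (r : ℝ) (hr1 : 5.56267 < r) (hr2 : r < 5.56268) (u v w : ℤ)
    (H1 : 0 ≤ u+v*r+w*r^2) (H2 : u+v*r+w*r^2 < 30.92)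
    (H3 : (u-v*r/2+w*(18-r^2/2))^2+(3*r^2/4-18)*(v-r*w)^2 < 3825) :
    (-4 ≤ w ∧ w ≤ 4) ∧ (-49 ≤ v ∧ v ≤ 49) ∧
    (-100 ≤ 10000*u+55627*v+309434*w) ∧ (10000*u+55627*v+309434*w ≤ 309300) ∧
    (-1238000 ≤ 20000*u-55627*v+50566*w) ∧ (20000*u-55627*v+50566*w ≤ 1238000) ∧
    (-271200 ≤ 10000*v-55627*w) ∧ (10000*v-55627*w ≤ 271200) := by
  have hrl : 30.9432 < r^2 := by nlinarith
  have hru : r^2 < 30.9435 := by nlinarith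
  obtain ⟨p, hp⟩ : ∃ p : ℝ, p = u-v*r/2+w*(18-r^2/2) := ⟨_, rfl⟩
  obtain ⟨V, hV⟩ : ∃ V : ℝ, V = v-r*w := ⟨_, rfl⟩
  rw [← hp, ← hV] at H3
  have hp2 : p^2 < 3825 := by nlinarith [sq_nonneg V]
  have hp3 : |p| < 61.85 := abs_lt_of_sq_lt_sq (by norm_num; linarith) (by norm_num)
  have hV2 : V^2 < 734.6 := by nlinarith [sq_nonneg V, sq_nonneg p]
  have hV3 : |V| < 27.105 := abs_lt_of_sq_lt_sq (by norm_num; linarith) (by norm_num)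
  obtain ⟨p1, p2⟩ := abs_lt.1 hp3
  obtain ⟨V1, V2⟩ := abs_lt.1 hV3
  have key : u+v*r+w*r^2 - p = 3*r/2*V + w*(3*r^2-18) := by rw [hp, hV]; ring
  have hw5 : |(w:ℝ)| < 5 := by
    rw [abs_lt]
    constructor
    · by_contra h
      push Not at h
      nlinarith
    · by_contra h
      push Not at h
      nlinarith
  obtain ⟨w1, w2⟩ := abs_lt.1 hw5
  have w1' : -5 < w := by exact_mod_cast w1
  have w2' : w < 5 := by exact_mod_cast w2
  have w1 : (-4:ℝ) ≤ w := by exact_mod_cast (by omega : -4 ≤ w)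
  have w2 : (w:ℝ) ≤ 4 := by exact_mod_cast (by omega : w ≤ 4)
  have hv : (v:ℝ) = V + r*w := by rw [hV]; ring
  have v1 : (-50:ℝ) < v := by rw [hv]; nlinarith
  have v2 : (v:ℝ) < 50 := by rw [hv]; nlinarith
  have v1' : -50 < v := by exact_mod_cast v1
  have v2' : v < 50 := by exact_mod_cast v2
  -- errors
  have E1 : |(v:ℝ)*(r-5.5627)| ≤ 50*0.0001 := by
    rw [abs_mul]
    apply mul_le_mul (abs_le.2 ⟨by linarith, by linarith⟩) (abs_le.2 ⟨by linarith, by linarith⟩)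
      (abs_nonneg _) (by norm_num)
  have E2 : |(w:ℝ)*(r^2-30.9434)| ≤ 4*0.0003 := by
    rw [abs_mul]
    apply mul_le_mul (abs_le.2 ⟨by linarith, by linarith⟩) (abs_le.2 ⟨by linarith, by linarith⟩)
      (abs_nonneg _) (by norm_num)
  have E3 : |(w:ℝ)*(r-5.5627)| ≤ 4*0.0001 := by
    rw [abs_mul]
    apply mul_le_mul (abs_le.2 ⟨by linarith, by linarith⟩) (abs_le.2 ⟨by linarith, by linarith⟩)
      (abs_nonneg _) (by norm_num)
  obtain ⟨E11, E12⟩ := abs_le.1 E1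
  obtain ⟨E21, E22⟩ := abs_le.1 E2
  obtain ⟨E31, E32⟩ := abs_le.1 E3
  refine ⟨⟨by omega, by omega⟩, ⟨by omega, by omega⟩, ?_, ?_, ?_, ?_, ?_, ?_⟩
  · have : (-100:ℝ) ≤ 10000*u+55627*v+309434*w := by linarith
    exact_mod_cast this
  · have : (10000*u+55627*v+309434*w:ℝ) ≤ 309300 := by linarith
    exact_mod_cast this
  · have : (-1238000:ℝ) ≤ 20000*u-55627*v+50566*w := by linarith
    exact_mod_cast this
  · have : (20000*u-55627*v+50566*w:ℝ) ≤ 1238000 := by linarith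
    exact_mod_cast this
  · have : (-271200:ℝ) ≤ 10000*v-55627*w := by linarith
    exact_mod_cast this
  · have : (10000*v-55627*w:ℝ) ≤ 271200 := by linarith
    exact_mod_cast this


theorem no_rat_root (x : ℚ) : x^3-18*x-72 ≠ 0 := by
  intro h
  have hi : IsIntegral ℤ x := by
    refine ⟨Polynomial.X^3 - Polynomial.C 18*Polynomial.X - Polynomial.C 72, ?_, ?_⟩
    · monicity!
    · simpa using h
  obtain ⟨n, hn⟩ := IsIntegrallyClosed.isIntegral_iff.1 hi
  have hn' : (n:ℚ) = x := by simpa using hn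
  rw [← hn'] at h
  have h2 : n^3-18*n-72 = 0 := by exact_mod_cast h
  have h3 : ((n:ZMod 7))^3-18*n-72 = 0 := by exact_mod_cast congrArg (Int.cast : ℤ → ZMod 7) h2
  revert h3
  generalize (n : ZMod 7) = m
  revert m
  decide

def Sq3 (c e : ℤ) : Prop := ∃ u v w : ℚ, u^2+144*v*w = c ∧ 2*u*v+36*v*w+72*w^2 = -e^2 ∧
    v^2+2*u*w+18*w^2 = 0

theorem sq_case (κ0 κ1 κ2 : ℚ) (a0 a1 a2 p k1 k2 c e : ℤ)
    (g0 : tm0 (tm0 κ0 κ1 κ2 κ0 κ1 κ2) (tm1 κ0 κ1 κ2 κ0 κ1 κ2) (tm2 κ0 κ1 κ2 κ0 κ1 κ2)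
      (a0:ℚ) a1 a2 = 1)
    (g1 : tm1 (tm0 κ0 κ1 κ2 κ0 κ1 κ2) (tm1 κ0 κ1 κ2 κ0 κ1 κ2) (tm2 κ0 κ1 κ2 κ0 κ1 κ2)
      (a0:ℚ) a1 a2 = 0)
    (g2 : tm2 (tm0 κ0 κ1 κ2 κ0 κ1 κ2) (tm1 κ0 κ1 κ2 κ0 κ1 κ2) (tm2 κ0 κ1 κ2 κ0 κ1 κ2)
      (a0:ℚ) a1 a2 = 0)
    (B0 : tm0 p k1 k2 p k1 k2 = tm0 a0 a1 a2 c (-e^2) 0)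
    (B1 : tm1 p k1 k2 p k1 k2 = tm1 a0 a1 a2 c (-e^2) 0)
    (B2 : tm2 p k1 k2 p k1 k2 = tm2 a0 a1 a2 c (-e^2) 0) : Sq3 c e := by
  have C0 : tm0 (p:ℚ) k1 k2 p k1 k2 = tm0 (a0:ℚ) a1 a2 c (-e^2) 0 := by
    unfold tm0 at B0 ⊢; exact_mod_cast B0
  have C1 : tm1 (p:ℚ) k1 k2 p k1 k2 = tm1 (a0:ℚ) a1 a2 c (-e^2) 0 := by
    unfold tm1 at B1 ⊢; exact_mod_cast B1
  have C2 : tm2 (p:ℚ) k1 k2 p k1 k2 = tm2 (a0:ℚ) a1 a2 c (-e^2) 0 := by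
    unfold tm2 at B2 ⊢; exact_mod_cast B2
  refine ⟨tm0 κ0 κ1 κ2 p k1 k2, tm1 κ0 κ1 κ2 p k1 k2, tm2 κ0 κ1 κ2 p k1 k2, ?_, ?_, ?_⟩
  all_goals
    unfold tm0 tm1 tm2 at *
  · linear_combination (κ0^2+144*κ1*κ2)*C0 + 72*(2*κ0*κ1+36*κ1*κ2+72*κ2^2)*C2
      + 72*(κ1^2+2*κ0*κ2+18*κ2^2)*C1 + (c:ℚ)*g0 - 72*(e:ℚ)^2*g2
  · linear_combination (κ0^2+144*κ1*κ2)*C1 + (2*κ0*κ1+36*κ1*κ2+72*κ2^2)*C0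
      + 18*((2*κ0*κ1+36*κ1*κ2+72*κ2^2)*C2 + (κ1^2+2*κ0*κ2+18*κ2^2)*C1)
      + 72*(κ1^2+2*κ0*κ2+18*κ2^2)*C2 + (c:ℚ)*g1 - (e:ℚ)^2*g0 - 18*(e:ℚ)^2*g2
  · linear_combination (κ0^2+144*κ1*κ2)*C2 + (2*κ0*κ1+36*κ1*κ2+72*κ2^2)*C1
      + (κ1^2+2*κ0*κ2+18*κ2^2)*C0 + 18*(κ1^2+2*κ0*κ2+18*κ2^2)*C2 + (c:ℚ)*g2 - (e:ℚ)^2*g1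

theorem zero_case (p k1 k2 c e : ℤ)
    (B0 : tm0 p k1 k2 p k1 k2 = tm0 0 0 0 c (-e^2) 0)
    (B1 : tm1 p k1 k2 p k1 k2 = tm1 0 0 0 c (-e^2) 0)
    (B2 : tm2 p k1 k2 p k1 k2 = tm2 0 0 0 c (-e^2) 0)
    (hne : p ≠ 0 ∨ k1 ≠ 0 ∨ k2 ≠ 0) : False := by
  unfold tm0 at B0
  unfold tm1 at B1
  unfold tm2 at B2
  by_cases h2 : k2 = 0
  · subst h2
    have h1 : k1 = 0 := by
      have : k1^2 = 0 := by linarith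
      simpa using this
    subst h1
    have h0 : p = 0 := by
      have : p^2 = 0 := by linarith
      simpa using this
    simp_all
  · have hq : (k2:ℚ) ≠ 0 := by exact_mod_cast h2
    apply no_rat_root ((k1:ℚ)/k2)
    have e1 : k2*(k1^3-18*k1*k2^2-72*k2^3) = 0 := by
      linear_combination k1*k2 * B2 - k2^2*B1
    have e2 : k1^3-18*k1*k2^2-72*k2^3 = 0 := by
      rcases mul_eq_zero.1 e1 with h | h
      · exact absurd h h2
      · exact h
    have e3 : (k1:ℚ)^3-18*k1*k2^2-72*k2^3 = 0 := by exact_mod_cast e2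
    field_simp
    linear_combination e3

theorem case107 (p k1 k2 c e : ℤ) (hce : IsCoprime c e)
    (B0 : tm0 p k1 k2 p k1 k2 = tm0 7 (-5) 1 c (-e^2) 0)
    (B1 : tm1 p k1 k2 p k1 k2 = tm1 7 (-5) 1 c (-e^2) 0)
    (B2 : tm2 p k1 k2 p k1 k2 = tm2 7 (-5) 1 c (-e^2) 0) : False := by
  unfold tm0 at B0
  unfold tm1 at B1
  unfold tm2 at B2
  have hp : Prime (107:ℤ) := by norm_num
  obtain ⟨a, ha⟩ : ∃ a, a = p - 7*k2 := ⟨_, rfl⟩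
  obtain ⟨b, hb⟩ : ∃ b, b = k1 + 5*k2 := ⟨_, rfl⟩
  have hpa : p = a + 7*k2 := by linarith
  have hka : k1 = b - 5*k2 := by linarith
  clear ha hb
  subst hpa hka
  have d1 : b*(2*a+5*b) = 107*(-k2^2) := by linear_combination B1 + 5*B2
  have d2 : a^2-7*b^2 = 107*(-e^2-2*b*k2+10*k2^2) := by linear_combination B0 - 7*B2
  have hb : (107:ℤ) ∣ b := by
    rcases hp.dvd_or_dvd (Dvd.intro _ d1.symm) with h | h
    · exact h
    · have : (107:ℤ) ∣ 3*b^2 := by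
        obtain ⟨x, hx⟩ := h
        refine ⟨-(4*(-e^2-2*b*k2+10*k2^2) - x*(2*a-5*b)) , ?_⟩
        linear_combination -4*d2 + (2*a-5*b)*hx
      rcases hp.dvd_or_dvd this with h | h
      · norm_num at h
      · exact hp.dvd_of_dvd_pow h
  have ha : (107:ℤ) ∣ a := by
    have : (107:ℤ) ∣ a^2 := by
      obtain ⟨x, hx⟩ := hb
      exact ⟨(-e^2-2*b*k2+10*k2^2) + 7*b*x, by linear_combination d2 + 7*b*hx⟩
    exact hp.dvd_of_dvd_pow this
  obtain ⟨x, rfl⟩ := ha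
  obtain ⟨y, rfl⟩ := hb
  have hk : (107:ℤ) ∣ k2 := hp.dvd_of_dvd_pow (n := 2) ⟨-y*(2*x+5*y), by linarith⟩
  obtain ⟨z, rfl⟩ := hk
  have he : (107:ℤ) ∣ e := hp.dvd_of_dvd_pow (n := 2)
    ⟨-x^2+7*y^2-2*107*y*z+10*107*z^2, by linarith⟩
  obtain ⟨f, rfl⟩ := he
  have hc : (107:ℤ) ∣ c := by
    apply Int.dvd_of_emod_eq_zero
    ring_nf at B2
    omega
  exact hp.not_unit (hce.isUnit_of_dvd' hc (Dvd.intro _ rfl))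

theorem case5 (p k1 k2 c e : ℤ) (hce : IsCoprime c e)
    (B0 : tm0 p k1 k2 p k1 k2 = tm0 (-17) (-1) 1 c (-e^2) 0)
    (B1 : tm1 p k1 k2 p k1 k2 = tm1 (-17) (-1) 1 c (-e^2) 0)
    (B2 : tm2 p k1 k2 p k1 k2 = tm2 (-17) (-1) 1 c (-e^2) 0) : False := by
  unfold tm0 at B0
  unfold tm1 at B1
  unfold tm2 at B2
  have hp : Prime (5:ℤ) := by norm_num
  obtain ⟨a, ha⟩ : ∃ a, a = p + 17*k2 := ⟨_, rfl⟩
  obtain ⟨b, hb⟩ : ∃ b, b = k1 + k2 := ⟨_, rfl⟩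
  have hpa : p = a - 17*k2 := by linarith
  have hka : k1 = b - k2 := by linarith
  clear ha hb
  subst hpa hka
  have d1 : b*(2*a+b) = 5*(-11*k2^2) := by linear_combination B1 + B2
  have d2 : a^2+17*b^2 = 5*(-11*(e^2+2*b*k2-2*k2^2)) := by linear_combination B0 + 17*B2
  have hb : (5:ℤ) ∣ b := by
    rcases hp.dvd_or_dvd (Dvd.intro _ d1.symm) with h | h
    · exact h
    · have : (5:ℤ) ∣ 69*b^2 := by
        obtain ⟨x, hx⟩ := h
        refine ⟨4*(-11*(e^2+2*b*k2-2*k2^2)) - x*(2*a-b) , ?_⟩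
        linear_combination 4*d2 - (2*a-b)*hx
      rcases hp.dvd_or_dvd this with h | h
      · norm_num at h
      · exact hp.dvd_of_dvd_pow h
  have ha : (5:ℤ) ∣ a := by
    have : (5:ℤ) ∣ a^2 := by
      obtain ⟨x, hx⟩ := hb
      exact ⟨(-11*(e^2+2*b*k2-2*k2^2)) - 17*b*x, by linear_combination d2 - 17*b*hx⟩
    exact hp.dvd_of_dvd_pow this
  obtain ⟨x, rfl⟩ := ha
  obtain ⟨y, rfl⟩ := hb
  have hk : (5:ℤ) ∣ 11*k2^2 := ⟨-y*(2*x+y), by linarith⟩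
  have hk : (5:ℤ) ∣ k2 := by
    rcases hp.dvd_or_dvd hk with h | h
    · norm_num at h
    · exact hp.dvd_of_dvd_pow h
  obtain ⟨z, rfl⟩ := hk
  have he : (5:ℤ) ∣ 11*e^2 :=
    ⟨-x^2-17*y^2-22*5*y*z+22*5*z^2, by linarith⟩
  have he : (5:ℤ) ∣ e := by
    rcases hp.dvd_or_dvd he with h | h
    · norm_num at h
    · exact hp.dvd_of_dvd_pow h
  obtain ⟨f, rfl⟩ := he
  have hc : (5:ℤ) ∣ c := by
    apply Int.dvd_of_emod_eq_zero
    ring_nf at B2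
    omega
  exact hp.not_unit (hce.isUnit_of_dvd' hc (Dvd.intro _ rfl))

theorem xi8 : ∀ c e : ZMod 8, c^3-18*c*e^4-72*e^6 = 1 →
    (c^2-18*e^4 = 1 ∧ c*e^2 = 0 ∧ e^4 = 0) ∨ (c^2-18*e^4 = 1 ∧ c*e^2 = 4 ∧ e^4 = 0) ∨
    (c^2-18*e^4 = 7 ∧ c*e^2 = 7 ∧ e^4 = 1) := by decide

def mem8 (u v w : ZMod 8) : Bool := maskS8.testBit (u.val + 8*v.val+64*w.val)

def chk8 (x y z : ZMod 8) : Prop := ∀ p q s : ZMod 8,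
  mem8 (tm0 (tm0 p q s p q s) (tm1 p q s p q s) (tm2 p q s p q s) x y z)
    (tm1 (tm0 p q s p q s) (tm1 p q s p q s) (tm2 p q s p q s) x y z)
    (tm2 (tm0 p q s p q s) (tm1 p q s p q s) (tm2 p q s p q s) x y z) = true

theorem chk8_1 : chk8 1 0 0 := by unfold chk8; decide +kernel
theorem chk8_2 : chk8 1 4 0 := by unfold chk8; decide +kernel
theorem chk8_3 : chk8 7 7 1 := by unfold chk8; decide +kernel

theorem mem8_int (u v w : ℤ) (h : mem8 u v w = true) :
    maskS8.testBit ((u % 8 + 8*(v%8)+64*(w%8)).toNat) = true := by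
  unfold mem8 at h
  convert h using 2
  have h1 := ZMod.val_intCast (n := 8) u
  have h2 := ZMod.val_intCast (n := 8) v
  have h3 := ZMod.val_intCast (n := 8) w
  push_cast at h1 h2 h3
  rw [← h1, ← h2, ← h3]
  omega

theorem sq_odd8 (d : ℤ) (hd : Odd d) : ((d:ZMod 8))^2 = 1 := by
  obtain ⟨k, rfl⟩ := hd
  push_cast
  generalize (k : ZMod 8) = m
  revert m
  decide

theorem mod8_cond (c d e p k1 k2 a0 a1 a2 : ℤ) (hd : Odd d) (hcd : d^2 = c^3-18*c*e^4-72*e^6)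
    (A : d^2*a0 = tm0 (tm0 p k1 k2 p k1 k2) (tm1 p k1 k2 p k1 k2) (tm2 p k1 k2 p k1 k2)
        (c^2-18*e^4) (c*e^2) (e^4) ∧
      d^2*a1 = tm1 (tm0 p k1 k2 p k1 k2) (tm1 p k1 k2 p k1 k2) (tm2 p k1 k2 p k1 k2)
        (c^2-18*e^4) (c*e^2) (e^4) ∧
      d^2*a2 = tm2 (tm0 p k1 k2 p k1 k2) (tm1 p k1 k2 p k1 k2) (tm2 p k1 k2 p k1 k2)
        (c^2-18*e^4) (c*e^2) (e^4)) :
    maskS8.testBit ((a0 % 8 + 8*(a1%8)+64*(a2%8)).toNat) = true := by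
  apply mem8_int
  have hd8 := sq_odd8 d hd
  obtain ⟨A0, A1, A2⟩ := A
  have A0' := congrArg (Int.cast : ℤ → ZMod 8) A0
  have A1' := congrArg (Int.cast : ℤ → ZMod 8) A1
  have A2' := congrArg (Int.cast : ℤ → ZMod 8) A2
  have hx := congrArg (Int.cast : ℤ → ZMod 8) hcd
  rw [Int.cast_mul, Int.cast_pow, hd8, one_mul] at A0' A1' A2'
  rw [Int.cast_pow, hd8] at hx
  have hx' := xi8 c e (by rw [hx]; push_cast; ring)
  rw [A0', A1', A2']
  unfold tm0 tm1 tm2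
  push_cast
  have gen : ∀ x y z : ZMod 8, chk8 x y z → (c:ZMod 8)^2-18*e^4 = x → (c:ZMod 8)*e^2 = y →
      (e:ZMod 8)^4 = z → _ := fun x y z h hx hy hz => by
    have := h p k1 k2
    rw [← hx, ← hy, ← hz] at this
    exact this
  rcases hx' with ⟨h1, h2, h3⟩ | ⟨h1, h2, h3⟩ | ⟨h1, h2, h3⟩
  · exact gen _ _ _ chk8_1 h1 h2 h3
  · exact gen _ _ _ chk8_2 h1 h2 h3
  · exact gen _ _ _ chk8_3 h1 h2 h3

theorem xi_square (c d e : ℤ) (hce : IsCoprime c e) (hd : Odd d)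
    (hcd : d^2 = c^3-18*c*e^4-72*e^6) : Sq3 c e := by
  obtain ⟨r, hr, hr1, hr2⟩ := exists_root
  have hd0 : d ≠ 0 := by rintro rfl; exact absurd hd (by decide)
  obtain ⟨p, k1, k2, a0, a1, a2, hne, ⟨B0, B1, B2⟩, A, H1, H2, H3⟩ :=
    tau_bounds r hr hr1 hr2 c d e hce hd0 hcd
  obtain ⟨b1, b2, b3, b4, b5, b6, b7, b8⟩ := tau_int_bounds r hr1 hr2 a0 a1 a2 H1 H2 H3
  have hm := mod8_cond c d e p k1 k2 a0 a1 a2 hd hcd A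
  have hk : ∃ k, tnrm a0 a1 a2 = k^2 := by
    have h1 : tnrm a0 a1 a2 * d^2 = (tnrm p k1 k2)^2 := by
      have hxi : tnrm c (-e^2) 0 = d^2 := by
        rw [tnrm_xi, hcd]; ring
      rw [← hxi, ← tnrm_mul, ← B0, ← B1, ← B2, tnrm_mul, sq]
    have h2 : d^2 ∣ (tnrm p k1 k2)^2 := ⟨_, by rw [← h1]; ring⟩
    obtain ⟨k, hk⟩ := (Int.pow_dvd_pow_iff two_ne_zero).1 h2
    refine ⟨k, ?_⟩
    rw [hk] at h1
    have : d^2 ≠ 0 := pow_ne_zero _ hd0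
    apply mul_right_cancel₀ this
    rw [h1]; ring
  have hmem := enum_tau a0 a1 a2 b1 b2 b3 b4 b5 b6 b7 b8 hm hk
  have hrl : 30.9432 < r^2 := by nlinarith
  have hru : r^2 < 30.9435 := by nlinarith
  clear hm hk b1 b2 b3 b4 b5 b6 b7 b8 A
  simp only [listTau, List.mem_cons, Prod.mk.injEq, List.not_mem_nil, or_false] at hmem
  rcases hmem with ⟨rfl, rfl, rfl⟩ | ⟨rfl, rfl, rfl⟩ | ⟨rfl, rfl, rfl⟩ | ⟨rfl, rfl, rfl⟩ | ⟨rfl, rfl, rfl⟩ | ⟨rfl, rfl, rfl⟩ | ⟨rfl, rfl, rfl⟩ | ⟨rfl, rfl, rfl⟩ | ⟨rfl, rfl, rfl⟩ | ⟨rfl, rfl, rfl⟩ | ⟨rfl, rfl, rfl⟩ | ⟨rfl, rfl, rfl⟩ | ⟨rfl, rfl, rfl⟩ | ⟨rfl, rfl, rfl⟩ | ⟨rfl, rfl, rfl⟩ | ⟨rfl, rfl, rfl⟩ | ⟨rfl, rfl, rfl⟩ | ⟨rfl, rfl, rfl⟩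
  · exact sq_case (0) (1/24) (0) (36) (8) (-2) p k1 k2 c e (by norm_num [tm0, tm1, tm2]) (by norm_num [tm0, tm1, tm2]) (by norm_num [tm0, tm1, tm2]) B0 B1 B2
  · exfalso
    push_cast at H3
    nlinarith [hrl, hru, hr1, hr2]
  · exact sq_case (1/10) (1/30) (1/60) (-12) (8) (-1) p k1 k2 c e (by norm_num [tm0, tm1, tm2]) (by norm_num [tm0, tm1, tm2]) (by norm_num [tm0, tm1, tm2]) B0 B1 B2
  · exact (zero_case p k1 k2 c e B0 B1 B2 hne).elim
  · exact sq_case (1) (0) (0) (1) (0) (0) p k1 k2 c e (by norm_num [tm0, tm1, tm2]) (by norm_num [tm0, tm1, tm2]) (by norm_num [tm0, tm1, tm2]) B0 B1 B2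
  · exact sq_case (1/2) (0) (0) (4) (0) (0) p k1 k2 c e (by norm_num [tm0, tm1, tm2]) (by norm_num [tm0, tm1, tm2]) (by norm_num [tm0, tm1, tm2]) B0 B1 B2
  · exact sq_case (1/3) (0) (0) (9) (0) (0) p k1 k2 c e (by norm_num [tm0, tm1, tm2]) (by norm_num [tm0, tm1, tm2]) (by norm_num [tm0, tm1, tm2]) B0 B1 B2
  · exact sq_case (1/4) (0) (0) (16) (0) (0) p k1 k2 c e (by norm_num [tm0, tm1, tm2]) (by norm_num [tm0, tm1, tm2]) (by norm_num [tm0, tm1, tm2]) B0 B1 B2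
  · exact sq_case (1/5) (0) (0) (25) (0) (0) p k1 k2 c e (by norm_num [tm0, tm1, tm2]) (by norm_num [tm0, tm1, tm2]) (by norm_num [tm0, tm1, tm2]) B0 B1 B2
  · exact sq_case (7/37) (5/37) (1/37) (25) (-10) (1) p k1 k2 c e (by norm_num [tm0, tm1, tm2]) (by norm_num [tm0, tm1, tm2]) (by norm_num [tm0, tm1, tm2]) B0 B1 B2
  · exact sq_case (-1/40) (1/20) (1/80) (16) (-8) (1) p k1 k2 c e (by norm_num [tm0, tm1, tm2]) (by norm_num [tm0, tm1, tm2]) (by norm_num [tm0, tm1, tm2]) B0 B1 B2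
  · exact sq_case (-1/11) (1/33) (1/99) (9) (-6) (1) p k1 k2 c e (by norm_num [tm0, tm1, tm2]) (by norm_num [tm0, tm1, tm2]) (by norm_num [tm0, tm1, tm2]) B0 B1 B2
  · exact (case107 p k1 k2 c e hce B0 B1 B2).elim
  · exact sq_case (-7/50) (1/50) (1/100) (4) (-4) (1) p k1 k2 c e (by norm_num [tm0, tm1, tm2]) (by norm_num [tm0, tm1, tm2]) (by norm_num [tm0, tm1, tm2]) B0 B1 B2
  · exact sq_case (-17/89) (1/89) (1/89) (1) (-2) (1) p k1 k2 c e (by norm_num [tm0, tm1, tm2]) (by norm_num [tm0, tm1, tm2]) (by norm_num [tm0, tm1, tm2]) B0 B1 B2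
  · exact (case5 p k1 k2 c e hce B0 B1 B2).elim
  · exact sq_case (1/5) (1/15) (0) (-39) (2) (1) p k1 k2 c e (by norm_num [tm0, tm1, tm2]) (by norm_num [tm0, tm1, tm2]) (by norm_num [tm0, tm1, tm2]) B0 B1 B2
  · exact sq_case (7/44) (1/33) (-1/264) (-48) (-4) (3) p k1 k2 c e (by norm_num [tm0, tm1, tm2]) (by norm_num [tm0, tm1, tm2]) (by norm_num [tm0, tm1, tm2]) B0 B1 B2

theorem halve (c e : ℤ) (he : e ≠ 0) (h : Sq3 c e) : ∃ x y : ℚ, y ≠ 0 ∧ y^2 = x^3-18*x-72 ∧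
    (c:ℚ)/e^2 = ((3*x^2-18)/(2*y))^2-2*x := by
  obtain ⟨u, v, w, h0, h1, h2⟩ := h
  have heq : (e:ℚ) ≠ 0 := by exact_mod_cast he
  have hw : w ≠ 0 := by
    rintro rfl
    have hv : v = 0 := by
      have : v^2 = 0 := by linarith
      simpa using this
    subst hv
    have : (e:ℚ)^2 = 0 := by linarith
    simp at this
    exact he this
  obtain ⟨x, hx⟩ : ∃ x, x = v/w := ⟨_, rfl⟩
  have hv : v = x*w := by rw [hx]; field_simp
  subst hv
  have hu : u = -w*(x^2+18)/2 := by
    apply mul_left_cancel₀ hw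
    linear_combination h2/2
  subst hu
  have hy2 : (e:ℚ)^2 = w^2*(x^3-18*x-72) := by linarith [h1]
  have hf : x^3-18*x-72 ≠ 0 := no_rat_root x
  refine ⟨x, e/w, div_ne_zero heq hw, ?_, ?_⟩
  · rw [div_pow, hy2]; field_simp
  · rw [← h0]
    have : ((3*x^2-18)/(2*((e:ℚ)/w)))^2 = (3*x^2-18)^2*w^2/(4*e^2) := by field_simp; ring
    rw [this, hy2]
    obtain ⟨F, hF⟩ : ∃ F, F = x^3-18*x-72 := ⟨_, rfl⟩
    rw [← hF] at hf ⊢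
    field_simp
    rw [hF]
    ring

theorem partD (c d e : ℤ) (hce : IsCoprime c e) (he : e ≠ 0) (hd : Odd d)
    (hcd : d^2 = c^3-18*c*e^4-72*e^6) : ∃ x y : ℚ, y ≠ 0 ∧ y^2 = x^3-18*x-72 ∧
    (c:ℚ)/e^2 = ((3*x^2-18)/(2*y))^2-2*x := halve c e he (xi_square c d e hce hd hcd)


theorem coords (X Y : ℚ) (h : Y^2 = X^3-18*X-72) : ∃ c d e : ℤ, 0 < e ∧ IsCoprime c e ∧
    X = c/e^2 ∧ Y = d/e^3 ∧ d^2 = c^3-18*c*e^4-72*e^6 := by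
  obtain ⟨n, hn⟩ : ∃ n, n = X.num := ⟨_, rfl⟩
  obtain ⟨q, hq⟩ : ∃ q : ℤ, q = X.den := ⟨_, rfl⟩
  have hq0 : 0 < q := by rw [hq]; exact_mod_cast X.den_pos
  have hq0' : (q:ℚ) ≠ 0 := by exact_mod_cast hq0.ne'
  have hX : X = n/q := by rw [hn, hq]; exact_mod_cast (Rat.num_div_den X).symm
  have hcop : IsCoprime n q := by
    rw [hn, hq, Int.isCoprime_iff_nat_coprime]; simpa using X.reduced
  have hm : (Y*q^2)^2 = ((q*(n^3-18*n*q^2-72*q^3) : ℤ) : ℚ) := by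
    rw [mul_pow, h, hX]; push_cast; field_simp
  obtain ⟨m, hm'⟩ : ∃ m : ℤ, Y*q^2 = m := by
    have hi : IsIntegral ℤ (Y*(q:ℚ)^2) := by
      apply IsIntegral.of_pow (n := 2) (by norm_num)
      rw [hm]; exact isIntegral_algebraMap
    obtain ⟨m, hm⟩ := IsIntegrallyClosed.isIntegral_iff.1 hi
    exact ⟨m, by simpa using hm.symm⟩
  have hm2 : q*(n^3-18*n*q^2-72*q^3) = m^2 := by
    rw [hm'] at hm; exact_mod_cast hm.symm
  have hc2 : IsCoprime q (n^3-18*n*q^2-72*q^3) := by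
    have : n^3-18*n*q^2-72*q^3 = n^3 + q*(-18*n*q-72*q^2) := by ring
    rw [this]
    exact (IsCoprime.add_mul_left_right (hcop.symm.pow_right) _)
  obtain ⟨e0, he0⟩ := Int.sq_of_isCoprime hc2 hm2
  have he : q = e0^2 := by
    rcases he0 with h | h
    · exact h
    · nlinarith [sq_nonneg e0]
  obtain ⟨e, hepos, he⟩ : ∃ e : ℤ, 0 < e ∧ q = e^2 := by
    refine ⟨|e0|, abs_pos.2 ?_, by rw [sq_abs]; exact he⟩
    rintro rfl; simp at he; omega
  have hdv : e ∣ m := by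
    rw [← Int.pow_dvd_pow_iff two_ne_zero, ← hm2, he]; exact Dvd.intro _ rfl
  obtain ⟨d, hd⟩ := hdv
  have he' : (e:ℚ) ≠ 0 := by exact_mod_cast hepos.ne'
  refine ⟨n, d, e, hepos, ?_, ?_, ?_, ?_⟩
  · rw [he] at hcop
    exact (IsCoprime.pow_right_iff (by norm_num)).1 hcop
  · rw [hX, he]; push_cast; rfl
  · rw [he, hd] at hm'
    push_cast at hm'
    field_simp
    apply mul_left_cancel₀ he'
    linear_combination hm'
  · rw [he, hd] at hm2
    apply mul_left_cancel₀ (pow_ne_zero 2 hepos.ne')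
    linear_combination -hm2

def sqTest2N (n : ℕ) : Bool := sqTestN n && sqT 107287 17 n && sqT 199411 19 n &&
  sqT 332473075 29 n && sqT 303908791 31 n

def sqTest2 (z : ℤ) : Bool := match z with
  | Int.ofNat n => forceN n sqTest2N
  | Int.negSucc _ => false

theorem sqTest2_sq (k : ℤ) : sqTest2 (k^2) = true := by
  have h0 := sqTest_sq k
  have : k^2 = Int.ofNat (k.natAbs^2) := by
    rw [← Int.natAbs_sq]; simp
  rw [this] at h0 ⊢
  change forceN _ _ = true at h0
  change forceN _ _ = true
  rw [forceN_eq] at *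
  unfold sqTest2N
  rw [h0]
  simp only [Bool.and_eq_true]
  refine ⟨⟨⟨⟨trivial, ?_⟩, ?_⟩, ?_⟩, ?_⟩ <;> exact sqT_sq _ _ (by norm_num) (by decide) _

def chkBase (cn e : ℕ) : Bool := !(Nat.beq (Nat.gcd cn e) 1) ||
  !(sqTest2 ((cn:ℤ)^3-18*cn*e^4-72*e^6)) || (cn == 6 && e == 1) || (cn == 177 && e == 2)

set_option maxRecDepth 100000 in
theorem allBase : (allRange 1 14 fun e => allRange 0 205 fun cn => chkBase cn e) = true := by
  decide +kernel

theorem base_points (c d e : ℤ) (he : 0 < e) (hce : IsCoprime c e)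
    (hcd : d^2 = c^3-18*c*e^4-72*e^6) (h1 : |c| ≤ 204) (h2 : e^2 ≤ 204) :
    (c = 6 ∧ e = 1) ∨ (c = 177 ∧ e = 2) := by
  have hc0 : 0 ≤ c := by
    by_contra hc
    push Not at hc
    have he6 : 0 < e^2 := by positivity
    obtain ⟨t, ht⟩ : ∃ t, t = e^2 := ⟨_, rfl⟩
    have : d^2 = c^3-18*c*t^2-72*t^3 := by rw [hcd, ht]; ring
    rw [← ht] at he6
    obtain ⟨a, ha⟩ : ∃ a, a = -c := ⟨_, rfl⟩
    have hca : c = -a := by omega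
    subst hca
    have ha : 0 < a := by omega
    nlinarith [sq_nonneg d, mul_nonneg (by linarith : 0 ≤ a + 4*t) (sq_nonneg (a-2*t)), mul_pos ha (mul_pos he6 he6), pow_pos he6 3, mul_nonneg ha.le (sq_nonneg (a-3*t)), pow_pos ha 3]
  have he14 : e < 15 := by nlinarith
  have hc : c ≤ 204 := (abs_le.1 h1).2
  obtain ⟨cn, rfl⟩ := Int.eq_ofNat_of_zero_le hc0
  obtain ⟨en, rfl⟩ := Int.eq_ofNat_of_zero_le he.le
  have h := allRange_spec _ _ _ (allRange_spec _ _ _ allBase en (by omega) (by omega)) cn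
    (by omega) (by omega)
  unfold chkBase at h
  rw [← hcd, sqTest2_sq] at h
  have hg : Nat.gcd cn en = 1 := by
    rw [Int.isCoprime_iff_nat_coprime] at hce; simpa using hce
  rw [hg] at h
  simp at h
  omega

theorem dbl_real (a b : ℝ) (hb : 0 < b) (M : ℝ) (h1 : |a^4+36*a^2*b^2+576*a*b^3+324*b^4| ≤ M)
    (h2 : |4*b*(a^3-18*a*b^2-72*b^3)| ≤ M) : 43*a^4 ≤ 100*M ∧ 43*b^4 ≤ 100*M := by
  have h1' := abs_le.1 h1
  have h2' := abs_le.1 h2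
  rcases le_total |a| b with hab | hab
  · have hab' := abs_le.1 hab
    have k1 : a^4 ≤ b^4 := by
      have := pow_le_pow_left₀ (abs_nonneg a) hab 4
      rwa [(by decide : Even 4).pow_abs] at this
    have k2 : b*(a^3-18*a*b^2-72*b^3) ≤ -b^4 := by
      have : a^3-18*a*b^2-72*b^3 ≤ -b^3 := by
        nlinarith [pow_pos hb 3, mul_nonneg (by linarith : 0 ≤ b - a) (mul_pos hb hb).le, mul_nonneg (by linarith : 0 ≤ b + a) (mul_pos hb hb).le, mul_nonneg (by linarith : 0 ≤ b - a) (sq_nonneg (a)), mul_nonneg (by linarith : 0 ≤ b - a) (by linarith : 0 ≤ b + a)]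
      nlinarith
    have := pow_pos hb 4
    constructor <;> nlinarith
  · have k1 : b^4 ≤ a^4 := by
      have := pow_le_pow_left₀ hb.le hab 4
      rwa [(by decide : Even 4).pow_abs] at this
    suffices 43*a^4 ≤ 100*M from ⟨this, by linarith⟩
    rcases le_total 0 a with ha | ha
    · have : 0 ≤ 36*a^2*b^2+576*a*b^3+324*b^4 := by positivity
      have : 0 ≤ a^4 := by positivity
      nlinarith
    · obtain ⟨α, hα⟩ : ∃ α, α = -a := ⟨_, rfl⟩
      have hca : a = -α := by linarith
      subst hca
      have ha : 0 ≤ α := by linarith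
      rw [abs_neg, abs_of_nonneg ha] at hab
      rcases le_total (100*b) (13*α) with hs | hs
      · obtain ⟨s, hs'⟩ : ∃ s, s = 13*α - 100*b := ⟨_, rfl⟩
        have hs0 : 0 ≤ s := by linarith
        have hα' : α = (s+100*b)/13 := by linarith
        have : 43*α^4 ≤ 100*(α^4+36*α^2*b^2-576*α*b^3+324*b^4) := by
          rw [hα']
          have e1 : 0 ≤ s^4 := by positivity
          have e2 : 0 ≤ s^3*b := by positivity
          have e3 : 0 ≤ s^2*b^2 := by positivity
          have e4 : 0 ≤ s*b^3 := by positivity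
          have e5 : 0 ≤ b^4 := by positivity
          nlinarith
        nlinarith
      · have k3 : 5/6*α^3 ≤ α^3-18*α*b^2+72*b^3 := by
          nlinarith [mul_nonneg (by linarith : 0 ≤ α + 12*b) (sq_nonneg (α-6*b))]
        have k4 : b*(5/6*α^3) ≤ b*(α^3-18*α*b^2+72*b^3) := mul_le_mul_of_nonneg_left k3 hb.le
        have k5 : 13*α*α^3 ≤ 100*b*α^3 := mul_le_mul_of_nonneg_right hs (by positivity)
        have : 0 ≤ α^4 := by positivity
        nlinarith


theorem f1_mod8 : ∀ a b : ZMod 8, a^4+36*a^2*b^2+576*a*b^3+324*b^4 = 0 → 4*a = 0 ∧ 4*b = 0 := by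
  decide +kernel
theorem f_mod27 : ∀ a b : ZMod 27, a^4+36*a^2*b^2+576*a*b^3+324*b^4 = 0 →
    4*b*(a^3-18*a*b^2-72*b^3) = 0 → 9*a = 0 ∧ 9*b = 0 := by
  decide +kernel

theorem zmod_dvd (n : ℕ) (p k : ℕ) (hk : 0 < k) (hn : n = k*p) (a : ℤ)
    (h : (k:ZMod n)*(a:ZMod n) = 0) : (p:ℤ) ∣ a := by
  have : (((k:ℤ)*a : ℤ) : ZMod n) = 0 := by push_cast; exact h
  rw [ZMod.intCast_zmod_eq_zero_iff_dvd] at this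
  subst hn
  push_cast at this
  exact Int.dvd_of_mul_dvd_mul_left (by exact_mod_cast hk.ne') this

theorem gcd_bound (a b g : ℤ) (hab : IsCoprime a b)
    (h1 : g ∣ a^4+36*a^2*b^2+576*a*b^3+324*b^4) (h2 : g ∣ 4*b*(a^3-18*a*b^2-72*b^3)) :
    |g| ≤ 180 := by
  have r1 : g ∣ 466560*b^7 := by
    have : (466560:ℤ)*b^7 = (12*a^2*b-288*b^3)*(a^4+36*a^2*b^2+576*a*b^3+324*b^4)
      - (3*a^3+90*a*b^2+1944*b^3)*(4*b*(a^3-18*a*b^2-72*b^3)) := by ring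
    rw [this]
    exact dvd_sub (h1.mul_left _) (h2.mul_left _)
  have r2 : g ∣ 466560*a^7 := by
    have : (466560:ℤ)*a^7 = (466560*a^3-4*324*(-72)*a^2*b+4*(-18)*(3*(-5832)+22*5184)*a*b^2
        +12*(-72)*((-5832)+8*5184)*b^3)*(a^4+36*a^2*b^2+576*a*b^3+324*b^4)
      + (324*(-72)*a^3+(-18)*(5*(-5832)+32*5184)*a^2*b+2*(-72)*(13*(-5832)+96*5184)*a*b^2
        -3*324*((-5832)+8*5184)*b^3)*(4*b*(a^3-18*a*b^2-72*b^3)) := by ring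
    rw [this]
    exact dvd_add (h1.mul_left _) (h2.mul_left _)
  have r : g ∣ 466560 := by
    obtain ⟨u, v, huv⟩ : IsCoprime (a^7) (b^7) := hab.pow
    have : (466560:ℤ) = u*(466560*a^7) + v*(466560*b^7) := by linear_combination -466560*huv
    rw [this]
    exact dvd_add (r2.mul_left _) (r1.mul_left _)
  have n8 : ¬ (8:ℤ) ∣ g := by
    intro h
    have h' := h.trans h1
    rw [show (8:ℤ) = ((8:ℕ):ℤ) by norm_num, ← ZMod.intCast_zmod_eq_zero_iff_dvd] at h'
    push_cast at h'
    obtain ⟨q1, q2⟩ := f1_mod8 _ _ h'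
    have d1 := zmod_dvd 8 2 4 (by norm_num) (by norm_num) a (by exact_mod_cast q1)
    have d2 := zmod_dvd 8 2 4 (by norm_num) (by norm_num) b (by exact_mod_cast q2)
    exact Int.prime_two.not_unit (hab.isUnit_of_dvd' d1 d2)
  have n27 : ¬ (27:ℤ) ∣ g := by
    intro h
    have h' := h.trans h1
    have h'' := h.trans h2
    rw [show (27:ℤ) = ((27:ℕ):ℤ) by norm_num, ← ZMod.intCast_zmod_eq_zero_iff_dvd] at h' h''
    push_cast at h' h''
    obtain ⟨q1, q2⟩ := f_mod27 _ _ h' h''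
    have d1 := zmod_dvd 27 3 9 (by norm_num) (by norm_num) a (by exact_mod_cast q1)
    have d2 := zmod_dvd 27 3 9 (by norm_num) (by norm_num) b (by exact_mod_cast q2)
    exact Int.prime_three.not_unit (hab.isUnit_of_dvd' d1 d2)
  obtain ⟨n, hn⟩ : ∃ n, n = g.natAbs := ⟨_, rfl⟩
  have rn : n ∣ 2^7*(3^6*5) := by
    rw [hn]; exact Int.natAbs_dvd_natAbs.2 r
  have n8' : ¬ 8 ∣ n := by rw [hn]; intro h; exact n8 (Int.natCast_dvd.2 h)
  have n27' : ¬ 27 ∣ n := by rw [hn]; intro h; exact n27 (Int.natCast_dvd.2 h)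
  have : n ≤ 180 := by
    obtain ⟨x, y0, hx, hy0, rfl⟩ := (Nat.dvd_mul).1 rn
    obtain ⟨y, z, hy, hz, rfl⟩ := (Nat.dvd_mul).1 hy0
    obtain ⟨i, hi, rfl⟩ := (Nat.dvd_prime_pow Nat.prime_two).1 hx
    obtain ⟨j, hj, rfl⟩ := (Nat.dvd_prime_pow Nat.prime_three).1 hy
    have hi2 : i ≤ 2 := by
      by_contra h
      exact n8' ((pow_dvd_pow 2 (by omega : 3 ≤ i)).trans (Dvd.intro _ rfl))
    have hj2 : j ≤ 2 := by
      by_contra h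
      exact n27' (((pow_dvd_pow 3 (by omega : 3 ≤ j)).trans (Dvd.intro _ rfl)).trans (Dvd.intro_left _ rfl))
    have hz5 : z ≤ 5 := Nat.le_of_dvd (by norm_num) hz
    calc 2^i*(3^j*z) ≤ 2^2*(3^2*5) := by gcongr <;> norm_num
      _ = 180 := by norm_num
  rw [Int.abs_eq_natAbs, ← hn]; exact_mod_cast this

def hgt (x : ℚ) : ℤ := max |x.num| x.den

theorem hgt_eq (c e : ℤ) (he : 0 < e) (h : IsCoprime c e) : hgt ((c:ℚ)/e) = max |c| e := by
  have hc : Nat.Coprime c.natAbs e.natAbs := by rwa [Int.isCoprime_iff_nat_coprime] at h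
  unfold hgt
  rw [Rat.num_div_eq_of_coprime he hc, Rat.den_div_eq_of_coprime he hc]

theorem dbl_height (x y : ℚ) (hy : y ≠ 0) (hxy : y^2 = x^3-18*x-72) (c e : ℤ) (he : 0 < e)
    (hce : IsCoprime c e) (h : (c:ℚ)/e = ((3*x^2-18)/(2*y))^2-2*x) :
    43*(hgt x)^4 ≤ 18000 * max |c| e := by
  obtain ⟨a, ha⟩ : ∃ n, n = x.num := ⟨_, rfl⟩
  obtain ⟨b, hb⟩ : ∃ q : ℤ, q = x.den := ⟨_, rfl⟩
  have hb0 : 0 < b := by rw [hb]; exact_mod_cast x.den_pos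
  have hb0' : (b:ℚ) ≠ 0 := by exact_mod_cast hb0.ne'
  have hX : x = a/b := by rw [ha, hb]; exact_mod_cast (Rat.num_div_den x).symm
  have hcop : IsCoprime a b := by
    rw [ha, hb, Int.isCoprime_iff_nat_coprime]; simpa using x.reduced
  have hh : hgt x = max |a| b := by rw [hX]; exact hgt_eq a b hb0 hcop
  have heq : (e:ℚ) ≠ 0 := by exact_mod_cast he.ne'
  have key : c*(4*b*(a^3-18*a*b^2-72*b^3)) = e*(a^4+36*a^2*b^2+576*a*b^3+324*b^4) := by
    have e1 : ((3*x^2-18)/(2*y))^2 = (3*x^2-18)^2/(4*y^2) := by rw [div_pow, mul_pow]; norm_num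
    rw [e1, hxy] at h
    have hF : x^3-18*x-72 ≠ 0 := no_rat_root x
    have e2 : (c:ℚ)*(4*(x^3-18*x-72)) = e*(x^4+36*x^2+576*x+324) := by
      obtain ⟨F, hF'⟩ : ∃ F, F = x^3-18*x-72 := ⟨_, rfl⟩
      rw [← hF'] at hF h ⊢
      field_simp at h
      rw [← mul_assoc, h, hF']
      ring
    rw [hX] at e2
    field_simp at e2
    have : (c:ℚ)*(4*b*(a^3-18*a*b^2-72*b^3)) = e*(a^4+36*a^2*b^2+576*a*b^3+324*b^4) := by
      linear_combination e2
    exact_mod_cast this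
  obtain ⟨g, hg⟩ : e ∣ 4*b*(a^3-18*a*b^2-72*b^3) :=
    hce.symm.dvd_of_dvd_mul_left (Dvd.intro _ key.symm)
  have hg2 : a^4+36*a^2*b^2+576*a*b^3+324*b^4 = c*g := by
    rw [hg] at key
    apply mul_left_cancel₀ he.ne'
    linear_combination -key
  have hgb := gcd_bound a b g hcop (hg2 ▸ Dvd.intro_left _ rfl) (hg ▸ Dvd.intro_left _ rfl)
  obtain ⟨m, hm⟩ : ∃ m, m = max |c| e := ⟨_, rfl⟩
  have m1 : |c| ≤ m := hm ▸ le_max_left _ _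
  have m2 : e ≤ m := hm ▸ le_max_right _ _
  have b1 : |a^4+36*a^2*b^2+576*a*b^3+324*b^4| ≤ 180*m := by
    rw [hg2, abs_mul]
    nlinarith [abs_nonneg c, abs_nonneg g]
  have b2 : |4*b*(a^3-18*a*b^2-72*b^3)| ≤ 180*m := by
    rw [hg, abs_mul, abs_of_pos he]
    nlinarith [abs_nonneg c, abs_nonneg g]
  have := dbl_real a b (by exact_mod_cast hb0) (180*m) (by exact_mod_cast b1) (by exact_mod_cast b2)
  have k1 : 43*a^4 ≤ 100*(180*m) := by exact_mod_cast this.1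
  have k2 : 43*b^4 ≤ 100*(180*m) := by exact_mod_cast this.2
  rw [hh, ← hm]
  rcases max_choice |a| b with h | h <;> rw [h]
  · rw [(by decide : Even 4).pow_abs]; linarith
  · linarith

theorem hbound (c' d' e c2 e2 m : ℤ) (he : 0 < e) (hcd' : d'^2 = 2*c'^3-9*c'*e^4-18*e^6)
    (m1 : |2*c'| ≤ m) (m2 : e^2 ≤ m) (l1 : |c2| ≤ |3*(2*c'^2+3*c'*e^2-2*d'*e-21*e^4)|)
    (l2 : e2^2 ≤ (c'-3*e^2)^2) : max |c2| (e2^2) ≤ 98*m^2 := by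
  have m1' := abs_le.1 m1
  have ht : 0 < e^2 := by positivity
  have hde : |200*(d'*e)| ≤ 954*m^2 := by
    apply abs_le_of_sq_le_sq _ (by positivity)
    have : (200*(d'*e))^2 = 10000*((2*c')^3-18*(2*c')*(e^2)^2-72*(e^2)^3)*e^2 := by
      linear_combination 40000*e^2*hcd'
    rw [this]
    generalize 2*c' = c at m1'
    generalize e^2 = t at ht m2
    have hm0 : 0 < m := by linarith
    have k1 : c^3 ≤ m^3 := by
      exact (Odd.pow_le_pow (n := 3) (by decide)).2 m1'.2
    have k2 : t^2 ≤ m^2 := by nlinarith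
    have k3 : -c*t^2 ≤ m*m^2 := by
      have : -c*t^2 ≤ m*t^2 := by nlinarith [sq_nonneg t]
      nlinarith
    have k4 : c^3-18*c*t^2-72*t^3 ≤ 91*m^3 := by nlinarith [pow_pos ht 3, pow_pos hm0 3]
    have k5 : (c^3-18*c*t^2-72*t^3)*t ≤ 91*m^3*m := by
      have : (c^3-18*c*t^2-72*t^3)*t ≤ 91*m^3*t := by nlinarith
      have : 91*m^3*t ≤ 91*m^3*m := by
        apply mul_le_mul_of_nonneg_left m2; positivity
      linarith
    nlinarith [pow_pos hm0 4]
  have hde' := abs_le.1 hde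
  have hm0 : 0 < m := by linarith
  obtain ⟨c, hc⟩ : ∃ c, c = 2*c' := ⟨_, rfl⟩
  obtain ⟨t, ht'⟩ : ∃ t, t = e^2 := ⟨_, rfl⟩
  have q1 : c^2 ≤ m^2 := by rw [hc]; nlinarith
  have q2 : t^2 ≤ m^2 := by rw [ht']; nlinarith
  have q3 : |c*t| ≤ m^2 := by
    rw [abs_mul, hc, ht', abs_of_pos ht, sq m]
    exact mul_le_mul m1 m2 ht.le hm0.le
  have q3' := abs_le.1 q3
  apply max_le
  · refine l1.trans ?_
    have : 3*(2*c'^2+3*c'*e^2-2*d'*e-21*e^4) = 3*(2*c'^2+3*c'*e^2-2*d'*e-21*e^4) := rfl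
    have e1 : 200*(3*(2*c'^2+3*c'*e^2-2*d'*e-21*e^4)) =
      300*c^2+900*(c*t)-6*(200*(d'*e))-12600*t^2 := by rw [hc, ht']; ring
    rw [abs_le]
    constructor <;> nlinarith [sq_nonneg c, sq_nonneg t]
  · refine l2.trans ?_
    have e1 : 4*(c'-3*e^2)^2 = c^2-12*(c*t)+36*t^2 := by rw [hc, ht']; ring
    nlinarith [sq_nonneg m]

/-- the bad case: translating by (6,6) gives a good point of controlled height -/
theorem bad_good (c d e c2 e2 : ℤ) (he : 0 < e) (hce : IsCoprime c e)
    (hcd : d^2 = c^3-18*c*e^4-72*e^6) (hd : Even d) (hc6 : c ≠ 6*e^2)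
    (he2 : 0 < e2) (hce2 : IsCoprime c2 e2)
    (h : c2*(c-6*e^2)^2 = (6*c^2+18*c*e^2-12*d*e-252*e^4)*e2^2) :
    Odd c2 ∧ max |c2| (e2^2) ≤ 98*(max |c| (e^2))^2 := by
  obtain ⟨d', rfl⟩ := hd.two_dvd
  have hceven : Even c := by
    by_contra hc
    have hc : Odd c := by simpa using hc
    have : Odd (c^3) := hc.pow
    have h2 : c^3 = 2*(2*d'^2+9*c*e^4+36*e^6) := by linear_combination -hcd
    rw [h2] at this
    exact (Int.not_even_iff_odd.2 this) (even_two_mul _)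
  obtain ⟨c', rfl⟩ := hceven.two_dvd
  have heo : Odd e := by
    by_contra hc
    have hc : Even e := by simpa using hc
    exact Int.prime_two.not_unit (hce.isUnit_of_dvd' (Dvd.intro _ rfl) hc.two_dvd)
  have hcd' : d'^2 = 2*c'^3-9*c'*e^4-18*e^6 := by linarith
  have h' : c2*(c'-3*e^2)^2 = 3*(2*c'^2+3*c'*e^2-2*d'*e-21*e^4)*e2^2 := by linarith
  have hne : c'-3*e^2 ≠ 0 := fun h => hc6 (by linarith)
  have hodd : Odd c2 := by
    by_contra hc2
    have hc2 : Even c2 := by simpa using hc2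
    have he2o : Odd e2 := by
      by_contra hc
      have hc : Even e2 := by simpa using hc
      exact Int.prime_two.not_unit (hce2.isUnit_of_dvd' hc2.two_dvd hc.two_dvd)
    rcases Int.even_or_odd c' with hc' | hc'
    · -- right side odd
      have h1 : Even (c2*(c'-3*e^2)^2) := hc2.mul_right _
      rw [h'] at h1
      have h2 : ¬ Even (3*(2*c'^2+3*c'*e^2-2*d'*e-21*e^4)*e2^2) := by
        apply Int.not_even_iff_odd.2
        obtain ⟨k, hk⟩ := hc'.two_dvd
        refine Odd.mul (Odd.mul (by decide) ?_) he2o.pow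
        have : 2*c'^2+3*c'*e^2-2*d'*e-21*e^4 = 2*(c'^2+3*k*e^2-d'*e) + (-21)*e^4 := by
          rw [hk]; ring
        rw [this]
        exact (even_two_mul _).add_odd (Odd.mul (by decide) heo.pow)
      exact h2 h1
    · have hall : ∀ c d e : ZMod 8, 4*c = 4 → 4*e = 4 → d^2 = 2*c^3-9*c*e^4-18*e^6 →
          (2*c^2+3*c*e^2-2*d*e-21*e^4 = 4 ∧ c-3*e^2=0) ∨ 2*c^2+3*c*e^2+2*d*e-21*e^4 = 4 := by
        decide +kernel
      have o4 : ∀ x : ℤ, Odd x → 4*(x:ZMod 8) = 4 := by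
        rintro x ⟨k, rfl⟩
        push_cast
        generalize (k:ZMod 8) = m
        revert m; decide
      have hcz := congrArg (Int.cast : ℤ → ZMod 8) hcd'
      push_cast at hcz
      rcases hall c' d' e (o4 _ hc') (o4 _ heo) hcz with ⟨q1, q2⟩ | q
      · have q1' : (8:ℤ) ∣ (2*c'^2+3*c'*e^2-2*d'*e-21*e^4) - 4 := by
          apply (ZMod.intCast_zmod_eq_zero_iff_dvd _ 8).1
          push_cast; rw [q1]; decide
        have q2' : (8:ℤ) ∣ c'-3*e^2 := by
          apply (ZMod.intCast_zmod_eq_zero_iff_dvd _ 8).1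
          push_cast; rw [q2]
        obtain ⟨u, hu⟩ := q1'
        obtain ⟨v, hv⟩ := q2'
        obtain ⟨w, hw⟩ := he2o
        rw [hv, show 2*c'^2+3*c'*e^2-2*d'*e-21*e^4 = 4+8*u by linarith, hw] at h'
        ring_nf at h'
        omega
      · obtain ⟨u, hu⟩ : (8:ℤ) ∣ (2*c'^2+3*c'*e^2+2*d'*e-21*e^4) - 4 := by
          apply (ZMod.intCast_zmod_eq_zero_iff_dvd _ 8).1
          push_cast; rw [q]; decide
        have h3 : c2*(2*c'^2+3*c'*e^2+2*d'*e-21*e^4)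
            = 3*((2*c'+3*e^2)^2+16*e^2*(c'+3*e^2))*e2^2 := by
          apply mul_left_cancel₀ (pow_ne_zero 2 hne)
          linear_combination (2*c'^2+3*c'*e^2+2*d'*e-21*e^4)*h' - 12*e^2*e2^2*hcd'
        have h1 : Even (c2*(2*c'^2+3*c'*e^2+2*d'*e-21*e^4)) := hc2.mul_right _
        rw [h3] at h1
        have h2 : ¬ Even (3*((2*c'+3*e^2)^2+16*e^2*(c'+3*e^2))*e2^2) := by
          apply Int.not_even_iff_odd.2
          refine Odd.mul (Odd.mul (by decide) ?_) he2o.pow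
          have : (2*c'+3*e^2)^2+16*e^2*(c'+3*e^2)
            = 2*(2*c'^2+6*c'*e^2+8*e^2*(c'+3*e^2)) + 9*e^4 := by ring
          rw [this]
          exact (even_two_mul _).add_odd (Odd.mul (by decide) heo.pow)
        exact h2 h1
  refine ⟨hodd, ?_⟩
  have hcop : IsCoprime c2 (e2^2) := hce2.pow_right
  have hN : c2 ∣ 3*(2*c'^2+3*c'*e^2-2*d'*e-21*e^4) :=
    hcop.dvd_of_dvd_mul_right (Dvd.intro _ h')
  have hD : e2^2 ∣ (c'-3*e^2)^2 :=
    hcop.symm.dvd_of_dvd_mul_left (Dvd.intro_left _ h'.symm)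
  have hDp : 0 < (c'-3*e^2)^2 := by positivity
  have hN0 : 3*(2*c'^2+3*c'*e^2-2*d'*e-21*e^4) ≠ 0 := by
    intro h0
    rw [h0, zero_mul] at h'
    rcases mul_eq_zero.1 h' with h | h
    · rw [h] at hodd; exact absurd hodd (by decide)
    · exact hDp.ne' h
  have l1 : |c2| ≤ |3*(2*c'^2+3*c'*e^2-2*d'*e-21*e^4)| := by
    have := Int.le_of_dvd (abs_pos.2 hN0) ((abs_dvd_abs _ _).2 hN)
    exact this
  have l2 : e2^2 ≤ (c'-3*e^2)^2 := Int.le_of_dvd hDp hD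
  obtain ⟨m, hm⟩ : ∃ m, m = max |2*c'| (e^2) := ⟨_, rfl⟩
  have m1 : |2*c'| ≤ m := hm ▸ le_max_left _ _
  have m2 : e^2 ≤ m := hm ▸ le_max_right _ _
  rw [← hm]
  exact hbound c' d' e c2 e2 m he hcd' m1 m2 l1 l2


abbrev EC : WeierstrassCurve.Affine ℚ := (⟨0,0,0,-18,-72⟩ : WeierstrassCurve ℚ)

def IsPt (P : EC.Point) (X Y : ℚ) : Prop := ∃ h : EC.Nonsingular X Y, P = .some X Y h

theorem EC_eqn (X Y : ℚ) : EC.Equation X Y ↔ Y^2 = X^3-18*X-72 := by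
  rw [WeierstrassCurve.Affine.equation_iff]
  constructor <;> intro h <;> linear_combination h

theorem Y_ne (X Y : ℚ) (h : Y^2 = X^3-18*X-72) : Y ≠ 0 := by
  rintro rfl
  exact no_rat_root X (by linarith)

theorem IsPt.eqn {P : EC.Point} {X Y : ℚ} (h : IsPt P X Y) : Y^2 = X^3-18*X-72 := by
  obtain ⟨h, _⟩ := h
  exact (EC_eqn X Y).1 h.1

theorem IsPt.Yne {P : EC.Point} {X Y : ℚ} (h : IsPt P X Y) : Y ≠ 0 := Y_ne X Y h.eqn

theorem exists_pt (X Y : ℚ) (h : Y^2 = X^3-18*X-72) : ∃ P, IsPt P X Y := by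
  have hn : EC.Nonsingular X Y := by
    rw [WeierstrassCurve.Affine.nonsingular_iff]
    refine ⟨(EC_eqn X Y).2 h, Or.inr ?_⟩
    have := Y_ne X Y h
    simp
    intro h
    apply this
    linarith
  exact ⟨_, hn, rfl⟩

theorem zero_or_pt (P : EC.Point) : P = 0 ∨ ∃ X Y, IsPt P X Y := by
  cases P with
  | zero => left; rfl
  | some X Y h => right; exact ⟨X, Y, h, rfl⟩

theorem IsPt.ne_zero {P : EC.Point} {X Y : ℚ} (h : IsPt P X Y) : P ≠ 0 := by
  obtain ⟨h, rfl⟩ := h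
  exact WeierstrassCurve.Affine.Point.some_ne_zero h

theorem IsPt.eq_or {P Q : EC.Point} {X Y Y' : ℚ} (h : IsPt P X Y) (h' : IsPt Q X Y') :
    P = Q ∨ P = -Q := by
  obtain ⟨h, rfl⟩ := h
  obtain ⟨h', rfl⟩ := h'
  exact WeierstrassCurve.Affine.Point.X_eq_iff.1 rfl

theorem IsPt.unique {P Q : EC.Point} {X Y : ℚ} (h : IsPt P X Y) (h' : IsPt Q X Y) : P = Q := by
  obtain ⟨h, rfl⟩ := h
  obtain ⟨h', rfl⟩ := h'
  rfl

theorem IsPt.inj {P : EC.Point} {X Y X' Y' : ℚ} (h : IsPt P X Y) (h' : IsPt P X' Y') :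
    X = X' ∧ Y = Y' := by
  obtain ⟨h, rfl⟩ := h
  obtain ⟨h', e⟩ := h'
  simpa using e

theorem IsPt.neg {P : EC.Point} {X Y : ℚ} (h : IsPt P X Y) : IsPt (-P) X (-Y) := by
  obtain ⟨h, rfl⟩ := h
  rw [WeierstrassCurve.Affine.Point.neg_some]
  have e : EC.negY X Y = -Y := by simp [WeierstrassCurve.Affine.negY]
  have hn := (WeierstrassCurve.Affine.nonsingular_neg X Y).2 h
  refine ⟨by rw [e] at hn; exact hn, ?_⟩
  simp [e]

theorem IsPt.add {P Q : EC.Point} {X1 Y1 X2 Y2 : ℚ} (h1 : IsPt P X1 Y1) (h2 : IsPt Q X2 Y2)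
    (hx : X1 ≠ X2) (l : ℚ) (hl : l*(X1-X2) = Y1-Y2) :
    IsPt (P+Q) (l^2-X1-X2) (l*(X1-(l^2-X1-X2))-Y1) := by
  obtain ⟨h1, rfl⟩ := h1
  obtain ⟨h2, rfl⟩ := h2
  have hs : EC.slope X1 X2 Y1 Y2 = l := by
    rw [WeierstrassCurve.Affine.slope_of_X_ne hx]
    have : X1 - X2 ≠ 0 := sub_ne_zero.2 hx
    field_simp
    linarith
  rw [WeierstrassCurve.Affine.Point.add_of_X_ne hx]
  have ex : EC.addX X1 X2 (EC.slope X1 X2 Y1 Y2) = l^2-X1-X2 := by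
    rw [hs]; simp [WeierstrassCurve.Affine.addX]
  have ey : EC.addY X1 X2 Y1 (EC.slope X1 X2 Y1 Y2) = l*(X1-(l^2-X1-X2))-Y1 := by
    rw [hs]; simp [WeierstrassCurve.Affine.addY, WeierstrassCurve.Affine.negY,
      WeierstrassCurve.Affine.negAddY, WeierstrassCurve.Affine.addX]; ring
  have hn := WeierstrassCurve.Affine.nonsingular_add h1 h2 (fun hh => hx hh.1)
  refine ⟨by rw [ex, ey] at hn; exact hn, ?_⟩
  simp only [ex, ey]

theorem IsPt.dbl {P : EC.Point} {X1 Y1 : ℚ} (h1 : IsPt P X1 Y1)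
    (l : ℚ) (hl : l*(2*Y1) = 3*X1^2-18) :
    IsPt (P+P) (l^2-2*X1) (l*(X1-(l^2-2*X1))-Y1) := by
  have hy := h1.Yne
  obtain ⟨h1, rfl⟩ := h1
  have hy' : Y1 ≠ EC.negY X1 Y1 := by
    simp [WeierstrassCurve.Affine.negY]
    intro h
    apply hy
    linarith
  have hs : EC.slope X1 X1 Y1 Y1 = l := by
    rw [WeierstrassCurve.Affine.slope_of_Y_ne rfl hy']
    simp [WeierstrassCurve.Affine.negY]
    rw [div_eq_iff (by intro h; apply hy; linarith)]
    linarith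
  rw [WeierstrassCurve.Affine.Point.add_self_of_Y_ne hy']
  have ex : EC.addX X1 X1 (EC.slope X1 X1 Y1 Y1) = l^2-2*X1 := by
    rw [hs]; simp [WeierstrassCurve.Affine.addX]; ring
  have ey : EC.addY X1 X1 Y1 (EC.slope X1 X1 Y1 Y1) = l*(X1-(l^2-2*X1))-Y1 := by
    rw [hs]; simp [WeierstrassCurve.Affine.addY, WeierstrassCurve.Affine.negY,
      WeierstrassCurve.Affine.negAddY, WeierstrassCurve.Affine.addX]; ring
  have hn := WeierstrassCurve.Affine.nonsingular_add h1 h1 (fun hh => hy' hh.2)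
  refine ⟨by rw [ex, ey] at hn; exact hn, ?_⟩
  simp only [ex, ey]

/-- If X(P) = X(Q+Q) formula then P = ±(Q+Q). -/
theorem eq_dbl {P : EC.Point} {X Y x y : ℚ} (h : IsPt P X Y) (hxy : y^2 = x^3-18*x-72)
    (hX : X = ((3*x^2-18)/(2*y))^2-2*x) : ∃ Q, IsPt Q x y ∧ (P = Q + Q ∨ P = -(Q+Q)) := by
  obtain ⟨Q, hQ⟩ := exists_pt x y hxy
  refine ⟨Q, hQ, ?_⟩
  have hy := hQ.Yne
  have := hQ.dbl ((3*x^2-18)/(2*y)) (by field_simp)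
  rw [← hX] at this
  exact h.eq_or this

theorem pt_G : ∃ G, IsPt G 6 6 := exists_pt 6 6 (by norm_num)

theorem mem_of_good {S : AddSubgroup EC.Point} (P : EC.Point) (X Y : ℚ) (h : IsPt P X Y)
    (c e : ℤ) (hc : Odd c) (he : 0 < e) (hce : IsCoprime c e) (hX : X = c/e^2)
    (B : ℤ) (hB : 18000 * max |c| (e^2) < 43 * B^4) (hB0 : 0 < B)
    (ih : ∀ Q x y, IsPt Q x y → hgt x < B → Q ∈ S) : P ∈ S := by
  obtain ⟨c', d, e', he', hce', hX', hY', hcd⟩ := coords X Y h.eqn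
  have hpos : (0:ℤ) < e^2 := by positivity
  have hpos' : (0:ℤ) < e'^2 := by positivity
  have hcc : c' = c := by
    have a1 := Rat.num_div_eq_of_coprime hpos
      (Int.isCoprime_iff_nat_coprime.1 (hce.pow_right : IsCoprime c (e^2)))
    have a2 := Rat.num_div_eq_of_coprime hpos'
      (Int.isCoprime_iff_nat_coprime.1 (hce'.pow_right : IsCoprime c' (e'^2)))
    push_cast at a1 a2
    rw [← hX] at a1
    rw [← hX'] at a2
    rw [← a1, ← a2]
  subst hcc
  have hd : Odd d := by
    by_contra hd
    have hd : Even d := by simpa using hd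
    obtain ⟨k, hk⟩ := hd.two_dvd
    have h3 : Odd (c'^3) := hc.pow
    have : c'^3 = 2*(2*k^2+9*c'*e'^4+36*e'^6) := by rw [hk] at hcd; linear_combination -hcd
    rw [this] at h3
    exact Int.not_even_iff_odd.2 h3 (even_two_mul _)
  obtain ⟨x, y, hy, hxy, hx⟩ := partD c' d e' hce' he'.ne' hd hcd
  obtain ⟨Q, hQ, hPQ⟩ := eq_dbl h hxy (by rw [hX', hx])
  have hh := dbl_height x y hy hxy c' (e^2) hpos hce.pow_right
    (by push_cast; rw [← hX, hX', hx])
  have hlt : hgt x < B := by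
    by_contra hge
    push Not at hge
    have := pow_le_pow_left₀ hB0.le hge 4
    linarith
  have hQS := ih Q x y hQ hlt
  rcases hPQ with rfl | rfl
  · exact S.add_mem hQS hQS
  · exact S.neg_mem (S.add_mem hQS hQS)

theorem all_mem (G : EC.Point) (hG : IsPt G 6 6) (S : AddSubgroup EC.Point) (hS : G ∈ S) :
    ∀ n : ℕ, ∀ P X Y, IsPt P X Y → hgt X ≤ n → P ∈ S := by
  intro n
  induction n using Nat.strong_induction_on with
  | _ n ih =>
  intro P X Y hP hn
  obtain ⟨c, d, e, he, hce, hX, hY, hcd⟩ := coords X Y hP.eqn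
  have hpos : (0:ℤ) < e^2 := by positivity
  have hh : hgt X = max |c| (e^2) := by
    have := hgt_eq c (e^2) hpos hce.pow_right
    rw [hX]; exact_mod_cast this
  have hG2 : IsPt (G+G) (177/4) (-2343/8) := by
    have := hG.dbl (15/2) (by norm_num)
    norm_num at this ⊢
    exact this
  have ihB : ∀ Q x y, IsPt Q x y → hgt x < hgt X → Q ∈ S := by
    intro Q x y hQ hlt
    have h0 : 0 ≤ hgt x := by unfold hgt; positivity
    obtain ⟨k, hk⟩ := Int.eq_ofNat_of_zero_le h0
    exact ih k (by omega) Q x y hQ (by omega)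
  rcases le_or_gt (hgt X) 204 with hsm | hbig
  · rw [hh] at hsm
    rcases base_points c d e he hce hcd ((le_max_left _ _).trans hsm)
      ((le_max_right _ _).trans hsm) with ⟨rfl, rfl⟩ | ⟨rfl, rfl⟩
    · norm_num at hX
      subst hX
      rcases hP.eq_or hG with rfl | rfl
      · exact hS
      · exact S.neg_mem hS
    · norm_num at hX
      subst hX
      rcases hP.eq_or hG2 with rfl | rfl
      · exact S.add_mem hS hS
      · exact S.neg_mem (S.add_mem hS hS)
  have hM : 0 < hgt X := by omega
  rcases Int.even_or_odd d with hd | hd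
  · have heq : (e:ℚ) ≠ 0 := by exact_mod_cast he.ne'
    have hX6 : X ≠ 6 := by
      rintro rfl
      have : hgt 6 = 6 := by
        have := hgt_eq 6 1 (by norm_num) isCoprime_one_right
        norm_num at this
        exact this
      omega
    have hc6 : c ≠ 6*e^2 := by
      rintro rfl
      apply hX6
      rw [hX]; push_cast; field_simp
    have hc6' : (c:ℚ)-6*e^2 ≠ 0 := by
      intro h
      apply hc6
      have : (c:ℚ) = 6*e^2 := by linarith
      exact_mod_cast this
    have hX6' : X - 6 ≠ 0 := sub_ne_zero.2 hX6
    obtain ⟨l, hl⟩ : ∃ l, l = (Y-6)/(X-6) := ⟨_, rfl⟩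
    have hadd := hP.add hG hX6 l (by rw [hl]; field_simp)
    obtain ⟨c2, d2, e2, he2, hce2, hX2, hY2, hcd2⟩ := coords _ _ hadd.eqn
    have heq2 : (e2:ℚ) ≠ 0 := by exact_mod_cast he2.ne'
    have hid : c2*(c-6*e^2)^2 = (6*c^2+18*c*e^2-12*d*e-252*e^4)*e2^2 := by
      have hl2 : l*(e*(c-6*e^2)) = d-6*e^3 := by
        have h3 : X*e^2 = c := by rw [hX]; field_simp
        have h5 : Y*e^3 = d := by rw [hY]; field_simp
        have h6 : l*(X-6) = Y-6 := by rw [hl]; field_simp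
        linear_combination (e:ℚ)^3*h6 - l*e*h3 + h5
      have hcdq : (d:ℚ)^2 = c^3-18*c*e^4-72*e^6 := by exact_mod_cast hcd
      have h1 : (c2:ℚ) = e2^2*(l^2-X-6) := by rw [hX2]; field_simp
      have h2 : (l^2-X-6)*(c-6*e^2)^2 = 6*c^2+18*c*e^2-12*d*e-252*e^4 := by
        apply mul_left_cancel₀ (pow_ne_zero 2 heq)
        have h3 : X*e^2 = c := by rw [hX]; field_simp
        have h4 : l^2*(e*(c-6*e^2))^2 = (d-6*e^3)^2 := by rw [← hl2]; ring
        linear_combination h4 - (c-6*e^2)^2*h3 + hcdq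
      have : (c2:ℚ)*(c-6*e^2)^2 = (6*c^2+18*c*e^2-12*d*e-252*e^4)*e2^2 := by
        rw [h1, ← h2]; ring
      exact_mod_cast this
    obtain ⟨hodd, hb⟩ := bad_good c d e c2 e2 he hce hcd hd hc6 he2 hce2 hid
    have : P + G ∈ S := by
      refine mem_of_good (P+G) _ _ hadd c2 e2 hodd he2 hce2 hX2 (hgt X) ?_ hM ihB
      rw [← hh] at hb
      have : 204*204 < (hgt X)^2 := by nlinarith
      nlinarith
    have h2 := S.sub_mem this hS
    simpa using h2
  · have hc : Odd c := by
      by_contra hc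
      have hc : Even c := by simpa using hc
      obtain ⟨k, hk⟩ := hc.two_dvd
      have h3 : Odd (d^2) := hd.pow
      have : d^2 = 2*(4*k^3-18*k*e^4-36*e^6) := by rw [hk] at hcd; linear_combination hcd
      rw [this] at h3
      exact Int.not_even_iff_odd.2 h3 (even_two_mul _)
    refine mem_of_good P X Y hP c e hc he hce hX (hgt X) ?_ hM ihB
    rw [← hh]
    have : 204*204 < (hgt X)^2 := by nlinarith
    nlinarith

theorem mem_G (G : EC.Point) (hG : IsPt G 6 6) (P : EC.Point) : ∃ n : ℤ, P = n • G := by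
  have hm : P ∈ AddSubgroup.zmultiples G := by
    rcases zero_or_pt P with rfl | ⟨X, Y, hP⟩
    · exact zero_mem _
    · have h0 : 0 ≤ hgt X := by unfold hgt; positivity
      exact all_mem G hG _ (AddSubgroup.mem_zmultiples G) (hgt X).toNat P X Y hP (by omega)
  obtain ⟨n, hn⟩ := AddSubgroup.mem_zmultiples_iff.1 hm
  exact ⟨n, hn.symm⟩

/-- good points are multiples of G+G -/
theorem good_mult (G : EC.Point) (hG : IsPt G 6 6) (P : EC.Point) (X Y : ℚ) (hP : IsPt P X Y)
    (c d e : ℤ) (hce : IsCoprime c e) (he : e ≠ 0) (hd : Odd d)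
    (hcd : d^2 = c^3-18*c*e^4-72*e^6) (hX : X = c/e^2) :
    ∃ n : ℤ, P = n • (G+G) := by
  obtain ⟨x, y, hy, hxy, hx⟩ := partD c d e hce he hd hcd
  obtain ⟨Q, hQ, hPQ⟩ := eq_dbl hP hxy (by rw [hX, hx])
  obtain ⟨n, hn⟩ := mem_G G hG Q
  rcases hPQ with rfl | rfl
  · exact ⟨n, by rw [hn]; exact (zsmul_add G G n).symm⟩
  · exact ⟨-n, by rw [hn, neg_zsmul, zsmul_add]⟩

set_option exponentiation.threshold 100000

theorem pt_1H {P : EC.Point} (h : IsPt P 6 6) : IsPt (P+P) (177/4) (-2343/8) := by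
  have := h.dbl (15/2) (by norm_num)
  norm_num at this ⊢
  exact this

theorem pt_2H {P : EC.Point} (h : IsPt P (177/4) (-2343/8)) :
    IsPt (P+P) (111795513/9759376) (-1067078260371/30488290624) := by
  have := h.dbl (-31233/3124) (by norm_num)
  norm_num at this ⊢
  exact this

theorem pt_3H {P Q : EC.Point} (h : IsPt P (111795513/9759376) (-1067078260371/30488290624))
    (h' : IsPt Q (177/4) (-2343/8)) :
    IsPt (P+Q) (278912936219309209/45527290326562500) (-67059238069398287165278573/9714214846091548828125000) := by
  have := h.add h' (by norm_num) (-2620726618711/333285892500) (by norm_num)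
  norm_num at this ⊢
  exact this

theorem pt_4H {P : EC.Point} (h : IsPt P (111795513/9759376) (-1067078260371/30488290624)) :
    IsPt (P+P) (29095141626590833947663026085273/4938920965737723011826259640896) (56398190059037639038959422549541588511295612349/10976101507016157083552217764516528885544045056) := by
  have := h.dbl (-11926764207476913/2222368323599336) (by norm_num)
  norm_num at this ⊢
  exact this

theorem pt_8H {P : EC.Point} (h : IsPt P (29095141626590833947663026085273/4938920965737723011826259640896) (56398190059037639038959422549541588511295612349/10976101507016157083552217764516528885544045056)) :
    IsPt (P+P) (407975688138549395327177847659828458585560221969923791742553424451602727901397564800891095721323787857356449899727820376556313/6982000762056512899798880400782212216643426885388210446160478380088453437012495874112418589438675583010506520717522086430976) (-259851263518515239779265313954240137504777975598542660395655156000626381435186306911776720549566754759364605679476458338439197861844560951566614691137737679766795840298337267745070580799229/583404584842239267281006306454252991736362884192046603365650279669387324425089867167790548513901750681559330518273439567282719348942421091047432994019774423427365144727154337190815051776) := by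
  have := h.dbl (700169624436556863498832624514688096047516073655500918213387633/83558367397026809668076643991684605967837436043540725233200176) (by norm_num)
  norm_num at this ⊢
  exact this

theorem pt_9H {P Q : EC.Point} (h : IsPt P (407975688138549395327177847659828458585560221969923791742553424451602727901397564800891095721323787857356449899727820376556313/6982000762056512899798880400782212216643426885388210446160478380088453437012495874112418589438675583010506520717522086430976) (-259851263518515239779265313954240137504777975598542660395655156000626381435186306911776720549566754759364605679476458338439197861844560951566614691137737679766795840298337267745070580799229/583404584842239267281006306454252991736362884192046603365650279669387324425089867167790548513901750681559330518273439567282719348942421091047432994019774423427365144727154337190815051776))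
    (h' : IsPt Q (177/4) (-2343/8)) :
    IsPt (P+Q) (323428757582515010346982307081742455854140907570536546118700079961125812014996989468896621633520113444363632388699459193537199135065525117995018072004257379289/24911079177850042244887887738655088264022736704035879684707214937098413456749374191169483070176533868056959309356468185392061783162683949855401731173439062500) (-5395077985361725232071501821434460675003646752191991192053644420317589245099683060875433134310133053263279605023051847711580633879738339119666193773033425622703110255998670080079559397932992008981947827997745935213390812140300380740705587/124333687204335518850349622827637333297345747790581859140173026038533184099404851374022283254424931259614571867213720508860523687450063797766115680035221181664227544735745259831594619296569068822000636789949514002251629219442869140625000) := by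
  have := h.add h' (by norm_num) (-2242635750772390957489699622025742418775046099675621168931293059011111097543626938763813503404724216400917128832564997628557210560684016970121/208524083623090839970286824596897572915079572444193124225278804090748280598443974779067951858671933605116109860190939752392069421047882390000) (by norm_num)
  norm_num at this ⊢
  exact this


def Zp (p : ℤ) (hp : Prime p) : Subring ℚ where
  carrier := {x | ∃ a b : ℤ, ¬ p ∣ b ∧ x*b = a}
  mul_mem' := by
    rintro x y ⟨a, b, hb, h⟩ ⟨a', b', hb', h'⟩
    exact ⟨a*a', b*b', fun hh => (hp.dvd_or_dvd hh).elim hb hb', by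
      push_cast; rw [← h, ← h']; ring⟩
  one_mem' := ⟨1, 1, fun h => hp.not_unit (isUnit_of_dvd_one h), by norm_num⟩
  add_mem' := by
    rintro x y ⟨a, b, hb, h⟩ ⟨a', b', hb', h'⟩
    exact ⟨a*b'+a'*b, b*b', fun hh => (hp.dvd_or_dvd hh).elim hb hb', by
      push_cast; rw [← h, ← h']; ring⟩
  zero_mem' := ⟨0, 1, fun h => hp.not_unit (isUnit_of_dvd_one h), by norm_num⟩
  neg_mem' := by
    rintro x ⟨a, b, hb, h⟩
    exact ⟨-a, b, hb, by push_cast; rw [← h]; ring⟩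

theorem Zp_def {p : ℤ} (hp : Prime p) (x : ℚ) :
    x ∈ Zp p hp ↔ ∃ a b : ℤ, ¬ p ∣ b ∧ x*b = a := Iff.rfl

theorem Zp_mk {p : ℤ} (hp : Prime p) (x : ℚ) (a b : ℤ) (hb : ¬ p ∣ b) (h : x*b = a) :
    x ∈ Zp p hp := ⟨a, b, hb, h⟩

theorem Zp_sq {p : ℤ} (hp : Prime p) (y : ℚ) (h : y^2 ∈ Zp p hp) : y ∈ Zp p hp := by
  obtain ⟨a, b, hb, h⟩ := h
  have hq : (y.den:ℚ) ≠ 0 := by exact_mod_cast y.den_ne_zero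
  have hy : y * y.den = y.num := Rat.mul_den_eq_num y
  refine ⟨y.num, y.den, ?_, by exact_mod_cast hy⟩
  intro hd
  have h1 : y.num^2*b = a*(y.den:ℤ)^2 := by
    have : (y.num:ℚ)^2*b = a*(y.den:ℚ)^2 := by rw [← hy, ← h]; ring
    exact_mod_cast this
  have h2 : p ∣ y.num^2*b := by rw [h1]; exact (hd.pow (by norm_num)).mul_left _
  have h3 : p ∣ y.num := by
    rcases hp.dvd_or_dvd h2 with h | h
    · exact hp.dvd_of_dvd_pow h
    · exact absurd h hb
  have hc : IsCoprime y.num (y.den:ℤ) := by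
    rw [Int.isCoprime_iff_nat_coprime]; simpa using y.reduced
  exact hp.not_unit (hc.isUnit_of_dvd' h3 hd)

theorem Zp_inv {p : ℤ} (hp : Prime p) (z : ℚ) (h : z ∈ Zp p hp) :
    1 - p*z ≠ 0 ∧ (1 - p*z)⁻¹ ∈ Zp p hp := by
  obtain ⟨a, b, hb, h⟩ := h
  have hb' : ¬ p ∣ b - p*a := fun hh => hb ((dvd_sub_left (Dvd.intro _ rfl)).1 hh)
  have hb0 : (b:ℚ) ≠ 0 := by
    intro h0
    have : b = 0 := by exact_mod_cast h0
    exact hb (this ▸ dvd_zero p)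
  have hc0 : ((b - p*a : ℤ):ℚ) ≠ 0 := by
    intro h0
    have : b - p*a = 0 := by exact_mod_cast h0
    exact hb' (this ▸ dvd_zero p)
  have he : (1-p*z)*b = ((b - p*a : ℤ):ℚ) := by push_cast; rw [← h]; ring
  have hne : 1 - p*z ≠ 0 := by
    intro h0; rw [h0, zero_mul] at he; exact hc0 he.symm
  refine ⟨hne, b, b-p*a, hb', ?_⟩
  rw [← he]; field_simp

theorem Zp_int {p : ℤ} (hp : Prime p) (z : ℤ) : (z:ℚ) ∈ Zp p hp := intCast_mem _ z

/-- P is an affine point with X ≡ r mod p -/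
def Red (p : ℤ) (hp : Prime p) (r : ℤ) (P : EC.Point) : Prop :=
  ∃ X Y w, IsPt P X Y ∧ w ∈ Zp p hp ∧ X = r + p*w

theorem Red.neg {p : ℤ} {hp : Prime p} {r : ℤ} {P : EC.Point} (h : Red p hp r P) :
    Red p hp r (-P) := by
  obtain ⟨X, Y, w, hP, hw, hX⟩ := h
  exact ⟨X, -Y, w, hP.neg, hw, hX⟩

theorem Red.step {p : ℤ} {hp : Prime p} {r : ℤ} {P T : EC.Point} (h : Red p hp r P)
    (XT YT s u : ℚ) (hT : IsPt T XT YT) (hs : s ∈ Zp p hp) (hu : u ∈ Zp p hp)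
    (hsT : p*s*XT = 1) (huT : p*u*XT^2 = YT) : Red p hp r (P+T) := by
  obtain ⟨X, Y, w, hP, hw, hX⟩ := h
  have hXm : X ∈ Zp p hp := by
    rw [hX]; exact add_mem (Zp_int hp r) (mul_mem (Zp_int hp p) hw)
  have hYm : Y ∈ Zp p hp := by
    apply Zp_sq
    rw [hP.eqn]
    have h18 := Zp_int hp 18
    have h72 := Zp_int hp 72
    push_cast at h18 h72
    exact sub_mem (sub_mem (pow_mem hXm 3) (mul_mem h18 hXm)) h72
  obtain ⟨hne, hinv⟩ := Zp_inv hp (X*s) (mul_mem hXm hs)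
  have hT0 : XT ≠ 0 := by rintro rfl; simp at hsT
  have hXX : X ≠ XT := by
    rintro rfl
    apply hne
    linear_combination -hsT
  have hXX' : X - XT ≠ 0 := sub_ne_zero.2 hXX
  obtain ⟨l, hl⟩ : ∃ l, l = (Y-YT)/(X-XT) := ⟨_, rfl⟩
  have hl' : l*(X-XT) = Y-YT := by rw [hl]; field_simp
  have hadd := hP.add hT hXX l hl'
  obtain ⟨D, hD⟩ : ∃ D, D = (1-p*(X*s))⁻¹ := ⟨_, rfl⟩
  rw [← hD] at hinv
  have hD1 : D*(1-p*(X*s)) = 1 := by rw [hD]; exact inv_mul_cancel₀ hne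
  have h18 := Zp_int hp (-18)
  have h144 := Zp_int hp (-144)
  have h3 := Zp_int hp 3
  have h2 := Zp_int hp 2
  have hpm := Zp_int hp p
  push_cast at h18 h144 h3 h2
  have hwm : D^2*(3*X^2*s + (-18)*X*(p*s)*s + (-18)*s + (-144)*(p*s)*s - 2*Y*u - X^3*(p*s)*s)
      ∈ Zp p hp :=
    mul_mem (pow_mem hinv 2) (sub_mem (sub_mem (add_mem (add_mem (add_mem
      (mul_mem (mul_mem h3 (pow_mem hXm 2)) hs)
      (mul_mem (mul_mem (mul_mem h18 hXm) (mul_mem hpm hs)) hs))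
      (mul_mem h18 hs)) (mul_mem (mul_mem h144 (mul_mem hpm hs)) hs))
      (mul_mem (mul_mem h2 hYm) hu)) (mul_mem (mul_mem (pow_mem hXm 3) (mul_mem hpm hs)) hs))
  refine ⟨_, _, w + D^2*(3*X^2*s + (-18)*X*(p*s)*s + (-18)*s + (-144)*(p*s)*s - 2*Y*u - X^3*(p*s)*s), hadd, add_mem hw hwm, ?_⟩
  -- compare
  have hPe := hP.eqn
  have hTe := hT.eqn
  have hN : (l^2-X-XT)*(X-XT)^2 = (X*XT-18)*(X+XT)-144-2*Y*YT := by
    have : l^2*(X-XT)^2 = (Y-YT)^2 := by rw [← hl']; ring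
    linear_combination this + hPe + hTe
  have hN2 : (l^2-X-XT)*(1-p*(X*s))^2 = (X-18*(p*s))*(X*(p*s)+1)-144*(p*s)^2-2*Y*(p*u) := by
    apply mul_left_cancel₀ (pow_ne_zero 2 hT0)
    obtain ⟨σ, hσ⟩ : ∃ σ, σ = (p:ℚ)*s := ⟨_, rfl⟩
    have e1 : XT*σ = 1 := by rw [hσ]; linear_combination hsT
    have e2 : XT^2*(1-p*(X*s))^2 = (X-XT)^2 := by
      have : XT*(1-p*(X*s)) = XT - X := by linear_combination -X*hsT
      rw [← mul_pow, this]; ring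
    have e3 : XT^2*((X-18*(p*s))*(X*(p*s)+1)-144*(p*s)^2-2*Y*(p*u))
        = (X*XT-18)*(X+XT)-144-2*Y*YT := by
      rw [← hσ, ← huT]
      linear_combination (X^2*XT-18*X-18*X*XT*σ - 18*XT-144*XT*σ-144)*e1
    rw [e3, ← hN, ← e2]; ring
  have hfin : l^2-X-XT = D^2*((X-18*(p*s))*(X*(p*s)+1)-144*(p*s)^2-2*Y*(p*u)) := by
    rw [← hN2]
    have : D^2*((l^2-X-XT)*(1-p*(X*s))^2) = (l^2-X-XT)*(D*(1-p*(X*s)))^2 := by ring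
    rw [this, hD1]; ring
  have hX2 : X = D^2*(X*(1-p*(X*s))^2) := by
    have : D^2*(X*(1-p*(X*s))^2) = X*(D*(1-p*(X*s)))^2 := by ring
    rw [this, hD1]; ring
  rw [hfin]
  linear_combination hX - hX2

theorem Red.smul {p : ℤ} {hp : Prime p} {r : ℤ} {P T : EC.Point} (h : Red p hp r P)
    (XT YT s u : ℚ) (hT : IsPt T XT YT) (hs : s ∈ Zp p hp) (hu : u ∈ Zp p hp)
    (hsT : p*s*XT = 1) (huT : p*u*XT^2 = YT) (k : ℤ) : Red p hp r (P + k • T) := by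
  induction k using Int.induction_on with
  | zero => simpa using h
  | succ i ih =>
    have := ih.step XT YT s u hT hs hu hsT huT
    rwa [add_assoc, ← add_one_zsmul] at this
  | pred i ih =>
    have := ih.step XT (-YT) s (-u) hT.neg hs (neg_mem hu) hsT (by rw [← huT]; ring)
    rwa [add_assoc, ← sub_one_zsmul] at this

theorem Red.not_of {p : ℤ} {hp : Prime p} {P : EC.Point} {X Y : ℚ} (h : IsPt P X Y)
    (N D : ℤ) (hN : ¬ p ∣ N) (hX : X*D = N) : ¬ Red p hp 0 P := by
  rintro ⟨X', Y', w, hP, ⟨a, b, hb, hw⟩, hX'⟩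
  obtain ⟨hXX, -⟩ := hP.inj h
  have h1 : N*b = p*(D*a) := by
    have : (N:ℚ)*b = p*(D*a) := by
      rw [← hX, ← hw, ← hXX, hX']; push_cast; ring
    exact_mod_cast this
  exact (hp.dvd_or_dvd (Dvd.intro _ h1.symm)).elim hN hb

theorem red_mk {p : ℤ} (hp : Prime p) {P : EC.Point} {X Y : ℚ} (h : IsPt P X Y) (r : ℤ)
    (w : ℚ) (hw : w ∈ Zp p hp) (hX : X = r + p*w) : Red p hp r P := ⟨X, Y, w, h, hw, hX⟩

theorem hp3 : Prime (3:ℤ) := Int.prime_three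
theorem hp163 : Prime (163:ℤ) := by norm_num

theorem red3 {r : ℤ} {P T : EC.Point} (h : Red 3 hp3 r P)
    (hT : IsPt T (323428757582515010346982307081742455854140907570536546118700079961125812014996989468896621633520113444363632388699459193537199135065525117995018072004257379289/24911079177850042244887887738655088264022736704035879684707214937098413456749374191169483070176533868056959309356468185392061783162683949855401731173439062500) (-5395077985361725232071501821434460675003646752191991192053644420317589245099683060875433134310133053263279605023051847711580633879738339119666193773033425622703110255998670080079559397932992008981947827997745935213390812140300380740705587/124333687204335518850349622827637333297345747790581859140173026038533184099404851374022283254424931259614571867213720508860523687450063797766115680035221181664227544735745259831594619296569068822000636789949514002251629219442869140625000)) (k : ℤ) : Red 3 hp3 r (P + k • T) := by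
  refine h.smul _ _ (8303693059283347414962629246218362754674245568011959894902404979032804485583124730389827690058844622685653103118822728464020594387561316618467243724479687500/323428757582515010346982307081742455854140907570536546118700079961125812014996989468896621633520113444363632388699459193537199135065525117995018072004257379289) (-8975791238454274814032282556729894528304503051344429738790944216431541991793882184270577450792953926146941778907520770964157618192736052613396715287849997031093602107829516487445376749713267284676043959268498390128175712486051051630112578192739466632701686162922697576627737148878977123477031535415566214414904026250/104606161231369260800056989840425424061549610483148569329121790683518383063565362371021028246066847390137652414037423845075847653718658060457501407814644153802460423167672493118057711369014508695451392390947408680073438852201381861519088640325619394558158772375675968695928309657283172197119726289845146894410406145521) hT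
    (Zp_mk hp3 _ (8303693059283347414962629246218362754674245568011959894902404979032804485583124730389827690058844622685653103118822728464020594387561316618467243724479687500) 323428757582515010346982307081742455854140907570536546118700079961125812014996989468896621633520113444363632388699459193537199135065525117995018072004257379289 (by norm_num) (by norm_num))
    (Zp_mk hp3 _ (-8975791238454274814032282556729894528304503051344429738790944216431541991793882184270577450792953926146941778907520770964157618192736052613396715287849997031093602107829516487445376749713267284676043959268498390128175712486051051630112578192739466632701686162922697576627737148878977123477031535415566214414904026250) 104606161231369260800056989840425424061549610483148569329121790683518383063565362371021028246066847390137652414037423845075847653718658060457501407814644153802460423167672493118057711369014508695451392390947408680073438852201381861519088640325619394558158772375675968695928309657283172197119726289845146894410406145521 (by norm_num) (by norm_num)) (by norm_num) (by norm_num) k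

theorem red163 {r : ℤ} {P T : EC.Point} (h : Red 163 hp163 r P)
    (hT : IsPt T (323428757582515010346982307081742455854140907570536546118700079961125812014996989468896621633520113444363632388699459193537199135065525117995018072004257379289/24911079177850042244887887738655088264022736704035879684707214937098413456749374191169483070176533868056959309356468185392061783162683949855401731173439062500) (-5395077985361725232071501821434460675003646752191991192053644420317589245099683060875433134310133053263279605023051847711580633879738339119666193773033425622703110255998670080079559397932992008981947827997745935213390812140300380740705587/124333687204335518850349622827637333297345747790581859140173026038533184099404851374022283254424931259614571867213720508860523687450063797766115680035221181664227544735745259831594619296569068822000636789949514002251629219442869140625000)) (k : ℤ) : Red 163 hp163 r (P + k • T) := by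
  refine h.smul _ _ (152828706612576946287655752997883977079894090208809077820289662190787812618094320191223822516420453178263554045131706658847004804679042637149703872229687500/323428757582515010346982307081742455854140907570536546118700079961125812014996989468896621633520113444363632388699459193537199135065525117995018072004257379289) (-165198611750692174491391703498096218312352816895909749793698359811623472241605193575532100321342710297182977525905290263144005242811092992884602121862269884007857707506064720627829019933373017509375042195125737241622865873976399723253605733608701839865675205452564986072903137709429026812460703105807967136470626250/104606161231369260800056989840425424061549610483148569329121790683518383063565362371021028246066847390137652414037423845075847653718658060457501407814644153802460423167672493118057711369014508695451392390947408680073438852201381861519088640325619394558158772375675968695928309657283172197119726289845146894410406145521) hT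
    (Zp_mk hp163 _ (152828706612576946287655752997883977079894090208809077820289662190787812618094320191223822516420453178263554045131706658847004804679042637149703872229687500) 323428757582515010346982307081742455854140907570536546118700079961125812014996989468896621633520113444363632388699459193537199135065525117995018072004257379289 (by norm_num) (by norm_num))
    (Zp_mk hp163 _ (-165198611750692174491391703498096218312352816895909749793698359811623472241605193575532100321342710297182977525905290263144005242811092992884602121862269884007857707506064720627829019933373017509375042195125737241622865873976399723253605733608701839865675205452564986072903137709429026812460703105807967136470626250) 104606161231369260800056989840425424061549610483148569329121790683518383063565362371021028246066847390137652414037423845075847653718658060457501407814644153802460423167672493118057711369014508695451392390947408680073438852201381861519088640325619394558158772375675968695928309657283172197119726289845146894410406145521 (by norm_num) (by norm_num)) (by norm_num) (by norm_num) k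

theorem red163_1 {P : EC.Point} (h : IsPt P (177/4) (-2343/8)) : Red 163 hp163 85 P :=
  red_mk hp163 h 85 (-1/4) (Zp_mk hp163 _ (-1) 4 (by norm_num) (by norm_num)) (by norm_num)

theorem red163_2 {P : EC.Point} (h : IsPt P (111795513/9759376) (-1067078260371/30488290624)) : Red 163 hp163 89 P :=
  red_mk hp163 h 89 (-4642877/9759376) (Zp_mk hp163 _ (-4642877) 9759376 (by norm_num) (by norm_num)) (by norm_num)

theorem red163_4 {P : EC.Point} (h : IsPt P (29095141626590833947663026085273/4938920965737723011826259640896) (56398190059037639038959422549541588511295612349/10976101507016157083552217764516528885544045056)) : Red 163 hp163 6 P :=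
  red_mk hp163 h 6 (-3302970354819043701193446381/4938920965737723011826259640896) (Zp_mk hp163 _ (-3302970354819043701193446381) 4938920965737723011826259640896 (by norm_num) (by norm_num)) (by norm_num)

theorem not_red3 {P : EC.Point} (h : IsPt P (278912936219309209/45527290326562500) (-67059238069398287165278573/9714214846091548828125000)) : ¬ Red 3 hp3 0 P :=
  Red.not_of h 278912936219309209 45527290326562500 (by norm_num) (by norm_num)


instance fact163 : Fact (Nat.Prime 163) := ⟨by norm_num⟩

theorem no163 (r : ℤ) (hr : ∀ t : ZMod 163, t^4 - (24+4*(r:ZMod 163))*t^2 - 40 ≠ 0)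
    (m n : ℤ) (hmn : IsCoprime m n) :
    ¬ (163:ℤ) ∣ (m^4-24*m^2*n^2-40*n^4) - r*(2*m*n)^2 := by
  intro h
  have h1 : (((m^4-24*m^2*n^2-40*n^4) - r*(2*m*n)^2 : ℤ) : ZMod 163) = 0 :=
    (ZMod.intCast_zmod_eq_zero_iff_dvd _ 163).2 (by exact_mod_cast h)
  push_cast at h1
  by_cases hn : (n : ZMod 163) = 0
  · rw [hn] at h1
    have hm : (m : ZMod 163) = 0 := by
      have : (m : ZMod 163)^4 = 0 := by linear_combination h1
      exact pow_eq_zero_iff (by norm_num) |>.1 this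
    have d1 := (ZMod.intCast_zmod_eq_zero_iff_dvd n 163).1 hn
    have d2 := (ZMod.intCast_zmod_eq_zero_iff_dvd m 163).1 hm
    have := hmn.isUnit_of_dvd' d2 d1
    norm_num [Int.isUnit_iff] at this
  · apply hr ((m : ZMod 163)/n)
    field_simp
    linear_combination h1

theorem red_dvd {p : ℤ} {hp : Prime p} {r : ℤ} {P : EC.Point} {X Y : ℚ} (hP : IsPt P X Y)
    (c e : ℤ) (he : e ≠ 0) (hX : X = c/e^2) (h : Red p hp r P) : p ∣ c - r*e^2 := by
  obtain ⟨X', Y', w, hP', ⟨a, b, hb, hw⟩, hX'⟩ := h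
  obtain ⟨hXX, -⟩ := hP.inj hP'
  have he0 : (e:ℚ) ≠ 0 := by exact_mod_cast he
  have h1 : X*e^2 = c := by rw [hX]; field_simp
  have h2 : b*(c-r*e^2) = p*(a*e^2) := by
    have : (b:ℚ)*(c-r*e^2) = p*(a*e^2) := by
      rw [← h1, ← hw, hXX, hX']; ring
    exact_mod_cast this
  exact (hp.dvd_or_dvd (Dvd.intro _ h2.symm)).resolve_left hb

theorem grp {A : Type*} [AddCommGroup A] (H : A) (N : ℤ) : ∃ k : ℤ,
    N • H + (-k) • (((H+H)+(H+H))+((H+H)+(H+H)) + H) = 0 ∨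
    ∃ Q, (N • H + (-k) • (((H+H)+(H+H))+((H+H)+(H+H)) + H) = Q ∨
      N • H + (-k) • (((H+H)+(H+H))+((H+H)+(H+H)) + H) = -Q) ∧
      (Q = H ∨ Q = H+H ∨ Q = (H+H)+H ∨ Q = (H+H)+(H+H)) := by
  have key : ∀ j k : ℤ, N = 9*k+j →
      N • H + (-k) • (((H+H)+(H+H))+((H+H)+(H+H)) + H) = j • H := by
    intro j k h; rw [h]; module
  have e0 : (0:ℤ) • H = 0 := by module
  have e1 : (1:ℤ) • H = H := by module
  have e2 : (2:ℤ) • H = H+H := by module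
  have e3 : (3:ℤ) • H = (H+H)+H := by module
  have e4 : (4:ℤ) • H = (H+H)+(H+H) := by module
  have f1 : (-1:ℤ) • H = -H := by module
  have f2 : (-2:ℤ) • H = -(H+H) := by module
  have f3 : (-3:ℤ) • H = -((H+H)+H) := by module
  have f4 : (-4:ℤ) • H = -((H+H)+(H+H)) := by module
  have hj : N % 9 = 0 ∨ N % 9 = 1 ∨ N % 9 = 2 ∨ N % 9 = 3 ∨ N % 9 = 4 ∨ N % 9 = 5 ∨ N % 9 = 6
    ∨ N % 9 = 7 ∨ N % 9 = 8 := by omega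
  rcases hj with h | h | h | h | h | h | h | h | h
  · exact ⟨N/9, Or.inl ((key 0 _ (by omega)).trans e0)⟩
  · exact ⟨N/9, Or.inr ⟨_, Or.inl ((key 1 _ (by omega)).trans e1), by simp⟩⟩
  · exact ⟨N/9, Or.inr ⟨_, Or.inl ((key 2 _ (by omega)).trans e2), by simp⟩⟩
  · exact ⟨N/9, Or.inr ⟨_, Or.inl ((key 3 _ (by omega)).trans e3), by simp⟩⟩
  · exact ⟨N/9, Or.inr ⟨_, Or.inl ((key 4 _ (by omega)).trans e4), by simp⟩⟩
  · exact ⟨N/9+1, Or.inr ⟨_, Or.inr ((key (-4) _ (by omega)).trans f4), by simp⟩⟩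
  · exact ⟨N/9+1, Or.inr ⟨_, Or.inr ((key (-3) _ (by omega)).trans f3), by simp⟩⟩
  · exact ⟨N/9+1, Or.inr ⟨_, Or.inr ((key (-2) _ (by omega)).trans f2), by simp⟩⟩
  · exact ⟨N/9+1, Or.inr ⟨_, Or.inr ((key (-1) _ (by omega)).trans f1), by simp⟩⟩

theorem r163_85 : ∀ t : ZMod 163, t^4 - (24+4*((85:ℤ):ZMod 163))*t^2 - 40 ≠ 0 := by decide +kernel
theorem r163_89 : ∀ t : ZMod 163, t^4 - (24+4*((89:ℤ):ZMod 163))*t^2 - 40 ≠ 0 := by decide +kernel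
theorem r163_6 : ∀ t : ZMod 163, t^4 - (24+4*((6:ℤ):ZMod 163))*t^2 - 40 ≠ 0 := by decide +kernel

theorem partF (m n : ℤ) (hmn : IsCoprime m n) (hm : Odd m) (hn : n ≠ 0) (hm5 : ¬ (5:ℤ) ∣ m)
    (hm3 : ¬ (3:ℤ) ∣ m) (hn3 : ¬ (3:ℤ) ∣ n) (X Y : ℚ)
    (hX : X = ((m^4-24*m^2*n^2-40*n^4 : ℤ):ℚ)/((2*m*n : ℤ):ℚ)^2)
    (hXY : Y^2 = X^3-18*X-72) : False := by
  obtain ⟨P, hP⟩ := exists_pt X Y hXY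
  obtain ⟨c, hc⟩ : ∃ c, c = m^4-24*m^2*n^2-40*n^4 := ⟨_, rfl⟩
  obtain ⟨e, he⟩ : ∃ e, e = 2*m*n := ⟨_, rfl⟩
  have hm0 : m ≠ 0 := by rintro rfl; simp at hm
  have he0 : e ≠ 0 := by rw [he]; positivity
  have hcodd : Odd c := by
    obtain ⟨k, hk⟩ := (hm.pow : Odd (m^4))
    exact ⟨k-12*m^2*n^2-20*n^4, by rw [hc, hk]; ring⟩
  have hc2 : IsCoprime c 2 := by
    obtain ⟨k, hk⟩ := hcodd
    exact ⟨1, -k, by rw [hk]; ring⟩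
  have hcm : IsCoprime c m := by
    have h2 : IsCoprime m 2 := by
      obtain ⟨k, hk⟩ := hm
      exact ⟨1, -k, by rw [hk]; ring⟩
    have h5 : IsCoprime m 5 :=
      ((Int.prime_iff_natAbs_prime.2 (by norm_num) : Prime (5:ℤ)).coprime_iff_not_dvd.2 hm5).symm
    have h40 : IsCoprime m (40*n^4) := by
      have : (40*n^4 : ℤ) = (2^3*5)*n^4 := by norm_num
      rw [this]
      exact ((h2.pow_right).mul_right h5).mul_right hmn.pow_right
    have : c = -(40*n^4) + m*(m^3-24*m*n^2) := by rw [hc]; ring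
    rw [this]
    exact (IsCoprime.add_mul_left_left (h40.symm.neg_left) _)
  have hcn : IsCoprime c n := by
    have : c = m^4 + n*(-24*m^2*n-40*n^3) := by rw [hc]; ring
    rw [this]
    exact IsCoprime.add_mul_left_left hmn.pow_left _
  have hce : IsCoprime c e := by rw [he]; exact (hc2.mul_right hcm).mul_right hcn
  rw [← hc, ← he] at hX
  have hce2 : 3 ∣ c := by
    have h1 : m % 3 = 1 ∨ m % 3 = 2 := by omega
    have h2 : n % 3 = 1 ∨ n % 3 = 2 := by omega
    have h1' : m^2 % 3 = 1 := by rcases h1 with h | h <;> simp [pow_two, Int.mul_emod, h]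
    have h2' : n^2 % 3 = 1 := by rcases h2 with h | h <;> simp [pow_two, Int.mul_emod, h]
    obtain ⟨a, ha⟩ : ∃ a, m^2 = 3*a+1 := ⟨m^2/3, by omega⟩
    obtain ⟨b, hb⟩ : ∃ b, n^2 = 3*b+1 := ⟨n^2/3, by omega⟩
    have : c = (m^2)^2-24*m^2*n^2-40*(n^2)^2 := by rw [hc]; ring
    rw [this, ha, hb]
    ring_nf
    omega
  have he3 : ¬ (3:ℤ) ∣ e^2 := by
    intro h
    have := hp3.dvd_of_dvd_pow h
    rw [he] at this
    rcases hp3.dvd_or_dvd this with h | h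
    · rcases hp3.dvd_or_dvd h with h | h
      · norm_num at h
      · exact hm3 h
    · exact hn3 h
  have he0q : (e:ℚ) ≠ 0 := by exact_mod_cast he0
  have hR3 : Red 3 hp3 0 P := by
    obtain ⟨c1, hc1⟩ := hce2
    refine red_mk hp3 hP 0 (c1/e^2) (Zp_mk hp3 _ c1 (e^2) he3 ?_) ?_
    · push_cast; field_simp
    · rw [hX, hc1]; push_cast; ring
  -- P is a multiple of H
  have hmult : ∀ G, IsPt G 6 6 → ∃ N : ℤ, P = N • (G+G) := by
    intro G hG
    obtain ⟨c', d, e', he', hce', hX', hY', hcd⟩ := coords X Y hXY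
    have hpos : (0:ℤ) < e^2 := by positivity
    have hpos' : (0:ℤ) < e'^2 := by positivity
    have hcc : c' = c := by
      have a1 := Rat.num_div_eq_of_coprime hpos
        (Int.isCoprime_iff_nat_coprime.1 (hce.pow_right : IsCoprime c (e^2)))
      have a2 := Rat.num_div_eq_of_coprime hpos'
        (Int.isCoprime_iff_nat_coprime.1 (hce'.pow_right : IsCoprime c' (e'^2)))
      push_cast at a1 a2
      rw [← hX] at a1
      rw [← hX'] at a2
      rw [← a1, ← a2]
    rw [← hcc] at hcodd
    have hd : Odd d := by
      by_contra hd
      have hd : Even d := by simpa using hd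
      obtain ⟨k, hk⟩ := hd.two_dvd
      have h3 : Odd (c'^3) := hcodd.pow
      have : c'^3 = 2*(2*k^2+9*c'*e'^4+36*e'^6) := by rw [hk] at hcd; linear_combination -hcd
      rw [this] at h3
      exact Int.not_even_iff_odd.2 h3 (even_two_mul _)
    exact good_mult G hG P X Y hP c' d e' hce' he'.ne' hd hcd hX'
  obtain ⟨G, hG⟩ := pt_G
  obtain ⟨N, hN⟩ := hmult G hG
  have hH := pt_1H hG
  obtain ⟨H, hHd⟩ : ∃ H, H = G+G := ⟨_, rfl⟩
  rw [← hHd] at hN hH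
  have hH2 := pt_2H hH
  have hH3 := pt_3H hH2 hH
  have hH4 := pt_4H hH2
  have hH9 := pt_9H (pt_8H hH4) hH
  obtain ⟨k, hk⟩ := grp H N
  obtain ⟨T, hT⟩ : ∃ T, T = ((H+H)+(H+H))+((H+H)+(H+H)) + H := ⟨_, rfl⟩
  rw [← hT] at hH9 hk
  rw [← hN] at hk
  have hR3' := red3 hR3 hH9 (-k)
  have fin163 : ∀ (r : ℤ) Q, Red 163 hp163 r Q →
      (P + (-k) • T = Q ∨ P + (-k) • T = -Q) → (163:ℤ) ∣ c - r*e^2 := by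
    intro r Q hQ h
    have h1 : Red 163 hp163 r (P + (-k) • T) := by
      rcases h with h | h
      · rw [h]; exact hQ
      · rw [h]; exact hQ.neg
    have h2 := red163 h1 hH9 k
    have h3 : P + (-k) • T + k • T = P := by rw [neg_zsmul, neg_add_cancel_right]
    rw [h3] at h2
    exact red_dvd hP c e he0 hX h2
  rcases hk with hk | ⟨Q, hk, rfl | rfl | rfl | rfl⟩
  · rw [hk] at hR3'
    obtain ⟨X', Y', w, h0, -⟩ := hR3'
    exact h0.ne_zero rfl
  · have := fin163 85 _ (red163_1 hH) hk
    rw [hc, he] at this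
    exact no163 85 r163_85 m n hmn this
  · have := fin163 89 _ (red163_2 hH2) hk
    rw [hc, he] at this
    exact no163 89 r163_89 m n hmn this
  · apply not_red3 hH3
    rcases hk with hk | hk
    · rwa [hk] at hR3'
    · rw [hk] at hR3'; simpa using hR3'.neg
  · have := fin163 6 _ (red163_4 hH4) hk
    rw [hc, he] at this
    exact no163 6 r163_6 m n hmn this


theorem Int_pow4_of_mul {u v r : ℤ} (h : IsCoprime u v) (hu : 0 < u) (hv : 0 < v)
    (huv : u*v = r^4) : (∃ n, u = n^4) ∧ ∃ m, v = m^4 := by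
  have key : ∀ {u v r : ℤ}, IsCoprime u v → 0 < u → u*v = r^4 → ∃ n, u = n^4 := by
    intro u v r h hu huv
    obtain ⟨d, hd⟩ := exists_associated_pow_of_mul_eq_pow' h huv
    rcases Int.associated_iff.1 hd with h | h
    · exact ⟨d, h.symm⟩
    · exfalso
      have : 0 ≤ d^4 := by positivity
      omega
  exact ⟨key h hu huv, key h.symm hv (by rw [mul_comm]; exact huv)⟩

theorem sq_mod8_odd {t : ℤ} (h : Odd t) : t^2 % 8 = 1 := by
  obtain ⟨k, hk⟩ := h
  have : t % 8 = 1 ∨ t % 8 = 3 ∨ t % 8 = 5 ∨ t % 8 = 7 := by omega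
  rcases this with h | h | h | h <;> simp [pow_two, Int.mul_emod, h]

theorem pow4_mod8 (m : ℤ) (h : Odd (m^4)) : m^4 % 8 = 1 := by
  have hm : Odd m := by
    rcases Int.even_or_odd m with h' | h'
    · exact absurd h (Int.not_odd_iff_even.2 (h'.pow_of_ne_zero (by norm_num)))
    · exact h'
  have : (m^2)%8 = 1 := sq_mod8_odd hm
  have e : m^4 = m^2*m^2 := by ring
  rw [e, Int.mul_emod, this]; norm_num

theorem split40 {u v r : ℤ} (h : IsCoprime u v) (hu : 0 < u) (hv : 0 < v)
    (huv : u*v = 40*r^4) (hodd : Odd v) :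
    (v % 8 = 1 ∧ ∃ m n, v = m^4 ∧ u = 40*n^4) ∨ (v % 8 = 5) := by
  have h2 : IsCoprime v 8 := by
    obtain ⟨k, hk⟩ := hodd
    have : IsCoprime v 2 := ⟨1, -k, by rw [hk]; ring⟩
    have h3 : IsCoprime v (2^3) := this.pow_right
    norm_num at h3; exact h3
  obtain ⟨u1, rfl⟩ : (8:ℤ) ∣ u := h2.symm.dvd_of_dvd_mul_right ⟨5*r^4, by rw [huv]; ring⟩
  have h1 : u1*v = 5*r^4 := by linarith
  have hu1 : 0 < u1 := by omega
  have hc1 : IsCoprime u1 v := IsCoprime.of_mul_left_right h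
  have p5 : Prime (5:ℤ) := Int.prime_iff_natAbs_prime.2 (by norm_num)
  rcases p5.dvd_or_dvd (Dvd.intro _ h1.symm) with ⟨u2, rfl⟩ | ⟨v2, rfl⟩
  · left
    obtain ⟨⟨n, hn⟩, m, hm⟩ := Int_pow4_of_mul (r := r) (IsCoprime.of_mul_left_right hc1)
      (by omega) hv (by linarith)
    refine ⟨?_, m, n, hm, by rw [hn]; ring⟩
    rw [hm] at hodd ⊢
    exact pow4_mod8 m hodd
  · right
    obtain ⟨-, m, hm⟩ := Int_pow4_of_mul (r := r) (IsCoprime.of_mul_right_right hc1)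
      hu1 (by omega) (by linarith)
    have ho : Odd (m^4) := by
      rw [hm] at hodd
      exact (Int.odd_mul.1 hodd).2
    have := pow4_mod8 m ho
    omega

theorem case_plus (a b x y : ℤ) (hy : ¬ (3:ℤ) ∣ y)
    (h1 : y^2 = 11*(9*a^2*b+10*b^3)+6*(3*a^3+30*a*b^2))
    (h2 : x^2 = -(3*a^3+30*a*b^2)-2*(9*a^2*b+10*b^3)) : False := by
  have hs : ∀ t : ℤ, t^2 % 3 = 0 ∨ t^2 % 3 = 1 := by
    intro t
    have : t % 3 = 0 ∨ t % 3 = 1 ∨ t % 3 = 2 := by omega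
    rcases this with h | h | h <;> simp [pow_two, Int.mul_emod, h]
  have hy1 : y^2 % 3 = 1 := by
    have : y % 3 = 1 ∨ y % 3 = 2 := by omega
    rcases this with h | h <;> simp [pow_two, Int.mul_emod, h]
  have hx1 := hs x
  obtain ⟨B, hB⟩ : ∃ B, B = b^3 := ⟨_, rfl⟩
  have e1 : y^2 = 3*(33*a^2*b+6*a^3+60*a*b^2+36*B)+2*B := by rw [h1, hB]; ring
  have e2 : x^2 = 3*(-a^3-10*a*b^2-6*a^2*b-7*B)+B := by rw [h2, hB]; ring
  omega

theorem cop_ab (a b x y : ℤ) (hxy : IsCoprime x y)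
    (A1 A2 B1 B2 : ℤ) (h1 : x^2 = A1*a+B1*b) (h2 : y^2 = A2*a+B2*b) : IsCoprime a b := by
  have h : IsCoprime (x^2) (y^2) := hxy.pow
  obtain ⟨s, t, hst⟩ := h
  exact ⟨s*A1+t*A2, s*B1+t*B2, by rw [← hst, h1, h2]; ring⟩

theorem case_minus (a b x y : ℤ) (hxy : IsCoprime x y) (hx : Odd x) (hy : ¬ (3:ℤ) ∣ y)
    (h1 : y^2 = 11*(9*a^2*b+10*b^3)-6*(3*a^3+30*a*b^2))
    (h2 : x^2 = 23*(3*a^3+30*a*b^2)-42*(9*a^2*b+10*b^3)) : False := by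
  have hab : IsCoprime a b := cop_ab a b x y hxy (69*a^2+690*b^2) (-18*a^2-180*b^2)
    (-42*(9*a^2+10*b^2)) (11*(9*a^2+10*b^2)) (by rw [h2]; ring) (by rw [h1]; ring)
  obtain ⟨c, hc⟩ : ∃ c, c = a - 2*b := ⟨_, rfl⟩
  have ha : a = c+2*b := by omega
  have hb3 : ¬ (3:ℤ) ∣ b := by
    rintro ⟨k, rfl⟩
    apply hy
    apply hp3.dvd_of_dvd_pow (n := 2)
    rw [h1]
    exact ⟨11*(9*a^2*k+90*k^3)-2*(3*a^3+30*a*(3*k)^2), by ring⟩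
  have h3 : x^2 = 3*(c*(23*c^2+12*b*c+2*b^2)) := by rw [h2, ha]; ring
  have hcb : IsCoprime c b := by
    have := IsCoprime.add_mul_right_left hab (-2)
    have e : a + -2*b = c := by omega
    rwa [e] at this
  have hcodd : Odd c := by
    have h4 : Odd (x^2) := hx.pow
    rw [h3] at h4
    exact (Int.odd_mul.1 (Int.odd_mul.1 h4).2).1
  have h3c : (3:ℤ) ∣ c := by
    have hx3 : (3:ℤ) ∣ x := hp3.dvd_of_dvd_pow (n := 2) (Dvd.intro _ h3.symm)
    obtain ⟨k, hk⟩ := hx3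
    have h5 : c*(23*c^2+12*b*c+2*b^2) = 3*k^2 := by rw [hk] at h3; linarith
    rcases hp3.dvd_or_dvd (Dvd.intro _ h5.symm) with h | h
    · exact h
    · exfalso
      have hb1 : b^2 % 3 = 1 := by
        have : b % 3 = 1 ∨ b % 3 = 2 := by omega
        rcases this with h | h <;> simp [pow_two, Int.mul_emod, h]
      have hc1 : c^2 % 3 = 0 ∨ c^2 % 3 = 1 := by
        have : c % 3 = 0 ∨ c % 3 = 1 ∨ c % 3 = 2 := by omega
        rcases this with h | h | h <;> simp [pow_two, Int.mul_emod, h]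
      have e : 12*b*c = 12*(b*c) := by ring
      rw [e] at h
      omega
  obtain ⟨c1, hc1⟩ := h3c
  obtain ⟨x1, rfl⟩ : (3:ℤ) ∣ x := hp3.dvd_of_dvd_pow (n := 2) (Dvd.intro _ h3.symm)
  have h6 : c1*(23*c^2+12*b*c+2*b^2) = x1^2 := by
    have : 3*(c*(23*c^2+12*b*c+2*b^2)) = 9*(c1*(23*c^2+12*b*c+2*b^2)) := by
      nth_rewrite 1 [hc1]; ring
    nlinarith
  have hc1o : Odd c1 := by rw [hc1] at hcodd; exact (Int.odd_mul.1 hcodd).2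
  have hcop : IsCoprime c1 (23*c^2+12*b*c+2*b^2) := by
    have a1 : IsCoprime c1 2 := by
      obtain ⟨k, hk⟩ := hc1o
      exact ⟨1, -k, by rw [hk]; ring⟩
    have a2 : IsCoprime c1 b := by rw [hc1] at hcb; exact IsCoprime.of_mul_left_right hcb
    have a3 : IsCoprime c1 (2*b^2) := a1.mul_right a2.pow_right
    have := IsCoprime.add_mul_left_right a3 (69*c+36*b)
    have e : 2*b^2 + c1*(69*c+36*b) = 23*c^2+12*b*c+2*b^2 := by rw [hc1]; ring
    rwa [e] at this
  obtain ⟨f, hf⟩ := Int.sq_of_isCoprime hcop.symm (by rw [mul_comm]; exact h6)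
  have e : 23*c^2+12*b*c+2*b^2 = 2*(b+3*c)^2+5*c^2 := by ring
  rw [e] at hf
  have hc8 : c^2 % 8 = 1 := sq_mod8_odd hcodd
  have hk8 : (b+3*c)^2 % 8 = 0 ∨ (b+3*c)^2 % 8 = 1 ∨ (b+3*c)^2 % 8 = 4 := by
    have : ∀ t : ℤ, t^2 % 8 = 0 ∨ t^2 % 8 = 1 ∨ t^2 % 8 = 4 := by
      intro t
      have : t % 8 = 0 ∨ t % 8 = 1 ∨ t % 8 = 2 ∨ t % 8 = 3 ∨ t % 8 = 4 ∨ t % 8 = 5 ∨ t % 8 = 6 ∨ t % 8 = 7 := by omega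
      rcases this with h | h | h | h | h | h | h | h <;> simp [pow_two, Int.mul_emod, h]
    exact this _
  have hf8 : f^2 % 8 = 0 ∨ f^2 % 8 = 1 ∨ f^2 % 8 = 4 := by
    have : ∀ t : ℤ, t^2 % 8 = 0 ∨ t^2 % 8 = 1 ∨ t^2 % 8 = 4 := by
      intro t
      have : t % 8 = 0 ∨ t % 8 = 1 ∨ t % 8 = 2 ∨ t % 8 = 3 ∨ t % 8 = 4 ∨ t % 8 = 5 ∨ t % 8 = 6 ∨ t % 8 = 7 := by omega
      rcases this with h | h | h | h | h | h | h | h <;> simp [pow_two, Int.mul_emod, h]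
    exact this _
  have hc0 : 0 ≤ c^2 := sq_nonneg _
  have hk0 : 0 ≤ (b+3*c)^2 := sq_nonneg _
  have hf0 : 0 ≤ f^2 := sq_nonneg _
  omega

theorem case_zero (a b x y : ℤ) (hxy : IsCoprime x y) (hx : Odd x) (hy : ¬ (3:ℤ) ∣ y)
    (h1 : y^2 = 9*a^2*b+10*b^3)
    (h2 : x^2 = (3*a^3+30*a*b^2)-2*(9*a^2*b+10*b^3)) : False := by
  have hab : IsCoprime a b := cop_ab a b x y hxy (3*a^2+30*b^2) 0
    (-2*(9*a^2+10*b^2)) (9*a^2+10*b^2) (by rw [h2]; ring) (by rw [h1]; ring)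
  have hb3 : ¬ (3:ℤ) ∣ b := by
    rintro ⟨k, rfl⟩
    apply hy
    apply hp3.dvd_of_dvd_pow (n := 2)
    rw [h1]
    exact ⟨9*a^2*k+90*k^3, by ring⟩
  have hao : Odd a := by
    have h4 : Odd (x^2) := hx.pow
    have e : x^2 = a*(3*a^2+30*b^2) + 2*(-(9*a^2*b+10*b^3)) := by rw [h2]; ring
    rw [e] at h4
    have h5 : Odd (a*(3*a^2+30*b^2)) := by
      rw [Int.odd_add] at h4
      exact h4.2 (even_two_mul _)
    exact (Int.odd_mul.1 h5).1
  have hy' : b*(9*a^2+10*b^2) = y^2 := by rw [h1]; ring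
  have hcb9 : IsCoprime b (9*a^2) := by
    have h3 : IsCoprime b 3 := (hp3.coprime_iff_not_dvd.2 hb3).symm
    have h9 : IsCoprime b (3^2) := h3.pow_right
    norm_num at h9
    exact h9.mul_right hab.symm.pow_right
  have hcop : IsCoprime b (9*a^2+10*b^2) := by
    have := IsCoprime.add_mul_left_right hcb9 (10*b)
    have e : 9*a^2 + b*(10*b) = 9*a^2+10*b^2 := by ring
    rwa [e] at this
  have hy0 : y ≠ 0 := by rintro rfl; simp at hy
  have ha0 : a ≠ 0 := by rintro rfl; simp at hao
  have hq0 : 0 < 9*a^2+10*b^2 := by positivity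
  have hb0 : 0 < b := by
    have : 0 < y^2 := by positivity
    rw [← hy'] at this
    exact (pos_iff_pos_of_mul_pos this).2 hq0
  obtain ⟨s, hs⟩ : ∃ s, b = s^2 := by
    obtain ⟨s, h | h⟩ := Int.sq_of_isCoprime hcop hy'
    · exact ⟨s, h⟩
    · have := sq_nonneg s; omega
  obtain ⟨t, ht, ht0⟩ : ∃ t, 9*a^2+10*b^2 = t^2 ∧ 0 < t := by
    obtain ⟨t, h | h⟩ := Int.sq_of_isCoprime hcop.symm (by rw [mul_comm]; exact hy')
    · refine ⟨|t|, by rw [sq_abs]; exact h, ?_⟩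
      rw [abs_pos]; rintro rfl; simp at h; omega
    · have := sq_nonneg t; omega
  have ha8 : a^2 % 8 = 1 := sq_mod8_odd hao
  have sq8 : ∀ t : ℤ, t^2 % 8 = 0 ∨ t^2 % 8 = 1 ∨ t^2 % 8 = 4 := by
    intro t
    have : t % 8 = 0 ∨ t % 8 = 1 ∨ t % 8 = 2 ∨ t % 8 = 3 ∨ t % 8 = 4 ∨ t % 8 = 5 ∨ t % 8 = 6 ∨ t % 8 = 7 := by omega
    rcases this with h | h | h | h | h | h | h | h <;> simp [pow_two, Int.mul_emod, h]
  have hse : Even s := by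
    by_contra hso
    have hso : Odd s := by simpa using hso
    have hbo : Odd b := by rw [hs]; exact hso.pow
    have hb8 : b^2 % 8 = 1 := sq_mod8_odd hbo
    have := sq8 t
    omega
  obtain ⟨r, rfl⟩ := hse.two_dvd
  have hr0 : r ≠ 0 := by rintro rfl; simp at hs; omega
  -- a is 3 mod 8
  have ha3 : (3*a) % 8 = 1 := by
    have hx8 : x^2 % 8 = 1 := sq_mod8_odd hx
    have e : x^2 = 3*a*a^2 + 8*(60*a*r^4-9*a^2*r^2-160*r^6) := by rw [h2, hs]; ring
    obtain ⟨g, hg⟩ : ∃ g, a^2 = 8*g+1 := ⟨a^2/8, by omega⟩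
    have e' : x^2 = 3*a+8*(3*a*g + (60*a*r^4-9*a^2*r^2-160*r^6)) := by rw [e, hg]; ring
    omega
  have hto : Odd t := by
    by_contra hte
    have hte : Even t := by simpa using hte
    obtain ⟨g, rfl⟩ := hte.two_dvd
    have e : (2*g)^2 = 4*g^2 := by ring
    have e2 : 10*b^2 = 8*(20*r^4) := by rw [hs]; ring
    omega
  obtain ⟨u, hu⟩ : ∃ u, t - 3*a = 2*u := by
    obtain ⟨k, hk⟩ := hto
    obtain ⟨l, hl⟩ := hao
    exact ⟨k-3*l-1, by omega⟩
  obtain ⟨v, hv⟩ : ∃ v, v = u + 3*a := ⟨_, rfl⟩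
  have htu : t = u+v := by omega
  have huv : u*v = 40*r^4 := by
    have : 4*(u*v) = t^2-9*a^2 := by
      have e1 : 2*u = t-3*a := hu.symm
      have e2 : 2*v = t+3*a := by omega
      calc 4*(u*v) = (2*u)*(2*v) := by ring
        _ = t^2-9*a^2 := by rw [e1, e2]; ring
    have e3 : 10*b^2 = 160*r^4 := by rw [hs]; ring
    omega
  have huvpos : 0 < u*v := by rw [huv]; positivity
  have hu0 : 0 < u := by
    by_contra h
    have h1 : u ≤ 0 := by omega
    have h2 : 0 < v := by omega
    nlinarith
  have hv0 : 0 < v := (pos_iff_pos_of_mul_pos huvpos).1 hu0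
  have hcuv : IsCoprime u v := by
    rw [Int.isCoprime_iff_gcd_eq_one]
    by_contra hne
    obtain ⟨p, hp, hpd⟩ := Nat.exists_prime_and_dvd hne
    have hpI : Prime (p:ℤ) := Nat.prime_iff_prime_int.1 hp
    have hpu : (p:ℤ) ∣ u := (Int.natCast_dvd_natCast.2 hpd).trans (Int.gcd_dvd_left ..)
    have hpv : (p:ℤ) ∣ v := (Int.natCast_dvd_natCast.2 hpd).trans (Int.gcd_dvd_right ..)
    have hpa : (p:ℤ) ∣ 3*a := by
      have : 3*a = v-u := by omega
      rw [this]; exact dvd_sub hpv hpu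
    have hbad : ¬ ((p:ℤ) ∣ r) := by
      intro hr
      have hpb : (p:ℤ) ∣ b := by rw [hs]; exact (hr.mul_left 2).pow (by norm_num)
      rcases hpI.dvd_or_dvd hpa with h | h
      · have : p = 3 := by
          have := Int.natCast_dvd_natCast.1 (show ((p:ℕ):ℤ) ∣ ((3:ℕ):ℤ) from by exact_mod_cast h)
          exact (Nat.prime_dvd_prime_iff_eq hp Nat.prime_three).1 this
        subst this; exact hb3 (by exact_mod_cast hpb)
      · exact hpI.not_unit (hab.isUnit_of_dvd' h hpb)
    have hp2 : (p:ℤ)*p ∣ 40*r^4 := by rw [← huv]; exact mul_dvd_mul hpu hpv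
    have hcr : IsCoprime ((p:ℤ)*p) (r^4) := by
      have : IsCoprime (p:ℤ) (r^4) := (hpI.coprime_iff_not_dvd.2 hbad).pow_right
      exact this.mul_left this
    have h40 : (p:ℤ)*p ∣ 40 := hcr.dvd_of_dvd_mul_right hp2
    have h40' : p*p ∣ 40 := by exact_mod_cast h40
    have hple : p ≤ 6 := by
      have := Nat.le_of_dvd (by norm_num) h40'
      nlinarith
    interval_cases p
    · norm_num at hp
    · norm_num at hp
    · omega
    · norm_num at h40'
    · norm_num at hp
    · norm_num at h40'
    · norm_num at hp
  have hfin : ∃ m n, v = m^4 ∧ u = 40*n^4 := by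
    rcases Int.even_or_odd v with hve | hvo
    · exfalso
      have huo : Odd u := by
        rcases Int.even_or_odd u with h | h
        · exfalso
          obtain ⟨k, hk⟩ := h.two_dvd
          obtain ⟨l, hl⟩ := hve.two_dvd
          omega
        · exact h
      have h8 : (8:ℤ) ∣ v := by
        have : IsCoprime (8:ℤ) u := by
          obtain ⟨k, hk⟩ := huo
          have : IsCoprime u 2 := ⟨1, -k, by rw [hk]; ring⟩
          have h3 : IsCoprime u (2^3) := this.pow_right
          norm_num at h3; exact h3.symm
        exact this.dvd_of_dvd_mul_left ⟨5*r^4, by rw [huv]; ring⟩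
      have := split40 hcuv.symm hv0 hu0 (by rw [mul_comm]; exact huv) huo
      omega
    · have h8 : (8:ℤ) ∣ u := by
        have : IsCoprime (8:ℤ) v := by
          obtain ⟨k, hk⟩ := hvo
          have : IsCoprime v 2 := ⟨1, -k, by rw [hk]; ring⟩
          have h3 : IsCoprime v (2^3) := this.pow_right
          norm_num at h3; exact h3.symm
        exact this.dvd_of_dvd_mul_right ⟨5*r^4, by rw [huv]; ring⟩
      rcases split40 hcuv hu0 hv0 huv hvo with h | h
      · exact h.2
      · omega
  obtain ⟨m, n, hm, hn⟩ := hfin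
  have hn0 : n ≠ 0 := by rintro rfl; simp at hn; omega
  have hm0 : m ≠ 0 := by rintro rfl; simp at hm; omega
  have hr2 : r^2 = m^2*n^2 := by
    have h4 : (r^2)^2 = (m^2*n^2)^2 := by
      rw [hm, hn] at huv
      have : 40*((r^2)^2) = 40*((m^2*n^2)^2) := by linear_combination -huv
      omega
    exact (pow_left_inj₀ (sq_nonneg r) (by positivity) two_ne_zero).1 h4
  have hbmn : b = (2*m*n)^2 := by rw [hs]; linear_combination 4*hr2
  have h3mn : ∀ q, q ∣ 2*m*n → ¬ ((3:ℤ) ∣ q) := by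
    intro q hq h3
    apply hb3
    rw [hbmn]
    exact (h3.trans hq).pow (by norm_num)
  have h3a : 3*a = m^4-40*n^4 := by omega
  have hcmn : IsCoprime m n := by
    rw [hm, hn] at hcuv
    have := IsCoprime.of_mul_left_right hcuv
    exact ((IsCoprime.pow_iff (by norm_num) (by norm_num)).1 this).symm
  have hmo : Odd m := by
    rcases Int.even_or_odd m with h | h
    · exfalso
      obtain ⟨k, rfl⟩ := h.two_dvd
      have : 3*a = 2*(8*k^4-20*n^4) := by rw [h3a]; ring
      omega
    · exact h
  refine partF m n hcmn hmo hn0 ?_ (h3mn m ⟨2*n, by ring⟩) (h3mn n ⟨2*m, by ring⟩) _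
    (3*x/((2*m*n : ℤ):ℚ)^3) rfl ?_
  · intro h5
    have d1 : (5:ℤ) ∣ v := by rw [hm]; exact h5.pow (by norm_num)
    have d2 : (5:ℤ) ∣ u := by rw [hn]; exact ⟨8*n^4, by ring⟩
    have := hcuv.isUnit_of_dvd' d2 d1
    norm_num [Int.isUnit_iff] at this
  · have hZ : 9*x^2 = (m^4-24*m^2*n^2-40*n^4)^3 - 18*(m^4-24*m^2*n^2-40*n^4)*(2*m*n)^4
        - 72*(2*m*n)^6 := by
      have e : m^4-24*m^2*n^2-40*n^4 = 3*a-6*b := by rw [h3a, hbmn]; ring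
      have e4 : (2*m*n)^4 = b^2 := by rw [hbmn]; ring
      have e6 : (2*m*n)^6 = b^3 := by rw [hbmn]; ring
      rw [e, e4, e6, h2]; ring
    have hE : ((2*m*n : ℤ):ℚ) ≠ 0 := by
      have : 2*m*n ≠ 0 := by positivity
      exact_mod_cast this
    have hZ' : (9:ℚ)*x^2 = ((m^4-24*m^2*n^2-40*n^4 : ℤ):ℚ)^3
        - 18*((m^4-24*m^2*n^2-40*n^4 : ℤ):ℚ)*((2*m*n:ℤ):ℚ)^4 - 72*((2*m*n:ℤ):ℚ)^6 := by
      exact_mod_cast hZ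
    generalize ((m^4-24*m^2*n^2-40*n^4 : ℤ):ℚ) = C at *
    generalize ((2*m*n : ℤ):ℚ) = E at *
    field_simp
    linear_combination hZ'


/-- Enumeration of the possible small units and near-units. -/
theorem enum_tau30 : ∀ A ∈ Finset.Icc (0:ℤ) 36, ∀ B ∈ Finset.Icc (-6:ℤ) 6, ∀ k ∈ Finset.Icc (-10:ℤ) 10,
    A^2-30*B^2 = k^3 → (A = 0 ∧ B = 0) ∨ (k = 1 ∧ A = 1 ∧ B = 0) ∨ (k = 1 ∧ A = 11 ∧ B = 2) ∨
    (k = 1 ∧ A = 11 ∧ B = -2) ∨ (k = 4 ∧ A = 8 ∧ B = 0) ∨ (k = 9 ∧ A = 27 ∧ B = 0) ∨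
    (k = -5 ∧ A = 25 ∧ B = 5) ∨ (k = -5 ∧ A = 25 ∧ B = -5) ∨
    (k = 6 ∧ A = 36 ∧ B = 6) ∨ (k = 6 ∧ A = 36 ∧ B = -6) := by decide +kernel

def Concl (w v : ℤ) : Prop := ∃ a b : ℤ,
    (w = 3*a^3+30*a*b^2 ∧ v = 9*a^2*b+10*b^3) ∨
    (w = 11*(3*a^3+30*a*b^2)+20*(9*a^2*b+10*b^3) ∧ v = 11*(9*a^2*b+10*b^3)+6*(3*a^3+30*a*b^2)) ∨
    (w = 11*(3*a^3+30*a*b^2)-20*(9*a^2*b+10*b^3) ∧ v = 11*(9*a^2*b+10*b^3)-6*(3*a^3+30*a*b^2))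

theorem descent_core (w v z p q A B k : ℤ) (hA : 0 ≤ A) (hA' : A ≤ 36) (hB : |B| ≤ 6)
    (hk : A^2-30*B^2 = k^3) (hpq : ¬ (A = 0 ∧ B = 0)) (hkz : k*z = 3*p^2-10*q^2)
    (h1 : 3*p^3+30*p*q^2 = A*w+10*B*v) (h2 : 9*p^2*q+10*q^3 = A*v+3*B*w) : Concl w v := by
  obtain ⟨hB1, hB2⟩ := abs_le.1 hB
  have hk10 : k ≤ 10 := by
    by_contra h
    have h11 : 11 ≤ k := by omega
    have : 11^3 ≤ k^3 := by gcongr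
    nlinarith
  have hk10' : -10 ≤ k := by
    by_contra h
    have h11 : 11 ≤ -k := by omega
    have : 11^3 ≤ (-k)^3 := by gcongr
    nlinarith
  have := enum_tau30 A (Finset.mem_Icc.2 ⟨hA, hA'⟩) B (Finset.mem_Icc.2 ⟨hB1, hB2⟩) k
    (Finset.mem_Icc.2 ⟨hk10', hk10⟩) hk
  have p2 : Prime (2:ℤ) := Int.prime_two
  have p5 : Prime (5:ℤ) := Int.prime_iff_natAbs_prime.2 (by norm_num)
  have c2 : ∀ t : ℤ, (2:ℤ) ∣ t^2 → (2:ℤ) ∣ t := fun t h => p2.dvd_of_dvd_pow h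
  have c3 : ∀ t : ℤ, (3:ℤ) ∣ t^2 → (3:ℤ) ∣ t := fun t h => hp3.dvd_of_dvd_pow h
  have c5 : ∀ t : ℤ, (5:ℤ) ∣ t^2 → (5:ℤ) ∣ t := fun t h => p5.dvd_of_dvd_pow h
  rcases this with h | ⟨rfl, rfl, rfl⟩ | ⟨rfl, rfl, rfl⟩ | ⟨rfl, rfl, rfl⟩ | ⟨rfl, rfl, rfl⟩ |
    ⟨rfl, rfl, rfl⟩ | ⟨rfl, rfl, rfl⟩ | ⟨rfl, rfl, rfl⟩ | ⟨rfl, rfl, rfl⟩ | ⟨rfl, rfl, rfl⟩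
  · exact absurd h hpq
  · exact ⟨p, q, Or.inl ⟨by linear_combination -h1, by linear_combination -h2⟩⟩
  · refine ⟨p, q, Or.inr (Or.inr ⟨?_, ?_⟩)⟩
    · linear_combination -11*h1+20*h2
    · linear_combination 6*h1-11*h2
  · refine ⟨p, q, Or.inr (Or.inl ⟨?_, ?_⟩)⟩
    · linear_combination -11*h1-20*h2
    · linear_combination -6*h1-11*h2
  · obtain ⟨p', rfl⟩ := c2 p (by omega)
    have e : (2*p')^2 = 4*p'^2 := by ring
    obtain ⟨q', rfl⟩ := c2 q (by omega)
    refine ⟨p', q', Or.inl ⟨?_, ?_⟩⟩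
    · apply mul_left_cancel₀ (show (8:ℤ) ≠ 0 by norm_num)
      linear_combination -h1
    · apply mul_left_cancel₀ (show (8:ℤ) ≠ 0 by norm_num)
      linear_combination -h2
  · obtain ⟨q', rfl⟩ := c3 q (by omega)
    have e : (3*q')^2 = 9*q'^2 := by ring
    obtain ⟨p', rfl⟩ := c3 p (by omega)
    refine ⟨p', q', Or.inl ⟨?_, ?_⟩⟩
    · apply mul_left_cancel₀ (show (27:ℤ) ≠ 0 by norm_num)
      linear_combination -h1
    · apply mul_left_cancel₀ (show (27:ℤ) ≠ 0 by norm_num)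
      linear_combination -h2
  · obtain ⟨p', rfl⟩ := c5 p (by omega)
    refine ⟨2*q-5*p', 3*p'-q, Or.inr (Or.inl ⟨?_, ?_⟩)⟩
    · apply mul_left_cancel₀ (show (-125:ℤ) ≠ 0 by norm_num)
      linear_combination -25*h1+50*h2
    · apply mul_left_cancel₀ (show (-125:ℤ) ≠ 0 by norm_num)
      linear_combination 15*h1-25*h2
  · obtain ⟨p', rfl⟩ := c5 p (by omega)
    refine ⟨-2*q-5*p', -3*p'-q, Or.inr (Or.inr ⟨?_, ?_⟩)⟩
    · apply mul_left_cancel₀ (show (-125:ℤ) ≠ 0 by norm_num)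
      linear_combination -25*h1-50*h2
    · apply mul_left_cancel₀ (show (-125:ℤ) ≠ 0 by norm_num)
      linear_combination -15*h1-25*h2
  · obtain ⟨p', rfl⟩ := c2 p (by omega)
    obtain ⟨q', rfl⟩ := c3 q (by omega)
    refine ⟨2*p'-5*q', 3*q'-p', Or.inr (Or.inl ⟨?_, ?_⟩)⟩
    · apply mul_left_cancel₀ (show (216:ℤ) ≠ 0 by norm_num)
      linear_combination -36*h1+60*h2
    · apply mul_left_cancel₀ (show (216:ℤ) ≠ 0 by norm_num)
      linear_combination 18*h1-36*h2
  · obtain ⟨p', rfl⟩ := c2 p (by omega)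
    obtain ⟨q', rfl⟩ := c3 q (by omega)
    refine ⟨2*p'+5*q', 3*q'+p', Or.inr (Or.inr ⟨?_, ?_⟩)⟩
    · apply mul_left_cancel₀ (show (216:ℤ) ≠ 0 by norm_num)
      linear_combination -36*h1-60*h2
    · apply mul_left_cancel₀ (show (216:ℤ) ≠ 0 by norm_num)
      linear_combination -18*h1-36*h2

set_option maxHeartbeats 1000000 in
theorem descent (w v z : ℤ) (hz : 0 < z) (hw : 0 < w) (hwz : IsCoprime w z)
    (h : 3*w^2-10*v^2 = z^3) : Concl w v := by
  obtain ⟨t, g, hg⟩ : ∃ t g, v = t*w + g*z^3 := by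
    obtain ⟨s, s', hs⟩ := (hwz.pow_right : IsCoprime w (z^3))
    exact ⟨v*s, v*s', by linear_combination -v*hs⟩
  obtain ⟨T, hT⟩ : ∃ T, 10*t^2 - 3 = z^3*T := by
    have : z^3 ∣ w^2*(10*t^2-3) := ⟨-1 - 20*t*w*g - 10*g^2*z^3, by
      rw [hg] at h; linear_combination -h⟩
    exact (hwz.pow : IsCoprime (w^2) (z^3)).symm.dvd_of_dvd_mul_left this
  -- real data
  have hzR : (0:ℝ) < z := by exact_mod_cast hz
  have hwR : (0:ℝ) < w := by exact_mod_cast hw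
  obtain ⟨α, hα⟩ : ∃ α, α = Real.sqrt 3 := ⟨_, rfl⟩
  obtain ⟨γ, hγ⟩ : ∃ γ, γ = Real.sqrt 10 := ⟨_, rfl⟩
  have hα0 : 0 < α := by rw [hα]; positivity
  have hγ0 : 0 < γ := by rw [hγ]; positivity
  have hα2 : α^2 = 3 := by rw [hα]; exact Real.sq_sqrt (by norm_num)
  have hγ2 : γ^2 = 10 := by rw [hγ]; exact Real.sq_sqrt (by norm_num)
  have hαγ : (α*γ)^2 = 30 := by rw [mul_pow, hα2, hγ2]; norm_num
  have hαγ0 : 0 < α*γ := by positivity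
  have hαγu : α*γ < 5.4773 := by
    by_contra hh
    push Not at hh
    nlinarith
  have hαγl : 5.477 < α*γ := by
    by_contra hh
    push Not at hh
    nlinarith
  have hprod : (α*w+γ*v)*(α*w-γ*v) = (z:ℝ)^3 := by
    have hR : (3:ℝ)*w^2-10*v^2 = z^3 := by exact_mod_cast h
    rw [← hR, ← hα2, ← hγ2]; ring
  have hz3 : (0:ℝ) < (z:ℝ)^3 := by positivity
  have hpos : 0 < α*w+γ*v ∧ 0 < α*w-γ*v := by
    have hs : 0 < (α*w+γ*v) + (α*w-γ*v) := by
      have : 0 < α*w := by positivity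
      linarith
    rw [← hprod] at hz3
    rcases pos_and_pos_or_neg_and_neg_of_mul_pos hz3 with hh | hh
    · exact hh
    · linarith [hh.1, hh.2]
  obtain ⟨ξ, hξ⟩ : ∃ ξ, ξ = α*w+γ*v := ⟨_, rfl⟩
  obtain ⟨η, hη⟩ : ∃ η, η = α*w-γ*v := ⟨_, rfl⟩
  rw [← hξ, ← hη] at hprod hpos
  obtain ⟨hξ0, hη0⟩ := hpos
  obtain ⟨x1, hx1, hx10⟩ : ∃ x1 : ℝ, x1^3 = ξ ∧ 0 < x1 :=
    ⟨ξ^((1:ℝ)/3), by rw [← Real.rpow_natCast, ← Real.rpow_mul hξ0.le]; norm_num, by positivity⟩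
  obtain ⟨x2, hx2, hx20⟩ : ∃ x2 : ℝ, x2^3 = η ∧ 0 < x2 :=
    ⟨η^((1:ℝ)/3), by rw [← Real.rpow_natCast, ← Real.rpow_mul hη0.le]; norm_num, by positivity⟩
  have hx12 : x1*x2 = z := by
    have : (x1*x2)^3 = (z:ℝ)^3 := by rw [mul_pow, hx1, hx2, hprod]
    exact (pow_left_inj₀ (by positivity) hzR.le (by norm_num)).1 this
  obtain ⟨M, hM⟩ : ∃ M : Matrix (Fin 2) (Fin 2) ℝ,
    M = !![α+γ*t, γ*z; α-γ*t, -(γ*z)] := ⟨_, rfl⟩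
  have hdet : M.det = -2*(α*γ)*z := by
    rw [hM, Matrix.det_fin_two_of]; ring
  obtain ⟨κ, hκ0, hκ⟩ := minkForms M (by
      rw [hdet]
      have : 0 < (α*γ)*z := by positivity
      nlinarith) ![3.31*x1, 3.31*x2] (by
      intro i; fin_cases i
      · simp; positivity
      · simp; positivity) (by
      rw [hdet, Fin.prod_univ_two]
      simp only [Matrix.cons_val_zero, Matrix.cons_val_one]
      have e : -2*(α*γ)*(z:ℝ) = -(2*(α*γ)*z) := by ring
      rw [e, abs_neg, abs_of_pos (by positivity)]
      have e2 : 3.31*x1*(3.31*x2) = 10.9561*z := by rw [← hx12]; ring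
      rw [e2]
      nlinarith)
  obtain ⟨p, hp⟩ : ∃ p, p = κ 0 := ⟨_, rfl⟩
  obtain ⟨l, hl⟩ : ∃ l, l = κ 1 := ⟨_, rfl⟩
  obtain ⟨q, hq⟩ : ∃ q, q = t*p+z*l := ⟨_, rfl⟩
  have hqR : (q:ℝ) = t*p+z*l := by rw [hq]; push_cast; ring
  have b1 : |α*p+γ*q| < 3.31*x1 := by
    have := hκ 0
    rw [hM] at this
    simp [Matrix.mulVec, dotProduct, Fin.sum_univ_two] at this
    rw [← hp, ← hl] at this
    have e : α*p+γ*q = (α+γ*t)*p + γ*z*l := by rw [hqR]; ring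
    rw [e]; convert this using 1
  have b2 : |α*p-γ*q| < 3.31*x2 := by
    have := hκ 1
    rw [hM] at this
    simp [Matrix.mulVec, dotProduct, Fin.sum_univ_two] at this
    rw [← hp, ← hl] at this
    have e : α*p-γ*q = (α-γ*t)*p + -(γ*z*l) := by rw [hqR]; ring
    rw [e]; convert this using 1
  have hpq0 : ¬ (p = 0 ∧ q = 0) := by
    rintro ⟨h1, h2⟩
    apply hκ0
    have hl0 : l = 0 := by
      rw [h2, h1] at hq
      have : z*l = 0 := by linarith
      exact (mul_eq_zero.1 this).resolve_left hz.ne'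
    funext i
    fin_cases i
    · simp [← hp, h1]
    · simp [← hl, hl0]
  -- W, Y
  obtain ⟨W, hW⟩ : ∃ W, W = 3*p^3+30*p*q^2 := ⟨_, rfl⟩
  obtain ⟨Y, hY⟩ : ∃ Y, Y = 9*p^2*q+10*q^3 := ⟨_, rfl⟩
  obtain ⟨S, hS⟩ : ∃ S, Y - t*W = z^3*S :=
    ⟨10*l^3 + T*(-3*p^2*q+t*p^3), by rw [hY, hW, hq]; linear_combination (-3*p^2*(t*p+z*l)+t*p^3)*hT⟩
  obtain ⟨B, hB⟩ : ∃ B, Y*w - W*v = z^3*B :=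
    ⟨w*S - W*g, by rw [hg]; linear_combination w*hS⟩
  obtain ⟨A, hA⟩ : ∃ A, 3*W*w - 10*Y*v = z^3*A :=
    ⟨w*(-10*t*S - W*T) - 10*Y*g, by rw [hg]; linear_combination (-10*t*w)*hS - W*w*hT⟩
  obtain ⟨k, hk⟩ : ∃ k, k*z = 3*p^2-10*q^2 :=
    ⟨-(p^2*z^2*T) - 20*t*p*l - 10*z*l^2, by rw [hq]; linear_combination p^2*hT⟩
  have hz0 : z^3 ≠ 0 := by positivity
  have h1 : W = A*w+10*B*v := by
    apply mul_left_cancel₀ hz0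
    linear_combination -W*h + w*hA + 10*v*hB
  have h2 : Y = A*v+3*B*w := by
    apply mul_left_cancel₀ hz0
    linear_combination -Y*h + v*hA + 3*w*hB
  have hk3 : A^2-30*B^2 = k^3 := by
    apply mul_left_cancel₀ hz0
    have e1 : 3*W^2-10*Y^2 = (k*z)^3 := by rw [hk, hW, hY]; ring
    have e2 : 3*W^2-10*Y^2 = (A^2-30*B^2)*z^3 := by rw [h1, h2, ← h]; ring
    linear_combination e1 - e2
  have hne : ¬ (A = 0 ∧ B = 0) := by
    rintro ⟨rfl, rfl⟩
    have hW0 : 3*p^3+30*p*q^2 = 0 := by rw [← hW, h1]; ring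
    have hY0 : 9*p^2*q+10*q^3 = 0 := by rw [← hY, h2]; ring
    apply hpq0
    have hp0 : p = 0 := by
      by_contra hp0
      have : p*(3*p^2+30*q^2) = 0 := by linear_combination hW0
      rcases mul_eq_zero.1 this with h | h
      · exact hp0 h
      · have : 0 < p^2 := by positivity
        nlinarith [sq_nonneg q]
    refine ⟨hp0, ?_⟩
    rw [hp0] at hY0
    have : q^3 = 0 := by linarith
    exact pow_eq_zero_iff (by norm_num) |>.1 this
  -- bounds
  have t1 : (A + B*(α*γ))*ξ = (α*p+γ*q)^3 := by
    have e1 : (3*p^3+30*p*q^2 : ℝ) = A*w+10*B*v := by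
      have : 3*p^3+30*p*q^2 = A*w+10*B*v := by rw [← hW, h1]
      exact_mod_cast this
    have e2 : (9*p^2*q+10*q^3 : ℝ) = A*v+3*B*w := by
      have : 9*p^2*q+10*q^3 = A*v+3*B*w := by rw [← hY, h2]
      exact_mod_cast this
    have e3 : (α*p+γ*q)^3 = α*(3*p^3+30*p*q^2) + γ*(9*p^2*q+10*q^3) := by
      linear_combination (α*p^3+3*p^2*q*γ)*hα2 + (3*α*p*q^2+γ*q^3)*hγ2
    rw [e3, e1, e2, hξ]
    linear_combination B*γ*w*hα2 + B*α*v*hγ2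
  have t2 : (A - B*(α*γ))*η = (α*p-γ*q)^3 := by
    have e1 : (3*p^3+30*p*q^2 : ℝ) = A*w+10*B*v := by
      have : 3*p^3+30*p*q^2 = A*w+10*B*v := by rw [← hW, h1]
      exact_mod_cast this
    have e2 : (9*p^2*q+10*q^3 : ℝ) = A*v+3*B*w := by
      have : 9*p^2*q+10*q^3 = A*v+3*B*w := by rw [← hY, h2]
      exact_mod_cast this
    have e3 : (α*p-γ*q)^3 = α*(3*p^3+30*p*q^2) - γ*(9*p^2*q+10*q^3) := by
      linear_combination (α*p^3-3*p^2*q*γ)*hα2 + (3*α*p*q^2-γ*q^3)*hγ2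
    rw [e3, e1, e2, hη]
    linear_combination (-B*γ*w)*hα2 + B*α*v*hγ2
  have c1 : |A + B*(α*γ)| < 36.265 := by
    have : |A + B*(α*γ)| * ξ < 36.265*ξ := by
      calc |A + B*(α*γ)| * ξ = |α*p+γ*q|^3 := by
            rw [← abs_pow, ← t1, abs_mul, abs_of_pos hξ0]
        _ < (3.31*x1)^3 := by gcongr
        _ = 36.264691*ξ := by rw [mul_pow, hx1]; norm_num
        _ < 36.265*ξ := by nlinarith
    exact lt_of_mul_lt_mul_right this hξ0.le
  have c2 : |A - B*(α*γ)| < 36.265 := by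
    have : |A - B*(α*γ)| * η < 36.265*η := by
      calc |A - B*(α*γ)| * η = |α*p-γ*q|^3 := by
            rw [← abs_pow, ← t2, abs_mul, abs_of_pos hη0]
        _ < (3.31*x2)^3 := by gcongr
        _ = 36.264691*η := by rw [mul_pow, hx2]; norm_num
        _ < 36.265*η := by nlinarith
    exact lt_of_mul_lt_mul_right this hη0.le
  obtain ⟨c11, c12⟩ := abs_lt.1 c1
  obtain ⟨c21, c22⟩ := abs_lt.1 c2
  have hA1 : A ≤ 36 := by
    have : (A:ℝ) < 37 := by linarith
    have : A < 37 := by exact_mod_cast this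
    omega
  have hA2 : -36 ≤ A := by
    have : (-37:ℝ) < A := by linarith
    have : -37 < A := by exact_mod_cast this
    omega
  have hB1 : B ≤ 6 := by
    by_contra hh
    have : (7:ℤ) ≤ B := by omega
    have : (7:ℝ) ≤ B := by exact_mod_cast this
    have := mul_le_mul_of_nonneg_right this hαγ0.le
    linarith
  have hB2 : -6 ≤ B := by
    by_contra hh
    have : B ≤ (-7:ℤ) := by omega
    have : (B:ℝ) ≤ -7 := by exact_mod_cast this
    have := mul_le_mul_of_nonneg_right this hαγ0.le
    linarith
  rcases le_total 0 A with hA0 | hA0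
  · exact descent_core w v z p q A B k hA0 hA1 (abs_le.2 ⟨hB2, hB1⟩) hk3 hne hk
      (by rw [← hW, h1]) (by rw [← hY, h2])
  · refine descent_core w v z (-p) (-q) (-A) (-B) k (by omega) (by omega)
      (abs_le.2 ⟨by omega, by omega⟩) (by linear_combination hk3) (by omega)
      (by linear_combination hk) ?_ ?_
    · linear_combination hW - h1
    · linear_combination hY - h2

theorem main_thm (x y z : ℤ) (hg : Int.gcd x y = 1)
    (h : (x - y) ^ 4 + x ^ 4 + (x + y) ^ 4 = z ^ 3) : False := by
  have hxy : IsCoprime x y := Int.isCoprime_iff_gcd_eq_one.2 hg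
  have h' : 3*x^4+12*x^2*y^2+2*y^4 = z^3 := by rw [← h]; ring
  have p2 : Prime (2:ℤ) := Int.prime_two
  have p5 : Prime (5:ℤ) := Int.prime_iff_natAbs_prime.2 (by norm_num)
  have hx : Odd x := by
    by_contra hx
    have hx : Even x := by simpa using hx
    obtain ⟨k, rfl⟩ := hx.two_dvd
    have hz : (2:ℤ) ∣ z := p2.dvd_of_dvd_pow (n := 3)
      ⟨24*k^4+24*k^2*y^2+y^4, by rw [← h']; ring⟩
    obtain ⟨l, rfl⟩ := hz
    have hy : (2:ℤ) ∣ y := p2.dvd_of_dvd_pow (n := 4) ⟨2*l^3-12*k^4-12*k^2*y^2, by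
      apply mul_left_cancel₀ (two_ne_zero (α := ℤ)); linear_combination h'⟩
    exact p2.not_unit (hxy.isUnit_of_dvd' ⟨k, rfl⟩ hy)
  have hy3 : ¬ (3:ℤ) ∣ y := by
    rintro ⟨k, rfl⟩
    have hz : (3:ℤ) ∣ z := hp3.dvd_of_dvd_pow (n := 3)
      ⟨x^4+36*x^2*k^2+54*k^4, by rw [← h']; ring⟩
    obtain ⟨l, rfl⟩ := hz
    have hx : (3:ℤ) ∣ x := hp3.dvd_of_dvd_pow (n := 4) ⟨3*l^3-12*x^2*k^2-18*k^4, by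
      apply mul_left_cancel₀ (three_ne_zero (α := ℤ)); linear_combination h'⟩
    exact hp3.not_unit (hxy.isUnit_of_dvd' hx ⟨k, rfl⟩)
  have hx0 : x ≠ 0 := by rintro rfl; simp at hx
  have hz0 : 0 < z := by
    have : 0 < z^3 := by rw [← h']; positivity
    exact (Odd.pow_pos_iff (by decide)).1 this
  have heq : 3*(x^2+2*y^2)^2-10*(y^2)^2 = z^3 := by rw [← h']; ring
  have hw : 0 < x^2+2*y^2 := by positivity
  have hwz : IsCoprime (x^2+2*y^2) z := by
    rw [Int.isCoprime_iff_gcd_eq_one]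
    by_contra hne
    obtain ⟨p, hp, hpd⟩ := Nat.exists_prime_and_dvd hne
    have hpI : Prime (p:ℤ) := Nat.prime_iff_prime_int.1 hp
    have hpw : (p:ℤ) ∣ x^2+2*y^2 := (Int.natCast_dvd_natCast.2 hpd).trans (Int.gcd_dvd_left ..)
    have hpz : (p:ℤ) ∣ z := (Int.natCast_dvd_natCast.2 hpd).trans (Int.gcd_dvd_right ..)
    have hpy : ¬ (p:ℤ) ∣ y := by
      intro hy
      have hx2 : (p:ℤ) ∣ x^2 := by
        have e : x^2 = (x^2+2*y^2) - y*(2*y) := by ring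
        rw [e]; exact dvd_sub hpw (hy.mul_right _)
      exact hpI.not_unit (hxy.isUnit_of_dvd' (hpI.dvd_of_dvd_pow hx2) hy)
    have hcy : IsCoprime (p:ℤ) ((y^2)^2) :=
      ((hpI.coprime_iff_not_dvd.2 hpy).pow_right).pow_right
    have hd : (p:ℤ)*p ∣ 10*(y^2)^2 := by
      have e : 10*(y^2)^2 = 3*((x^2+2*y^2)*(x^2+2*y^2)) - z*z*z := by linear_combination -heq
      rw [e]
      exact dvd_sub ((mul_dvd_mul hpw hpw).mul_left _) ((mul_dvd_mul hpz hpz).mul_right _)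
    have h10 : (p:ℤ)*p ∣ 10 := (hcy.mul_left hcy).dvd_of_dvd_mul_right hd
    have h10' : p*p ∣ 10 := by exact_mod_cast h10
    have hple : p ≤ 3 := by
      have := Nat.le_of_dvd (by norm_num) h10'
      nlinarith
    interval_cases p
    · norm_num at hp
    · norm_num at hp
    · norm_num at h10'
    · norm_num at h10'
  obtain ⟨a, b, hc⟩ := descent (x^2+2*y^2) (y^2) z hz0 hw hwz heq
  rcases hc with ⟨h1, h2⟩ | ⟨h1, h2⟩ | ⟨h1, h2⟩
  · exact case_zero a b x y hxy hx hy3 h2 (by linear_combination h1 - 2*h2)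
  · exact case_plus a b x y hy3 h2 (by linear_combination h1 - 2*h2)
  · exact case_minus a b x y hxy hx hy3 h2 (by linear_combination h1 - 2*h2)

theorem stmt_13 : ¬ ∃ x y z : ℤ, Int.gcd x y = 1 ∧
    (x - y) ^ 4 + x ^ 4 + (x + y) ^ 4 = z ^ 3 := by
  rintro ⟨x, y, z, hg, h⟩
  exact main_thm x y z hg h
end
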